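/- (Lorentz space improvement in the target) Let d ≥ 3, θ ∈ (0,1) and θ₀ = (d²+d−2)/(d²+d). For every s with p_θ < s < q_θ there exists a constant C < ∞, depending only on d, θ, s, such that for every nonnegative measurable f on ℝ^d: if θ ≠ θ₀ then ‖Xf‖_{L^{q_θ,s}_t L^{r_θ}_y} ≤ C·‖f‖_{L^{p_θ}}, and if θ = θ₀ then ‖Xf‖_{L^{q_{θ₀},s}(ℝ^d)} ≤ C·‖f‖_{L^{p_{θ₀}}} (recall q_{θ₀} = r_{θ₀}, so the mixed norm space is an ordinary Lebesgue–Lorentz space). -/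

import Mathlib

open MeasureTheory ENNReal Set Filter
noncomputable section

/-- Points of `ℝ^d` written as `(s, x)` with `s ∈ ℝ`, `x ∈ ℝ^(d-1)` (here `n = d-1`). -/
abbrev Pt (n : ℕ) := ℝ × (Fin n → ℝ)

/-- The moment curve `γ(t) = (t, t², …, t^n)` in `ℝ^n`. -/
def mom (n : ℕ) (t : ℝ) : Fin n → ℝ := fun i => t ^ (i.1 + 1)

/-- The restricted X-ray transform `Xf(t,y) = ∫ f(s, y + s·γ(t)) ds` of a
nonnegative function `f` on `ℝ^d`. -/
def Xray (n : ℕ) (f : Pt n → ℝ) (z : Pt n) : ℝ≥0∞ :=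
  ∫⁻ s : ℝ, ENNReal.ofReal (f (s, z.2 + s • mom n z.1))

/-- Mixed norm `‖g‖_{L^q_t L^r_y}` for an `ℝ≥0∞`-valued function on `ℝ × Y`. -/
def mixedNormG {Y : Type*} [MeasurableSpace Y] (ν : Measure Y) (q r : ℝ)
    (g : ℝ × Y → ℝ≥0∞) : ℝ≥0∞ :=
  (∫⁻ t : ℝ, (∫⁻ y, g (t, y) ^ r ∂ν) ^ (q / r)) ^ (1 / q)

/-- Mixed norm `‖g‖_{L^q_t L^r_y}` on `ℝ^d = ℝ × ℝ^(d-1)`, `ℝ≥0∞`-valued functions. -/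
def mixedNorm (n : ℕ) (q r : ℝ) (g : Pt n → ℝ≥0∞) : ℝ≥0∞ :=
  mixedNormG volume q r g

/-- Mixed norm of a real-valued function. -/
def mixedNormR (n : ℕ) (q r : ℝ) (g : Pt n → ℝ) : ℝ≥0∞ :=
  mixedNorm n q r fun z => ENNReal.ofReal |g z|

/-- The `L^p` norm of a real-valued function on `ℝ^d`. -/
def LpN (n : ℕ) (p : ℝ) (f : Pt n → ℝ) : ℝ≥0∞ :=
  (∫⁻ z : Pt n, ENNReal.ofReal |f z| ^ p) ^ (1 / p)

/-- The `L^p` norm restricted to a set. -/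
def LpNOn (n : ℕ) (p : ℝ) (f : Pt n → ℝ) (S : Set (Pt n)) : ℝ≥0∞ :=
  (∫⁻ z in S, ENNReal.ofReal |f z| ^ p) ^ (1 / p)

/-- `p_θ`, defined by `1/p_θ = 1 - θ + θd/(d+2)`. -/
def pExp (d : ℕ) (θ : ℝ) : ℝ := (1 - θ + θ * d / (d + 2))⁻¹

/-- `q_θ`, defined by `1/q_θ = θd/(d+2)`. -/
def qExp (d : ℕ) (θ : ℝ) : ℝ := (θ * d / (d + 2))⁻¹

/-- `r_θ`, defined by `1/r_θ = 1 - θ + θ(d²-d-2)/(d²+d-2)`. -/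
def rExp (d : ℕ) (θ : ℝ) : ℝ :=
  (1 - θ + θ * ((d:ℝ)^2 - d - 2) / ((d:ℝ)^2 + d - 2))⁻¹

/-- Dual exponent `p' = p/(p-1)`. -/
def dualExp (p : ℝ) : ℝ := p / (p - 1)

/-- `θ₀ = (d²+d-2)/(d²+d)`, the exponent where `q_θ = r_θ`. -/
def theta0 (d : ℕ) : ℝ := ((d:ℝ)^2 + d - 2) / ((d:ℝ)^2 + d)

/-- The mixed norm `‖Xf‖_{L^{q_θ}_t L^{r_θ}_y}`. -/
def XNorm (d : ℕ) (θ : ℝ) (f : Pt (d-1) → ℝ) : ℝ≥0∞ :=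
  mixedNorm (d-1) (qExp d θ) (rExp d θ) (Xray (d-1) f)

/-- The source norm `‖f‖_{L^{p_θ}}`. -/
def srcNorm (d : ℕ) (θ : ℝ) (f : Pt (d-1) → ℝ) : ℝ≥0∞ := LpN (d-1) (pExp d θ) f

/-- The dual mixed norm `‖g‖_{L^{q_θ'}_t L^{r_θ'}_y}`. -/
def dualNorm (d : ℕ) (θ : ℝ) (g : Pt (d-1) → ℝ) : ℝ≥0∞ :=
  mixedNormR (d-1) (dualExp (qExp d θ)) (dualExp (rExp d θ)) g

/-- The operator norm `A_θ` of `X : L^{p_θ} → L^{q_θ}_t L^{r_θ}_y` (restricted to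
nonnegative functions). -/
def Aconst (d : ℕ) (θ : ℝ) : ℝ≥0∞ :=
  sSup { M | ∃ f : Pt (d-1) → ℝ, Measurable f ∧ 0 ≤ f ∧
    srcNorm d θ f = 1 ∧ M = XNorm d θ f }

/-- The bilinear pairing `𝒳(f,g) = ∫ Xf · g`. -/
def pairing (n : ℕ) (f g : Pt n → ℝ) : ℝ≥0∞ :=
  ∫⁻ z : Pt n, Xray n f z * ENNReal.ofReal (g z)

/-- Indicator function of a set, as a real-valued function. -/
def ind (n : ℕ) (E : Set (Pt n)) : Pt n → ℝ := E.indicator fun _ => (1:ℝ)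

/-- `𝒳(E,F) = ∫ X1_E · 1_F`. -/
def pairSet (n : ℕ) (E F : Set (Pt n)) : ℝ≥0∞ := pairing n (ind n E) (ind n F)

/-- Dyadic level set `E_j = {z : 2^j ≤ f(z) < 2^(j+1)}`. -/
def lev (n : ℕ) (f : Pt n → ℝ) (j : ℤ) : Set (Pt n) :=
  {z | (2:ℝ) ^ j ≤ f z ∧ f z < (2:ℝ) ^ (j + 1)}

/-- The measure of the slice `{y : (t,y) ∈ F}`. -/
def sliceVol (n : ℕ) (F : Set (Pt n)) (t : ℝ) : ℝ≥0∞ :=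
  volume {y : Fin n → ℝ | (t, y) ∈ F}

/-- `F_k^l = F_k ∩ π⁻¹{t : 2^l ≤ |{y : (t,y) ∈ F_k}| < 2^(l+1)}` where `F_k` is
the `k`-th level set of `g`. -/
def Fkl (n : ℕ) (g : Pt n → ℝ) (k l : ℤ) : Set (Pt n) :=
  lev n g k ∩ {z | (2:ℝ≥0∞) ^ l ≤ sliceVol n (lev n g k) z.1 ∧
    sliceVol n (lev n g k) z.1 < (2:ℝ≥0∞) ^ (l + 1)}

/-- `F_{kl}^m`: the `k`-th level set of `g`, restricted to `t` with
`2^l ≤ ∫ g(t,y)^{r'} dy < 2^(l+1)` and `2^m ≤ |{y : (t,y) ∈ F_k}| < 2^(m+1)`. -/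
def Fklm (n : ℕ) (r' : ℝ) (g : Pt n → ℝ) (k l m : ℤ) : Set (Pt n) :=
  lev n g k ∩
  {z | (2:ℝ≥0∞) ^ l ≤ (∫⁻ y, ENNReal.ofReal (g (z.1, y)) ^ r') ∧
    (∫⁻ y, ENNReal.ofReal (g (z.1, y)) ^ r') < (2:ℝ≥0∞) ^ (l + 1)} ∩
  {z | (2:ℝ≥0∞) ^ m ≤ sliceVol n (lev n g k) z.1 ∧
    sliceVol n (lev n g k) z.1 < (2:ℝ≥0∞) ^ (m + 1)}

/-- The lower-triangular matrix `G_{t₀}` with entries `C(m,i)·t₀^(m-i)`, acting on `ℝ^(d-1)`. -/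
def Gmat (n : ℕ) (t₀ : ℝ) (x : Fin n → ℝ) : Fin n → ℝ := fun m =>
  ∑ i ∈ Finset.univ.filter (fun i : Fin n => i ≤ m),
    ((Nat.choose (m.1+1) (i.1+1)) : ℝ) * t₀ ^ (m.1 - i.1) * x i

/-- The symmetry group `G_d` of the restricted X-ray transform, with the (constant)
Jacobian determinant carried along: `IsSymJ n φ J` means `φ ∈ G_d` with Jacobian `J`. -/
inductive IsSymJ (n : ℕ) : (Pt n → Pt n) → ℝ → Prop
  | translation (v : Fin n → ℝ) : IsSymJ n (fun p => (p.1, p.2 + v)) 1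
  | scaling (α β : ℝ) (hα : 0 < α) (hβ : 0 < β) :
      IsSymJ n (fun p => (α * p.1, fun i => α * β ^ (i.1 + 1) * p.2 i))
        (α ^ (n+1) * β ^ (n * (n+1) / 2))
  | shift (s₀ t₀ : ℝ) :
      IsSymJ n (fun p => (p.1 + s₀, Gmat n t₀ p.2 + (p.1 + s₀) • mom n t₀)) 1
  | comp (φ ψ : Pt n → Pt n) (J₁ J₂ : ℝ) :
      IsSymJ n φ J₁ → IsSymJ n ψ J₂ → IsSymJ n (φ ∘ ψ) (J₁ * J₂)

/-- The `L^p`-normalized action `φ*f = J^(1/p) · (f ∘ φ)` of a symmetry on functions. -/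
def symAct (n : ℕ) (p : ℝ) (J : ℝ) (φ : Pt n → Pt n) (f : Pt n → ℝ) : Pt n → ℝ :=
  fun z => J ^ (1/p) * f (φ z)

/-- Lorentz norm `‖h‖_{L^{p,s}}` (up to equivalence), via dyadic level sets. -/
def lorentzNorm {α : Type*} [MeasurableSpace α] (μ : Measure α) (p s : ℝ)
    (h : α → ℝ≥0∞) : ℝ≥0∞ :=
  (∑' j : ℤ, ((2:ℝ≥0∞) ^ j *
      μ {z | (2:ℝ≥0∞) ^ j ≤ h z ∧ h z < (2:ℝ≥0∞) ^ (j+1)} ^ (1/p)) ^ s) ^ (1/s)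

/-- Weak `L^{p,∞}` norm. -/
def weakNorm {α : Type*} [MeasurableSpace α] (μ : Measure α) (p : ℝ)
    (h : α → ℝ≥0∞) : ℝ≥0∞ :=
  ⨆ l : ℝ≥0∞, l * μ {z | l < h z} ^ (1/p)

/-- Mixed Lorentz norm `‖g‖_{L^{q,s}_t L^r_y}` (up to equivalence). -/
def mixedLorentzG {Y : Type*} [MeasurableSpace Y] (ν : Measure Y) (q s r : ℝ)
    (g : ℝ × Y → ℝ≥0∞) : ℝ≥0∞ :=
  (∑' l : ℤ, (mixedNormG ν q r
      (Set.indicator {z : ℝ × Y | (2:ℝ≥0∞) ^ l ≤ (∫⁻ y, g (z.1, y) ^ r ∂ν) ∧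
        (∫⁻ y, g (z.1, y) ^ r ∂ν) < (2:ℝ≥0∞) ^ (l+1)} g)) ^ s) ^ (1/s)

/-- Weak mixed norm `‖g‖_{L^{q,∞}_t L^r_y}`. -/
def weakMixedG {Y : Type*} [MeasurableSpace Y] (ν : Measure Y) (q r : ℝ)
    (g : ℝ × Y → ℝ≥0∞) : ℝ≥0∞ :=
  ⨆ l : ℝ≥0∞, l * (volume {t : ℝ | l < (∫⁻ y, g (t, y) ^ r ∂ν) ^ (1/r)}) ^ (1/q)

/-- The paraball `B(s₀,t₀,ȳ,α,β)`. -/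
def paraball (n : ℕ) (s₀ t₀ : ℝ) (ybar : Fin n → ℝ) (α β : ℝ) : Set (Pt n) :=
  {z | |z.1 - s₀| < α ∧ ∀ m : Fin n,
    |(∑ i ∈ Finset.univ.filter (fun i : Fin n => i ≤ m),
        ((Nat.choose (m.1+1) (i.1+1)) : ℝ) * (-t₀) ^ (m.1 - i.1) *
          (z.2 i - (ybar + s₀ • mom n t₀) i))
      + (-t₀) ^ (m.1+1) * (z.1 + s₀)| ≤ β ^ (m.1+1) * α}

/-- The dual paraball `B*(s₀,t₀,ȳ,α,β)`. -/
def dualParaball (n : ℕ) (s₀ t₀ : ℝ) (ybar : Fin n → ℝ) (α β : ℝ) : Set (Pt n) :=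
  {z | |z.1 - t₀| < β ∧ ∀ m : Fin n,
    |(∑ i ∈ Finset.univ.filter (fun i : Fin n => i ≤ m),
        ((Nat.choose (m.1+1) (i.1+1)) : ℝ) * (-t₀) ^ (m.1 - i.1) * (z.2 i - ybar i))
      + s₀ * (z.1 ^ (m.1+1) + (-t₀) ^ (m.1+1))| ≤ β ^ (m.1+1) * α}

/-- The mock-distance between two paraballs. -/
def mockDist (n : ℕ) (sa ta : ℝ) (ya : Fin n → ℝ) (aa ba : ℝ)
    (sb tb : ℝ) (yb : Fin n → ℝ) (ab bb : ℝ) : ℝ :=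
  (max (aa ^ n * ba ^ (n * (n+1) / 2)) (ab ^ n * bb ^ (n * (n+1) / 2)) /
    min (aa ^ n * ba ^ (n * (n+1) / 2)) (ab ^ n * bb ^ (n * (n+1) / 2)))
  + (aa / ab + ab / aa) + (ba / bb + bb / ba)
  + |sa - sb| * (1/aa + 1/ab) + |ta - tb| * (1/ba + 1/bb)
  + ∑ m : Fin n,
      |(∑ i ∈ Finset.univ.filter (fun i : Fin n => i ≤ m),
          ((Nat.choose (m.1+1) (i.1+1)) : ℝ) * (-ta) ^ (m.1 - i.1) *
            ((yb + sb • mom n tb) i - (ya + sa • mom n ta) i))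
        + (-ta) ^ (m.1+1) * (sb + sa)| / (aa * ba ^ (m.1+1))
  + ∑ m : Fin n,
      |(∑ i ∈ Finset.univ.filter (fun i : Fin n => i ≤ m),
          ((Nat.choose (m.1+1) (i.1+1)) : ℝ) * (-tb) ^ (m.1 - i.1) *
            ((ya + sa • mom n ta) i - (yb + sb • mom n tb) i))
        + (-tb) ^ (m.1+1) * (sa + sb)| / (ab * bb ^ (m.1+1))
  + ∑ m : Fin n,
      |(∑ i ∈ Finset.univ.filter (fun i : Fin n => i ≤ m),
          ((Nat.choose (m.1+1) (i.1+1)) : ℝ) * (-sa) ^ (m.1 - i.1) * (yb i - ya i))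
        + sa * (tb ^ (m.1+1) + (-ta) ^ (m.1+1))| / (aa * ba ^ (m.1+1))
  + ∑ m : Fin n,
      |(∑ i ∈ Finset.univ.filter (fun i : Fin n => i ≤ m),
          ((Nat.choose (m.1+1) (i.1+1)) : ℝ) * (-sb) ^ (m.1 - i.1) * (ya i - yb i))
        + sb * (ta ^ (m.1+1) + (-tb) ^ (m.1+1))| / (ab * bb ^ (m.1+1))

/-!
Counting paths that alternate between points of a set `E` and lines of a set `F` shows that `F` is
large if every point of `E` lies on many lines of `F`: the displacements along a path are recovered
from its endpoint through a Vandermonde determinant in the directions used, which is bounded below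
when the directions through each point are spread out. When they are not, the directions are cut
into shorter and shorter pieces; each point is charged to the first generation in which its
directions are spread out, and the contributions of the generations form a geometric series.

This gives a restricted weak type bound for a block of lines, whose directions fill a set of given
measure and whose slices have given measure, and by interpolation a bound in `L^P`, with `P` dual
to `p`, for the density of the block. The path inequality for two different families of lines shows
that the densities of two blocks interact weakly: the gain is exponential in the distance between
their shapes. By a Schur test, blocks with separated shapes are therefore almost orthogonal in
`L^P`. Dually, the contributions of such blocks to `Xf` are bounded in `ℓ^p` by the `L^p` norm of
`f`. Every dyadic level set in the definition of the Lorentz norm is a union of blocks, and keeping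
the highest level among those of the same dyadic measure makes the shapes separated at the cost of
a convergent geometric series. This gives the exponent `s = p`, hence every `s ≥ p`.
-/

namespace RestrictedXray

/-! ### Points and lines -/

section Incidence

variable {n : ℕ}

/-- The direction `(1, γ(t))` of the line `{(s, y + s·γ(t)) : s ∈ ℝ}` encoded by `(t, y)`. -/
def lineDirection (n : ℕ) (t : ℝ) : Pt n := (1, mom n t)

/-- The line with direction `(1, γ(t))` through the point `z`, in the encoding `(t, y)` of lines. -/
def lineThrough (z : Pt n) (t : ℝ) : Pt n := (t, z.2 - z.1 • mom n t)

/-- The integral of `g` along the line encoded by `l = (t, y)`; this is `Xray` for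
`ℝ≥0∞`-valued functions. -/
def lineIntegral (g : Pt n → ℝ≥0∞) (l : Pt n) : ℝ≥0∞ := ∫⁻ s : ℝ, g (s, l.2 + s • mom n l.1)

/-- The measure of the set of directions `t` for which the line through `z` belongs to `F`. -/
def directionMeasure (F : Set (Pt n)) (z : Pt n) : ℝ≥0∞ := volume {t : ℝ | lineThrough z t ∈ F}

@[fun_prop]
lemma measurable_mom (n : ℕ) : Measurable (mom n) := by
  unfold mom; fun_prop

@[fun_prop]
lemma measurable_lineDirection (n : ℕ) : Measurable (lineDirection n) := by
  unfold lineDirection; fun_prop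

lemma measurable_lineThrough (n : ℕ) :
    Measurable fun p : Pt n × ℝ => lineThrough p.1 p.2 := by
  unfold lineThrough; fun_prop

lemma measurable_lineThrough_right (z : Pt n) : Measurable (lineThrough z) :=
  (measurable_lineThrough n).comp measurable_prodMk_left

lemma measurable_lineIntegral {g : Pt n → ℝ≥0∞} (hg : Measurable g) :
    Measurable (lineIntegral g) :=
  Measurable.lintegral_prod_right' (f := fun q : Pt n × ℝ => g (q.2, q.1.2 + q.2 • mom n q.1.1))
    (by fun_prop)

lemma measurableSet_lineThrough_mem {F : Set (Pt n)} (hF : MeasurableSet F) (z : Pt n) :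
    MeasurableSet {t : ℝ | lineThrough z t ∈ F} :=
  measurable_lineThrough_right z hF

lemma directionMeasure_eq_lintegral {F : Set (Pt n)} (hF : MeasurableSet F) (z : Pt n) :
    directionMeasure F z = ∫⁻ t : ℝ, F.indicator 1 (lineThrough z t) :=
  (lintegral_indicator_one (measurableSet_lineThrough_mem hF z)).symm

lemma measurable_directionMeasure {F : Set (Pt n)} (hF : MeasurableSet F) :
    Measurable (directionMeasure F) := by
  rw [funext (directionMeasure_eq_lintegral hF)]
  exact Measurable.lintegral_prod_right'
    (f := fun q : Pt n × ℝ => F.indicator 1 (lineThrough q.1 q.2))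
    ((measurable_one.indicator hF).comp (measurable_lineThrough n))

lemma directionMeasure_le {F : Set (Pt n)} {T : Set ℝ} (hFT : ∀ l ∈ F, l.1 ∈ T) (z : Pt n) :
    directionMeasure F z ≤ volume T :=
  measure_mono fun _ ht => hFT _ ht

lemma lineIntegral_lineThrough (g : Pt n → ℝ≥0∞) (z : Pt n) (t : ℝ) :
    lineIntegral g (lineThrough z t) = ∫⁻ w : ℝ, g (z + w • lineDirection n t) := by
  unfold lineIntegral
  rw [← lintegral_add_left_eq_self (μ := (volume : Measure ℝ))
    (fun s => g (s, (lineThrough z t).2 + s • mom n (lineThrough z t).1)) z.1]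
  refine lintegral_congr fun w => congrArg g (Prod.ext ?_ ?_)
  · simp [lineDirection]
  · simp only [lineThrough, lineDirection, add_smul, Prod.snd_add, Prod.smul_snd]
    abel

/-- Both sides integrate `h z * G l` over the pairs of a point `z` and a line `l` through it. -/
lemma lintegral_lineIntegral_mul {h G : Pt n → ℝ≥0∞} (hh : Measurable h) (hG : Measurable G) :
    ∫⁻ l, lineIntegral h l * G l = ∫⁻ z, h z * ∫⁻ t, G (lineThrough z t) := by
  have hGz (t : ℝ) : Measurable fun z : Pt n => h z * G (lineThrough z t) :=
    hh.mul (hG.comp ((measurable_lineThrough n).comp measurable_prodMk_right))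
  have hl : Measurable fun q : Pt n × ℝ => h (q.2, q.1.2 + q.2 • mom n q.1.1) * G q.1 := by
    fun_prop
  calc ∫⁻ l, lineIntegral h l * G l
      = ∫⁻ l : Pt n, ∫⁻ s : ℝ, h (s, l.2 + s • mom n l.1) * G l :=
        lintegral_congr fun l => (lintegral_mul_const _ (by fun_prop)).symm
    _ = ∫⁻ t : ℝ, ∫⁻ y : Fin n → ℝ, ∫⁻ s : ℝ, h (s, y + s • mom n t) * G (t, y) := by
        rw [Measure.volume_eq_prod, lintegral_prod _ hl.lintegral_prod_right'.aemeasurable]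
    _ = ∫⁻ t : ℝ, ∫⁻ s : ℝ, ∫⁻ y : Fin n → ℝ, h (s, y + s • mom n t) * G (t, y) :=
        lintegral_congr fun t => lintegral_lintegral_swap
          (hl.comp (f := fun q : (Fin n → ℝ) × ℝ => ((t, q.1), q.2)) (by fun_prop)).aemeasurable
    _ = ∫⁻ t : ℝ, ∫⁻ s : ℝ, ∫⁻ y : Fin n → ℝ, h (s, y) * G (lineThrough (s, y) t) := by
        refine lintegral_congr fun t => lintegral_congr fun s => ?_
        rw [← lintegral_add_right_eq_self (μ := (volume : Measure (Fin n → ℝ)))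
          (fun y => h (s, y) * G (lineThrough (s, y) t)) (s • mom n t)]
        simp [lineThrough]
    _ = ∫⁻ t : ℝ, ∫⁻ z : Pt n, h z * G (lineThrough z t) :=
        lintegral_congr fun t => by
          rw [Measure.volume_eq_prod, lintegral_prod _ (hGz t).aemeasurable]
    _ = ∫⁻ z : Pt n, ∫⁻ t : ℝ, h z * G (lineThrough z t) :=
        lintegral_lintegral_swap ((hh.comp measurable_snd).mul (hG.comp
          ((measurable_lineThrough n).comp measurable_swap))).aemeasurable
    _ = ∫⁻ z, h z * ∫⁻ t, G (lineThrough z t) :=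
        lintegral_congr fun z => lintegral_const_mul _ (hG.comp (measurable_lineThrough_right z))

lemma setLIntegral_lineIntegral {h : Pt n → ℝ≥0∞} (hh : Measurable h) {F : Set (Pt n)}
    (hF : MeasurableSet F) :
    ∫⁻ l in F, lineIntegral h l = ∫⁻ z, h z * directionMeasure F z := by
  simp_rw [directionMeasure_eq_lintegral hF]
  rw [← lintegral_lineIntegral_mul hh (measurable_one.indicator hF), ← lintegral_indicator hF]
  refine lintegral_congr fun l => ?_
  by_cases hl : l ∈ F <;> simp [hl]

lemma mul_volume_le_setLIntegral_lineIntegral {E F : Set (Pt n)} (hE : MeasurableSet E)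
    (hF : MeasurableSet F) {β : ℝ≥0∞} (hβ : ∀ z ∈ E, β ≤ directionMeasure F z) :
    β * volume E ≤ ∫⁻ l in F, lineIntegral (E.indicator 1) l := by
  rw [setLIntegral_lineIntegral (measurable_one.indicator hE) hF, ← lintegral_indicator_const hE]
  refine lintegral_mono fun z => ?_
  by_cases hz : z ∈ E <;> simp [hz, hβ]

end Incidence

/-! ### The Vandermonde change of variables -/

section Vandermonde

lemma lintegral_finCons (j : ℕ) {f : (Fin (j + 1) → ℝ) → ℝ≥0∞} (hf : Measurable f) :
    ∫⁻ x, f x = ∫⁻ w : Fin j → ℝ, ∫⁻ a : ℝ, f (Fin.cons a w) := by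
  have h := (volume_preserving_piFinSuccAbove (fun _ : Fin (j + 1) => ℝ) 0).symm
  rw [← h.lintegral_comp hf, Measure.volume_eq_prod, lintegral_prod_symm]
  · simp [MeasurableEquiv.piFinSuccAbove]
    rfl
  · exact (hf.comp (MeasurableEquiv.measurable _)).aemeasurable

lemma lintegral_head_tail {n : ℕ} {f : Pt n → ℝ≥0∞} (hf : Measurable f) :
    ∫⁻ x : Fin (n + 1) → ℝ, f (x 0, Fin.tail x) = ∫⁻ p, f p := by
  rw [← (volume_preserving_piFinSuccAbove (fun _ : Fin (n + 1) => ℝ) 0).lintegral_comp hf]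
  rfl

lemma measurable_finCons {α : Type*} [MeasurableSpace α] {j : ℕ} {f : α → ℝ} {g : α → Fin j → ℝ}
    (hf : Measurable f) (hg : Measurable g) :
    Measurable fun a => (Fin.cons (f a) (g a) : Fin (j + 1) → ℝ) := by
  rw [measurable_pi_iff]
  intro i
  cases i using Fin.cases with
  | zero => simpa using hf
  | succ i => simp only [Fin.cons_succ]; fun_prop

lemma pairwise_le_abs_sub_finCons {j : ℕ} {δ t : ℝ} {H : Fin j → ℝ} (ht : ∀ i, δ ≤ |t - H i|)
    (hH : Pairwise fun i k => δ ≤ |H i - H k|) :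
    Pairwise fun i k : Fin (j + 1) => δ ≤ |(Fin.cons t H : Fin (j + 1) → ℝ) i -
      (Fin.cons t H : Fin (j + 1) → ℝ) k| := by
  intro i k hik
  cases i using Fin.cases with
  | zero =>
    cases k using Fin.cases with
    | zero => exact absurd rfl hik
    | succ k => simpa using ht k
  | succ i =>
    cases k using Fin.cases with
    | zero => simpa [abs_sub_comm] using ht i
    | succ k => simpa using hH (fun h => hik (congrArg Fin.succ h))

lemma sum_card_Ioi_fin (m : ℕ) : ∑ i : Fin m, (Finset.Ioi i).card = m.choose 2 := by
  rw [Nat.choose_two_right, ← Finset.sum_range_id, ← Finset.sum_range_reflect,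
    ← Fin.sum_univ_eq_sum_range (fun j => m - 1 - j)]
  simp

lemma pow_le_abs_det_vandermonde {m : ℕ} {δ : ℝ} (hδ : 0 ≤ δ) {H : Fin m → ℝ}
    (hH : Pairwise fun i k => δ ≤ |H i - H k|) :
    δ ^ m.choose 2 ≤ |(Matrix.vandermonde H).det| := by
  rw [Matrix.det_vandermonde, Finset.abs_prod, ← sum_card_Ioi_fin, ← Finset.prod_pow_eq_pow_sum]
  refine Finset.prod_le_prod (fun _ _ => by positivity) fun i _ => ?_
  rw [Finset.abs_prod, ← Finset.prod_const]
  exact Finset.prod_le_prod (fun _ _ => hδ) fun k hk => hH (Finset.mem_Ioi.1 hk).ne'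

lemma pow_mul_lintegral_indicator_le_volume {n : ℕ} {δ : ℝ} (hδ : 0 < δ) {E : Set (Pt n)}
    (hE : MeasurableSet E) (z : Pt n) {H : Fin (n + 1) → ℝ}
    (hH : Pairwise fun i k => δ ≤ |H i - H k|) :
    ENNReal.ofReal δ ^ (n + 1).choose 2 *
      ∫⁻ w : Fin (n + 1) → ℝ, E.indicator 1 (z + ∑ i, w i • lineDirection n (H i)) ≤
        volume E := by
  set M : Matrix (Fin (n + 1)) (Fin (n + 1)) ℝ := (Matrix.vandermonde H).transpose with hM
  have hdet : δ ^ (n + 1).choose 2 ≤ |M.det| := by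
    rw [hM, Matrix.det_transpose]
    exact pow_le_abs_det_vandermonde hδ.le hH
  have hpos : 0 < |M.det| := lt_of_lt_of_le (by positivity) hdet
  have hind_z : Measurable fun p : Pt n => E.indicator (1 : Pt n → ℝ≥0∞) (z + p) :=
    (measurable_one.indicator hE).comp (measurable_const_add z)
  have hlin (w : Fin (n + 1) → ℝ) : ∑ i, w i • lineDirection n (H i) =
      (Matrix.toLin' M w 0, Fin.tail (Matrix.toLin' M w)) := by
    ext k
    · simp [Prod.fst_sum, lineDirection, Matrix.mulVec, dotProduct, hM, Matrix.vandermonde]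
    · simp [Prod.snd_sum, lineDirection, Matrix.mulVec, dotProduct, hM, Matrix.vandermonde, mom,
        Fin.tail, mul_comm]
  set g : (Fin (n + 1) → ℝ) → ℝ≥0∞ := fun x => E.indicator 1 (z + ((x 0, Fin.tail x) : Pt n))
    with hg
  have hgm : Measurable g := hind_z.comp (by unfold Fin.tail; fun_prop)
  have hvol : ∫⁻ x, g x = volume E := by
    have : (volume : Measure (Pt n)).IsAddLeftInvariant := by
      rw [Measure.volume_eq_prod]; infer_instance
    rw [hg, lintegral_head_tail hind_z, lintegral_add_left_eq_self (fun p => E.indicator 1 p) z,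
      lintegral_indicator_one hE]
  simp_rw [hlin]
  change _ * ∫⁻ w, g (Matrix.toLin' M w) ≤ _
  rw [← lintegral_map hgm (LinearMap.continuous_of_finiteDimensional _).measurable,
    Real.map_matrix_volume_pi_eq_smul_volume_pi (abs_pos.1 hpos), lintegral_smul_measure, hvol,
    smul_eq_mul, ← mul_assoc, ← ENNReal.ofReal_pow hδ.le, ← ENNReal.ofReal_mul (by positivity)]
  refine mul_le_of_le_one_left' (ENNReal.ofReal_le_one.2 ?_)
  rwa [abs_inv, ← div_eq_mul_inv, div_le_one hpos]

end Vandermonde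

/-! ### Counting paths in the incidence relation -/

section Paths

variable {n : ℕ} {E F : Set (Pt n)} {δ : ℝ}

/-- The directions of the lines of `F` through `z` that are `δ`-separated from the directions
`H` already used by a path. -/
def freshDirections {j : ℕ} (F : Set (Pt n)) (δ : ℝ) (z : Pt n) (H : Fin j → ℝ) : Set ℝ :=
  {t | lineThrough z t ∈ F ∧ ∀ i, δ ≤ |t - H i|}

/-- The measure of the set of `m`-step paths that start at `z`, end in `E` and run along lines of
`F` with directions `δ`-separated from each other and from those listed in `H`. A step is encoded
by its direction `t` and its displacement `w`. -/
def pathCount (E F : Set (Pt n)) (δ : ℝ) : (m : ℕ) → (j : ℕ) → Pt n → (Fin j → ℝ) → ℝ≥0∞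
  | 0, _, z, _ => E.indicator 1 z
  | m + 1, j, z, H => ∫⁻ t in freshDirections F δ z H,
      ∫⁻ w : ℝ, pathCount E F δ m (j + 1) (z + w • lineDirection n t) (Fin.cons t H)

lemma measurableSet_freshDirections_graph (hF : MeasurableSet F) (δ : ℝ) (j : ℕ) :
    MeasurableSet {q : (Pt n × (Fin j → ℝ)) × ℝ | q.2 ∈ freshDirections F δ q.1.1 q.1.2} := by
  simp only [freshDirections, mem_ofPred_eq]
  simp only [Set.ofPred_and, Set.ofPred_forall]
  refine .inter ((measurable_lineThrough n).comp (f := fun q : (Pt n × (Fin j → ℝ)) × ℝ =>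
    (q.1.1, q.2)) (by fun_prop) hF) (.iInter fun i => measurableSet_le measurable_const ?_)
  exact continuous_abs.measurable.comp (by fun_prop)

lemma measurableSet_freshDirections (hF : MeasurableSet F) {j : ℕ} (z : Pt n) (H : Fin j → ℝ) :
    MeasurableSet (freshDirections F δ z H) :=
  measurable_prodMk_left (x := (z, H)) (measurableSet_freshDirections_graph hF δ j)

lemma measurable_pathCount (hE : MeasurableSet E) (hF : MeasurableSet F) (m : ℕ) :
    ∀ j, Measurable fun p : Pt n × (Fin j → ℝ) => pathCount E F δ m j p.1 p.2 := by
  induction m with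
  | zero => exact fun j => (measurable_one.indicator hE).comp measurable_fst
  | succ m ih =>
    intro j
    have hstep : Measurable fun q : (Pt n × (Fin j → ℝ)) × ℝ => ∫⁻ w : ℝ,
        pathCount E F δ m (j + 1) (q.1.1 + w • lineDirection n q.2) (Fin.cons q.2 q.1.2) :=
      Measurable.lintegral_prod_right' (f := fun q : ((Pt n × (Fin j → ℝ)) × ℝ) × ℝ =>
        pathCount E F δ m (j + 1) (q.1.1.1 + q.2 • lineDirection n q.1.2)
          (Fin.cons q.1.2 q.1.1.2)) <|
        (ih (j + 1)).comp
          (.prodMk (by fun_prop) (measurable_finCons (by fun_prop) (by fun_prop)))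
    convert (hstep.indicator (measurableSet_freshDirections_graph hF δ j)).lintegral_prod_right'
      (ν := volume) using 2 with p
    rw [pathCount, ← lintegral_indicator (measurableSet_freshDirections hF p.1 p.2)]
    rfl

/-- The displacements of a full path are the coordinates of its endpoint in the Vandermonde system
of its directions, so `j` further displacements make the path count integrable. -/
lemma pow_mul_lintegral_pathCount_le (hδ : 0 < δ) (hE : MeasurableSet E) (hF : MeasurableSet F)
    {T : Set ℝ} (hT : MeasurableSet T) (hFT : ∀ l ∈ F, l.1 ∈ T) (m : ℕ) :
    ∀ (j : ℕ) (z : Pt n) (H : Fin j → ℝ), j + m = n + 1 → (Pairwise fun i k => δ ≤ |H i - H k|) →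
      ENNReal.ofReal δ ^ (n + 1).choose 2 *
        ∫⁻ w : Fin j → ℝ, pathCount E F δ m j (z + ∑ i, w i • lineDirection n (H i)) H ≤
          volume T ^ m * volume E := by
  induction m with
  | zero =>
    rintro j z H rfl hH
    simpa [pathCount] using pow_mul_lintegral_indicator_le_volume hδ hE z hH
  | succ m ih =>
    intro j z H hj hH
    set A : Set ℝ := T ∩ {t | ∀ i, δ ≤ |t - H i|}
    set c : ℝ≥0∞ := ENNReal.ofReal δ ^ (n + 1).choose 2
    have hAm : MeasurableSet A := hT.inter <| by
      simp only [Set.ofPred_forall]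
      exact .iInter fun i => measurableSet_le measurable_const
        (continuous_abs.measurable.comp (by fun_prop))
    have hfresh (p : Pt n) : freshDirections F δ p H ⊆ A := fun t ht => ⟨hFT _ ht.1, ht.2⟩
    have hpath := measurable_pathCount (δ := δ) hE hF m (j + 1)
    let Φ (w : Fin j → ℝ) (t a : ℝ) : ℝ≥0∞ := pathCount E F δ m (j + 1)
      (z + ∑ i, w i • lineDirection n (H i) + a • lineDirection n t) (Fin.cons t H)
    have hΦ : Measurable fun q : ((Fin j → ℝ) × ℝ) × ℝ => Φ q.1.1 q.1.2 q.2 :=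
      hpath.comp (f := fun q : ((Fin j → ℝ) × ℝ) × ℝ =>
        (z + ∑ i, q.1.1 i • lineDirection n (H i) + q.2 • lineDirection n q.1.2,
          (Fin.cons q.1.2 H : Fin (j + 1) → ℝ)))
        (.prodMk (by fun_prop) (measurable_finCons (by fun_prop) measurable_const))
    have hline (t : ℝ) (ht : t ∈ A) : c * ∫⁻ w, ∫⁻ a, Φ w t a ≤ volume T ^ m * volume E := by
      refine le_of_eq_of_le ?_
        (ih (j + 1) z (Fin.cons t H) (by omega) (pairwise_le_abs_sub_finCons ht.2 hH))
      rw [lintegral_finCons]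
      · simp only [Φ, Fin.sum_univ_succ, Fin.cons_zero, Fin.cons_succ, add_assoc,
          add_comm (_ • lineDirection n t)]
      · exact hpath.comp (f := fun w : Fin (j + 1) → ℝ =>
          (z + ∑ i, w i • lineDirection n ((Fin.cons t H : Fin (j + 1) → ℝ) i), Fin.cons t H))
          (by fun_prop)
    calc c * ∫⁻ w : Fin j → ℝ, pathCount E F δ (m + 1) j (z + ∑ i, w i • lineDirection n (H i)) H
        ≤ c * ∫⁻ w, ∫⁻ t in A, ∫⁻ a, Φ w t a := by
          simp only [pathCount]
          exact mul_le_mul_right (lintegral_mono fun w =>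
            lintegral_mono_set (hfresh _)) c
      _ = ∫⁻ t in A, c * ∫⁻ w, ∫⁻ a, Φ w t a := by
          rw [lintegral_lintegral_swap hΦ.lintegral_prod_right'.aemeasurable,
            lintegral_const_mul' _ _ (ENNReal.pow_ne_top ENNReal.ofReal_ne_top)]
      _ ≤ ∫⁻ _ in A, volume T ^ m * volume E := setLIntegral_mono' hAm hline
      _ = volume T ^ m * volume E * volume A := setLIntegral_const _ _
      _ ≤ volume T ^ m * volume E * volume T := by gcongr; exact inter_subset_left
      _ = volume T ^ (m + 1) * volume E := by ring

end Paths

section Refinement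

variable {n : ℕ} {E F : Set (Pt n)} {κ : ℝ≥0∞}

/-- The lines of `F` that meet `E` in measure at least `κ`. -/
def richLines (E F : Set (Pt n)) (κ : ℝ≥0∞) : Set (Pt n) :=
  {l ∈ F | κ ≤ lineIntegral (E.indicator 1) l}

/-- The points of `E` from which `m` steps can be taken, at each of which at least half of the
available lines are rich. -/
def refinedPoints (E F : Set (Pt n)) (κ : ℝ≥0∞) : ℕ → Set (Pt n)
  | 0 => E
  | m + 1 => {z ∈ refinedPoints E F κ m | directionMeasure F z / 2 ≤
      directionMeasure (richLines (refinedPoints E F κ m) F κ) z}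

/-- The non-concentration condition of the path method: through a point of `E`, the lines of `F`
with direction in a given interval of radius `δ` make up at most a fraction `1/(4(n+1))`. -/
def DirectionsSpread (δ : ℝ) (E F : Set (Pt n)) : Prop :=
  ∀ z ∈ E, ∀ u : ℝ, volume ({t : ℝ | lineThrough z t ∈ F} ∩ Metric.ball u δ) ≤
    directionMeasure F z / (4 * (n + 1))

lemma measurableSet_richLines (hE : MeasurableSet E) (hF : MeasurableSet F) :
    MeasurableSet (richLines E F κ) :=
  hF.inter (measurableSet_le measurable_const
    (measurable_lineIntegral (measurable_one.indicator hE)))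

lemma measurableSet_refinedPoints (hE : MeasurableSet E) (hF : MeasurableSet F) (m : ℕ) :
    MeasurableSet (refinedPoints E F κ m) := by
  induction m with
  | zero => exact hE
  | succ m ih =>
    exact ih.inter (measurableSet_le ((measurable_directionMeasure hF).div_const _)
      (measurable_directionMeasure (measurableSet_richLines ih hF)))

lemma refinedPoints_subset (m : ℕ) : refinedPoints E F κ m ⊆ E := by
  induction m with
  | zero => exact subset_rfl
  | succ m ih => exact fun z hz => ih hz.1

lemma half_directionMeasure_le_sdiff {R : Set (Pt n)} {z : Pt n}
    (hz : directionMeasure R z < directionMeasure F z / 2) :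
    directionMeasure F z / 2 ≤ directionMeasure (F \ R) z := by
  have hadd : directionMeasure F z ≤ directionMeasure R z + directionMeasure (F \ R) z := by
    refine (measure_mono fun t ht => ?_).trans (measure_union_le _ _)
    by_cases h : lineThrough z t ∈ R
    exacts [.inl h, .inr ⟨ht, h⟩]
  by_contra! hcon
  refine lt_irrefl (directionMeasure F z) ?_
  calc directionMeasure F z ≤ directionMeasure R z + directionMeasure (F \ R) z := hadd
    _ < directionMeasure F z / 2 + directionMeasure F z / 2 := ENNReal.add_lt_add hz hcon
    _ = directionMeasure F z := ENNReal.add_halves _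

/-- The points that are lost see many lines outside `richLines`, and these lines see few points. -/
lemma mul_volume_refinedPoints_sdiff_le (hE : MeasurableSet E) (hF : MeasurableSet F)
    {β : ℝ≥0∞} (hβ : ∀ z ∈ E, β ≤ directionMeasure F z) (m : ℕ) :
    β / 2 * volume (refinedPoints E F κ m \ refinedPoints E F κ (m + 1)) ≤ κ * volume F := by
  have hEm := measurableSet_refinedPoints (κ := κ) hE hF m
  set D := refinedPoints E F κ m \ refinedPoints E F κ (m + 1)
  set R := richLines (refinedPoints E F κ m) F κ
  have hD : MeasurableSet D := hEm.diff (measurableSet_refinedPoints hE hF (m + 1))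
  have hR : MeasurableSet (F \ R) := hF.diff (measurableSet_richLines hEm hF)
  have hDβ (z : Pt n) (hz : z ∈ D) : β / 2 ≤ directionMeasure (F \ R) z :=
    (ENNReal.div_le_div_right (hβ z (refinedPoints_subset m hz.1)) 2).trans
      (half_directionMeasure_le_sdiff (not_le.1 fun h => hz.2 ⟨hz.1, h⟩))
  calc β / 2 * volume D
      ≤ ∫⁻ l in F \ R, lineIntegral (D.indicator 1) l :=
        mul_volume_le_setLIntegral_lineIntegral hD hR hDβ
    _ ≤ ∫⁻ _ in F \ R, κ := setLIntegral_mono' hR fun l hl =>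
        (lintegral_mono fun s => indicator_le_indicator_of_subset sdiff_subset
          (fun _ => zero_le) _).trans (not_le.1 fun h => hl.2 ⟨hl.1, h⟩).le
    _ = κ * volume (F \ R) := setLIntegral_const _ _
    _ ≤ κ * volume F := by gcongr; exact sdiff_subset

lemma le_volume_freshDirections_richLines {δ : ℝ} {j : ℕ} {E' : Set (Pt n)} {z : Pt n}
    (H : Fin j → ℝ) (hj : j ≤ n + 1) (hfin : directionMeasure F z ≠ ∞)
    (hhalf : directionMeasure F z / 2 ≤ directionMeasure (richLines E' F κ) z)
    (hspread : ∀ u : ℝ, volume ({t : ℝ | lineThrough z t ∈ F} ∩ Metric.ball u δ) ≤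
      directionMeasure F z / (4 * (n + 1))) :
    directionMeasure F z / 4 ≤ volume (freshDirections (richLines E' F κ) δ z H) := by
  set A := freshDirections (richLines E' F κ) δ z H
  have hcover : {t : ℝ | lineThrough z t ∈ richLines E' F κ} ⊆
      A ∪ ⋃ i ∈ (Finset.univ : Finset (Fin j)),
        {t : ℝ | lineThrough z t ∈ F} ∩ Metric.ball (H i) δ := by
    intro t ht
    by_cases! h : ∀ i, δ ≤ |t - H i|
    · exact .inl ⟨ht, h⟩
    · obtain ⟨i, hi⟩ := h
      exact .inr (mem_biUnion (Finset.mem_univ i) ⟨ht.1, by rwa [Metric.mem_ball, Real.dist_eq]⟩)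
  have hballs : ∑ i : Fin j, volume ({t : ℝ | lineThrough z t ∈ F} ∩ Metric.ball (H i) δ) ≤
      directionMeasure F z / 4 := by
    calc _ ≤ ∑ i : Fin j, directionMeasure F z / (4 * (n + 1)) :=
          Finset.sum_le_sum fun i _ => hspread _
      _ = j * (directionMeasure F z / (4 * (n + 1))) := by simp
      _ ≤ (n + 1) * (directionMeasure F z / (4 * (n + 1))) := by gcongr; exact_mod_cast hj
      _ = directionMeasure F z / 4 := by
          rw [mul_div_assoc', mul_comm]
          exact ENNReal.mul_div_mul_right _ _ (by simp) (by finiteness)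
  have hquarter : directionMeasure F z / 4 + directionMeasure F z / 4 =
      directionMeasure F z / 2 := by
    rw [← ENNReal.add_halves (directionMeasure F z / 2), div_eq_mul_inv _ (2 : ℝ≥0∞),
      div_eq_mul_inv _ (2 : ℝ≥0∞), mul_assoc, ← ENNReal.mul_inv (by simp) (by simp),
      ← div_eq_mul_inv]
    norm_num
  refine (ENNReal.add_le_add_iff_right (ENNReal.div_ne_top hfin (by simp))).1
    (hquarter.le.trans (hhalf.trans ?_))
  calc directionMeasure (richLines E' F κ) z
      ≤ volume A + volume (⋃ i ∈ (Finset.univ : Finset (Fin j)),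
        {t : ℝ | lineThrough z t ∈ F} ∩ Metric.ball (H i) δ) :=
        (measure_mono hcover).trans (measure_union_le _ _)
    _ ≤ volume A + directionMeasure F z / 4 := by
        gcongr
        exact (measure_biUnion_finset_le _ _).trans hballs

lemma pow_le_pathCount {δ : ℝ} (hE : MeasurableSet E) (hF : MeasurableSet F) {β : ℝ≥0∞}
    (hβ : ∀ z ∈ E, β ≤ directionMeasure F z) (hfin : ∀ z, directionMeasure F z ≠ ∞)
    (hspread : DirectionsSpread δ E F) (m : ℕ) :
    ∀ (j : ℕ) (z : Pt n) (H : Fin j → ℝ), j + m ≤ n + 1 → z ∈ refinedPoints E F κ m →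
      (κ * (β / 4)) ^ m ≤ pathCount E F δ m j z H := by
  induction m with
  | zero =>
    intro j z H _ hz
    simp [pathCount, show z ∈ E from hz]
  | succ m ih =>
    intro j z H hj hz
    have hEm := measurableSet_refinedPoints (κ := κ) hE hF m
    have hzE := refinedPoints_subset _ hz
    set R := richLines (refinedPoints E F κ m) F κ
    have hA := measurableSet_freshDirections (δ := δ)
      (measurableSet_richLines (κ := κ) hEm hF) z H
    have hAβ : β / 4 ≤ volume (freshDirections R δ z H) :=
      (ENNReal.div_le_div_right (hβ z hzE) 4).trans <|
        le_volume_freshDirections_richLines H (by omega) (hfin z) hz.2 (hspread z hzE)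
    have hline (t : ℝ) (ht : t ∈ freshDirections R δ z H) : (κ * (β / 4)) ^ m * κ ≤
        ∫⁻ w : ℝ, pathCount E F δ m (j + 1) (z + w • lineDirection n t) (Fin.cons t H) := by
      calc (κ * (β / 4)) ^ m * κ ≤ (κ * (β / 4)) ^ m *
            ∫⁻ w : ℝ, (refinedPoints E F κ m).indicator 1 (z + w • lineDirection n t) := by
            rw [← lineIntegral_lineThrough]
            gcongr
            exact ht.1.2
        _ = ∫⁻ w : ℝ, (κ * (β / 4)) ^ m *
            (refinedPoints E F κ m).indicator 1 (z + w • lineDirection n t) :=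
            (lintegral_const_mul _ ((measurable_one.indicator hEm).comp (by fun_prop))).symm
        _ ≤ _ := lintegral_mono fun w => by
            by_cases hw : z + w • lineDirection n t ∈ refinedPoints E F κ m
            · simpa [hw] using ih (j + 1) _ (Fin.cons t H) (by omega) hw
            · simp [hw]
    calc (κ * (β / 4)) ^ (m + 1) = (κ * (β / 4)) ^ m * κ * (β / 4) := by ring
      _ ≤ (κ * (β / 4)) ^ m * κ * volume (freshDirections R δ z H) := by gcongr
      _ = ∫⁻ _ in freshDirections R δ z H, (κ * (β / 4)) ^ m * κ := (setLIntegral_const _ _).symm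
      _ ≤ ∫⁻ t in freshDirections R δ z H, ∫⁻ w : ℝ,
          pathCount E F δ m (j + 1) (z + w • lineDirection n t) (Fin.cons t H) :=
          setLIntegral_mono' hA hline
      _ ≤ pathCount E F δ (m + 1) j z H := lintegral_mono_set fun t ht => ⟨ht.1.1, ht.2⟩

end Refinement

section PathMethod

variable {n : ℕ} {E F : Set (Pt n)}

lemma half_mul_volume_le_refinedPoints_add {κ β : ℝ≥0∞} (hE : MeasurableSet E)
    (hF : MeasurableSet F) (hβ : ∀ z ∈ E, β ≤ directionMeasure F z) (m : ℕ) :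
    β / 2 * volume E ≤ β / 2 * volume (refinedPoints E F κ m) + m * (κ * volume F) := by
  induction m with
  | zero => simp [refinedPoints]
  | succ m ih =>
    calc β / 2 * volume E
        ≤ β / 2 * volume (refinedPoints E F κ m) + m * (κ * volume F) := ih
      _ ≤ β / 2 * (volume (refinedPoints E F κ (m + 1)) +
            volume (refinedPoints E F κ m \ refinedPoints E F κ (m + 1))) +
            m * (κ * volume F) := by
          gcongr
          exact (measure_le_inter_add_sdiff _ _ _).trans (by gcongr; exact inter_subset_right)
      _ ≤ β / 2 * volume (refinedPoints E F κ (m + 1)) + κ * volume F + m * (κ * volume F) := by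
          rw [mul_add]
          gcongr ?_ + ?_ + _
          exacts [le_rfl, mul_volume_refinedPoints_sdiff_le hE hF hβ m]
      _ = _ := by push_cast; ring

lemma volume_le_two_mul_volume_refinedPoints {κ β : ℝ≥0∞} (hE : MeasurableSet E)
    (hF : MeasurableSet F) (hE_top : volume E ≠ ∞) (hβ0 : β ≠ 0) (hβ_top : β ≠ ∞)
    (hβ : ∀ z ∈ E, β ≤ directionMeasure F z) {m : ℕ}
    (hκ : 4 * (m * (κ * volume F)) ≤ β * volume E) :
    volume E ≤ 2 * volume (refinedPoints E F κ m) := by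
  have h4 : 4 * (β / 2) = 2 * β := by
    rw [show (4 : ℝ≥0∞) = 2 * 2 by norm_num, mul_assoc, ENNReal.mul_div_cancel (by simp) (by simp)]
  have hsum : β * volume E + β * volume E ≤
      β * (2 * volume (refinedPoints E F κ m)) + β * volume E := by
    calc β * volume E + β * volume E = 4 * (β / 2 * volume E) := by rw [← mul_assoc, h4]; ring
      _ ≤ 4 * (β / 2 * volume (refinedPoints E F κ m) + m * (κ * volume F)) := by
          gcongr; exact half_mul_volume_le_refinedPoints_add hE hF hβ m
      _ = 2 * β * volume (refinedPoints E F κ m) + 4 * (m * (κ * volume F)) := by rw [← h4]; ring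
      _ ≤ 2 * β * volume (refinedPoints E F κ m) + β * volume E := by gcongr
      _ = _ := by ring
  exact (ENNReal.mul_le_mul_iff_right hβ0 hβ_top).1
    ((ENNReal.add_le_add_iff_right (ENNReal.mul_ne_top hβ_top hE_top)).1 hsum)

lemma lintegral_pathCount_one_eq {δ : ℝ} (hE : MeasurableSet E) (hF : MeasurableSet F)
    (m : ℕ) (l : Pt n) :
    ∫⁻ w : Fin 1 → ℝ, pathCount E F δ m 1 ((0, l.2) + ∑ i, w i • lineDirection n l.1)
        (fun _ => l.1) =
      ∫⁻ s : ℝ, pathCount E F δ m 1 (s, l.2 + s • mom n l.1) (fun _ => l.1) := by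
  rw [← (volume_preserving_funUnique (Fin 1) ℝ).lintegral_comp]
  · refine lintegral_congr fun w => ?_
    congr 1
    ext i <;> simp [lineDirection, MeasurableEquiv.funUnique]
  · exact (measurable_pathCount hE hF m 1).comp
      (f := fun s : ℝ => ((s, l.2 + s • mom n l.1), (fun _ => l.1))) (by fun_prop)

lemma pow_mul_lineIntegral_refinedPoints_le {δ : ℝ} (hδ : 0 < δ) (hE : MeasurableSet E)
    (hF : MeasurableSet F) {T : Set ℝ} (hT : MeasurableSet T) (hT_top : volume T ≠ ∞)
    (hFT : ∀ l ∈ F, l.1 ∈ T) {κ β : ℝ≥0∞} (hβ : ∀ z ∈ E, β ≤ directionMeasure F z)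
    (hspread : DirectionsSpread δ E F) (l : Pt n) :
    ENNReal.ofReal δ ^ (n + 1).choose 2 *
      ((κ * (β / 4)) ^ n * lineIntegral ((refinedPoints E F κ n).indicator 1) l) ≤
        volume T ^ n * volume E := by
  have hEn := measurableSet_refinedPoints (κ := κ) hE hF n
  have hind : Measurable fun s : ℝ =>
      (refinedPoints E F κ n).indicator (1 : Pt n → ℝ≥0∞) (s, l.2 + s • mom n l.1) :=
    (measurable_one.indicator hEn).comp (by fun_prop)
  refine le_trans ?_ (pow_mul_lintegral_pathCount_le hδ hE hF hT hFT n 1 (0, l.2) (fun _ => l.1)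
    (by omega) (fun i k h => absurd (Subsingleton.elim i k) h))
  rw [lintegral_pathCount_one_eq hE hF, lineIntegral, ← lintegral_const_mul _ hind]
  gcongr with s
  by_cases hs : (s, l.2 + s • mom n l.1) ∈ refinedPoints E F κ n
  · simpa [hs] using pow_le_pathCount hE hF hβ
      (fun z => ne_top_of_le_ne_top hT_top (directionMeasure_le hFT z)) hspread n 1 _ _
      (by omega) hs
  · simp [hs]

lemma pow_mul_directionMeasure_mul_volume_le {δ : ℝ} (hδ : 0 < δ) {F' : Set (Pt n)}
    (hE : MeasurableSet E) (hF : MeasurableSet F) (hF' : MeasurableSet F') {T : Set ℝ}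
    (hT : MeasurableSet T) (hT_top : volume T ≠ ∞) (hFT : ∀ l ∈ F, l.1 ∈ T) {κ β β' : ℝ≥0∞}
    (hβ : ∀ z ∈ E, β ≤ directionMeasure F z) (hβ' : ∀ z ∈ E, β' ≤ directionMeasure F' z)
    (hspread : DirectionsSpread δ E F) :
    ENNReal.ofReal δ ^ (n + 1).choose 2 *
      ((κ * (β / 4)) ^ n * (β' * volume (refinedPoints E F κ n))) ≤
        volume F' * (volume T ^ n * volume E) := by
  set D := ENNReal.ofReal δ ^ (n + 1).choose 2
  have hEn := measurableSet_refinedPoints (κ := κ) hE hF n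
  have hline : Measurable (lineIntegral ((refinedPoints E F κ n).indicator 1)) :=
    measurable_lineIntegral (measurable_one.indicator hEn)
  calc D * ((κ * (β / 4)) ^ n * (β' * volume (refinedPoints E F κ n)))
      ≤ D * ((κ * (β / 4)) ^ n *
          ∫⁻ l in F', lineIntegral ((refinedPoints E F κ n).indicator 1) l) := by
        gcongr
        exact mul_volume_le_setLIntegral_lineIntegral hEn hF'
          fun z hz => hβ' z (refinedPoints_subset n hz)
    _ = ∫⁻ l in F', D * ((κ * (β / 4)) ^ n *
          lineIntegral ((refinedPoints E F κ n).indicator 1) l) := by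
        rw [lintegral_const_mul _ (hline.const_mul _), lintegral_const_mul _ hline]
    _ ≤ ∫⁻ _ in F', volume T ^ n * volume E := lintegral_mono fun l =>
        pow_mul_lineIntegral_refinedPoints_le hδ hE hF hT hT_top hFT hβ hspread l
    _ = volume F' * (volume T ^ n * volume E) := by rw [setLIntegral_const, mul_comm]

/-- The basic inequality of the path method, for two families `F`, `F'` of lines: a path uses one
line of `F'` and then `n` lines of `F`. -/
theorem volume_pow_le_of_le_directionMeasure (hn : n ≠ 0) {δ : ℝ} (hδ : 0 < δ) {F' : Set (Pt n)}
    (hE : MeasurableSet E) (hF : MeasurableSet F) (hF' : MeasurableSet F')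
    (hE_top : volume E ≠ ∞) (hF_top : volume F ≠ ∞) {T : Set ℝ} (hT : MeasurableSet T)
    (hT_top : volume T ≠ ∞) (hFT : ∀ l ∈ F, l.1 ∈ T) {β β' : ℝ≥0∞} (hβ0 : β ≠ 0)
    (hβ : ∀ z ∈ E, β ≤ directionMeasure F z) (hβ' : ∀ z ∈ E, β' ≤ directionMeasure F' z)
    (hspread : DirectionsSpread δ E F) :
    ENNReal.ofReal δ ^ (n + 1).choose 2 * (β ^ (2 * n) * volume E ^ n * β') ≤
      2 * (16 * n) ^ n * (volume F' * volume F ^ n * volume T ^ n) := by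
  set D := ENNReal.ofReal δ ^ (n + 1).choose 2
  rcases eq_or_ne (volume E) 0 with hE0 | hE0
  · simp [hE0, hn]
  obtain ⟨z₀, hz₀⟩ := nonempty_of_measure_ne_zero hE0
  have hβ_top : β ≠ ∞ :=
    ne_top_of_le_ne_top hT_top ((hβ z₀ hz₀).trans (directionMeasure_le hFT z₀))
  have hF0 : volume F ≠ 0 := fun h0 => mul_ne_zero hβ0 hE0 <| le_zero_iff.1 <|
    (mul_volume_le_setLIntegral_lineIntegral hE hF hβ).trans_eq (setLIntegral_measure_zero _ _ h0)
  set κ : ℝ≥0∞ := β * volume E / (4 * n * volume F)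
  have hκ : 4 * n * κ * volume F = β * volume E := by
    rw [mul_right_comm, ENNReal.mul_div_cancel (by simp [hn, hF0]) (by finiteness)]
  have hhalf : volume E ≤ 2 * volume (refinedPoints E F κ n) :=
    volume_le_two_mul_volume_refinedPoints hE hF hE_top hβ0 hβ_top hβ
      (by rw [← hκ]; apply le_of_eq; ring)
  have hpaths : D * ((κ * (β / 4)) ^ n * β') ≤ 2 * volume F' * volume T ^ n := by
    refine (ENNReal.mul_le_mul_iff_left hE0 hE_top).1 ?_
    calc D * ((κ * (β / 4)) ^ n * β') * volume E
        ≤ D * ((κ * (β / 4)) ^ n * β') * (2 * volume (refinedPoints E F κ n)) := by gcongr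
      _ = 2 * (D * ((κ * (β / 4)) ^ n * (β' * volume (refinedPoints E F κ n)))) := by ring
      _ ≤ 2 * (volume F' * (volume T ^ n * volume E)) := mul_le_mul_right
          (pow_mul_directionMeasure_mul_volume_le hδ hE hF hF' hT hT_top hFT hβ hβ' hspread) 2
      _ = _ := by ring
  have hβ4 : 4 * (β / 4) = β := ENNReal.mul_div_cancel (by simp) (by simp)
  have h16 : (16 : ℝ≥0∞) ^ n = 4 ^ n * 4 ^ n := by rw [← mul_pow]; norm_num
  calc D * (β ^ (2 * n) * volume E ^ n * β')
      = D * ((β * volume E) ^ n * β ^ n * β') := by ring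
    _ = D * ((4 * n * κ * volume F) ^ n * (4 * (β / 4)) ^ n * β') := by rw [hκ, hβ4]
    _ = (16 * n) ^ n * volume F ^ n * (D * ((κ * (β / 4)) ^ n * β')) := by
        rw [mul_pow 16, h16]; ring
    _ ≤ (16 * n) ^ n * volume F ^ n * (2 * volume F' * volume T ^ n) := by gcongr
    _ = _ := by ring

end PathMethod

/-! ### Pieces of a set of directions -/

section Pieces

variable {T : Set ℝ}

/-- The distribution function `t ↦ |T ∩ (-∞, t]|` of a set `T` of finite measure. -/
def cumulMeasure (T : Set ℝ) (t : ℝ) : ℝ := (volume (T ∩ Iic t)).toReal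

lemma volume_inter_Iic_ne_top (hT : volume T ≠ ∞) (t : ℝ) : volume (T ∩ Iic t) ≠ ∞ :=
  ne_top_of_le_ne_top hT (measure_mono inter_subset_left)

lemma cumulMeasure_mono (hT : volume T ≠ ∞) : Monotone (cumulMeasure T) := fun _ t h =>
  ENNReal.toReal_mono (volume_inter_Iic_ne_top hT t)
    (measure_mono (inter_subset_inter_right _ (Iic_subset_Iic.2 h)))

lemma cumulMeasure_le_add_sub (hT : volume T ≠ ∞) {s t : ℝ} (h : s ≤ t) :
    cumulMeasure T t ≤ cumulMeasure T s + (t - s) := by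
  have hcover : volume (T ∩ Iic t) ≤ volume (T ∩ Iic s) + ENNReal.ofReal (t - s) := by
    rw [← Real.volume_Ioc]
    refine (measure_mono fun x hx => ?_).trans (measure_union_le _ _)
    exact (le_or_gt x s).imp (fun hxs => ⟨hx.1, hxs⟩) (fun hxs => ⟨hxs, hx.2⟩)
  have hreal := ENNReal.toReal_mono (by finiteness [volume_inter_Iic_ne_top hT s]) hcover
  rwa [ENNReal.toReal_add (volume_inter_Iic_ne_top hT s) ENNReal.ofReal_ne_top,
    ENNReal.toReal_ofReal (sub_nonneg.2 h)] at hreal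

lemma abs_cumulMeasure_sub_le (hT : volume T ≠ ∞) (s t : ℝ) :
    |cumulMeasure T t - cumulMeasure T s| ≤ |t - s| := by
  wlog h : s ≤ t generalizing s t
  · rw [abs_sub_comm, abs_sub_comm t]
    exact this t s (le_of_not_ge h)
  rw [abs_of_nonneg (sub_nonneg.2 (cumulMeasure_mono hT h)), abs_of_nonneg (sub_nonneg.2 h)]
  linarith [cumulMeasure_le_add_sub hT h]

lemma volume_le_of_isCompact_of_cumulMeasure_sub_le (hT : volume T ≠ ∞) {K : Set ℝ}
    (hK : IsCompact K) (hKT : K ⊆ T) {h : ℝ}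
    (hosc : ∀ s ∈ K, ∀ t ∈ K, cumulMeasure T t - cumulMeasure T s ≤ h) :
    volume K ≤ ENNReal.ofReal h := by
  rcases K.eq_empty_or_nonempty with rfl | hne
  · simp
  have hle : sInf K ≤ sSup K := Real.sInf_le_sSup K hK.bddBelow hK.bddAbove
  have hadd : volume (T ∩ Iic (sInf K)) + volume K ≤ volume (T ∩ Iic (sSup K)) := by
    rw [← measure_sdiff_null (s := K) (measure_singleton (sInf K)), ← measure_union]
    · refine measure_mono (union_subset (fun x hx => ⟨hx.1, hx.2.trans hle⟩) fun x hx => ?_)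
      exact ⟨hKT hx.1, le_csSup hK.bddAbove hx.1⟩
    · exact Set.disjoint_left.2 fun x hx hxK =>
        hxK.2 (le_antisymm hx.2 (csInf_le hK.bddBelow hxK.1))
    · exact hK.measurableSet.diff (measurableSet_singleton _)
  have hreal := ENNReal.toReal_mono (volume_inter_Iic_ne_top hT _) hadd
  rw [ENNReal.toReal_add (volume_inter_Iic_ne_top hT _) hK.measure_ne_top] at hreal
  refine ENNReal.le_ofReal_iff_toReal_le hK.measure_ne_top ?_ |>.2 ?_
  all_goals
    have := hosc _ (hK.sInf_mem hne) _ (hK.sSup_mem hne)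
    unfold cumulMeasure at this
    linarith [ENNReal.toReal_nonneg (a := volume K)]

lemma volume_le_of_cumulMeasure_sub_le (hT : volume T ≠ ∞) {A : Set ℝ} (hA : MeasurableSet A)
    (hAT : A ⊆ T) {h : ℝ} (hosc : ∀ s ∈ A, ∀ t ∈ A, cumulMeasure T t - cumulMeasure T s ≤ h) :
    volume A ≤ ENNReal.ofReal h := by
  rw [hA.measure_eq_iSup_isCompact]
  exact iSup_le fun K => iSup_le fun hKA => iSup_le fun hK =>
    volume_le_of_isCompact_of_cumulMeasure_sub_le hT hK (hKA.trans hAT)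
      fun s hs t ht => hosc s (hKA hs) t (hKA ht)

/-- The `a`-th of the consecutive pieces of measure `h` into which `T` is cut. -/
def levelPiece (T : Set ℝ) (h : ℝ) (a : ℤ) : Set ℝ := {t ∈ T | ⌊cumulMeasure T t / h⌋ = a}

lemma levelPiece_subset (h : ℝ) (a : ℤ) : levelPiece T h a ⊆ T := fun _ ht => ht.1

lemma measurableSet_levelPiece (hT : MeasurableSet T) (hT_top : volume T ≠ ∞) (h : ℝ) (a : ℤ) :
    MeasurableSet (levelPiece T h a) :=
  hT.inter (Int.measurable_floor.comp ((cumulMeasure_mono hT_top).measurable.div_const h)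
    (measurableSet_singleton a))

lemma volume_levelPiece_le (hT : MeasurableSet T) (hT_top : volume T ≠ ∞) {h : ℝ} (hh : 0 < h)
    (a : ℤ) : volume (levelPiece T h a) ≤ ENNReal.ofReal h := by
  refine volume_le_of_cumulMeasure_sub_le hT_top (measurableSet_levelPiece hT hT_top h a)
    (levelPiece_subset h a) fun s hs t ht => ?_
  have hlow := (Int.floor_eq_iff.1 hs.2).1
  have hupp := (Int.floor_eq_iff.1 ht.2).2
  rw [le_div_iff₀ hh] at hlow
  rw [div_lt_iff₀ hh] at hupp
  linarith

lemma levelPiece_zero_of_volume_lt {h : ℝ} (hh : volume T < ENNReal.ofReal h) :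
    levelPiece T h 0 = T := by
  have h0 : 0 < h := ENNReal.ofReal_pos.1 (pos_of_gt hh)
  have hlt (t : ℝ) : cumulMeasure T t < h :=
    (ENNReal.lt_ofReal_iff_toReal_lt (volume_inter_Iic_ne_top hh.ne_top t)).1
      ((measure_mono inter_subset_left).trans_lt hh)
  exact subset_antisymm (levelPiece_subset _ _) fun t ht => ⟨ht, Int.floor_eq_zero_iff.2
    ⟨div_nonneg ENNReal.toReal_nonneg h0.le, (div_lt_one h0).2 (hlt t)⟩⟩

lemma exists_inter_ball_subset_levelPiece (hT : volume T ≠ ∞) {h : ℝ} (hh : 0 < h) (u : ℝ) :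
    ∃ b : ℤ, T ∩ Metric.ball u h ⊆
      levelPiece T h (b - 1) ∪ levelPiece T h b ∪ levelPiece T h (b + 1) := by
  refine ⟨⌊cumulMeasure T u / h⌋, ?_⟩
  rintro t ⟨htT, htu⟩
  set x := cumulMeasure T u / h
  have hxy : |cumulMeasure T t / h - x| < 1 := by
    rw [← sub_div, abs_div, abs_of_pos hh, div_lt_one hh]
    exact (abs_cumulMeasure_sub_le hT u t).trans_lt htu
  obtain ⟨hlow, hupp⟩ := abs_lt.1 hxy
  have hfloor_le : ⌊x⌋ - 1 ≤ ⌊cumulMeasure T t / h⌋ := by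
    rw [Int.le_floor]
    push_cast
    linarith [Int.floor_le x]
  have hle_floor : ⌊cumulMeasure T t / h⌋ < ⌊x⌋ + 2 := by
    rw [Int.floor_lt]
    push_cast
    linarith [Int.lt_floor_add_one x]
  obtain hb | hb | hb : ⌊cumulMeasure T t / h⌋ = ⌊x⌋ - 1 ∨ ⌊cumulMeasure T t / h⌋ = ⌊x⌋ ∨
      ⌊cumulMeasure T t / h⌋ = ⌊x⌋ + 1 := by omega
  exacts [.inl (.inl ⟨htT, hb⟩), .inl (.inr ⟨htT, hb⟩), .inr ⟨htT, hb⟩]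

lemma pairwise_disjoint_levelPiece (h : ℝ) :
    Pairwise (Function.onFun Disjoint (levelPiece T h)) := fun _ _ hab =>
  Set.disjoint_left.2 fun _ ha hb => hab (ha.2.symm.trans hb.2)

/-- Passing repeatedly to a child piece carrying a fraction more than `ϱ` of the set must stop,
since the pieces shrink by the factor `K > 1/ϱ`. -/
lemma exists_levelPiece_children_le (hT : MeasurableSet T) {τ : ℝ}
    (hτ : volume T < ENNReal.ofReal τ) {S : Set ℝ} (hS : S ⊆ T) {β : ℝ} (hβ : 0 < β)
    (hSβ : ENNReal.ofReal β ≤ volume S) {ϱ K : ℝ} (hϱ : 0 < ϱ) (hK : 0 < K) (hϱK : 1 < ϱ * K) :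
    ∃ (j : ℕ) (a : ℤ),
      ENNReal.ofReal (ϱ ^ j * β) ≤ volume (S ∩ levelPiece T (τ / K ^ j) a) ∧
      ∀ b : ℤ, volume (S ∩ levelPiece T (τ / K ^ j) a ∩ levelPiece T (τ / K ^ (j + 1)) b) ≤
        ENNReal.ofReal ϱ * volume (S ∩ levelPiece T (τ / K ^ j) a) := by
  by_contra! hcon
  have hτ0 : 0 < τ := ENNReal.ofReal_pos.1 (pos_of_gt hτ)
  have hdescent (j : ℕ) :
      ∃ a : ℤ, ENNReal.ofReal (ϱ ^ j * β) ≤ volume (S ∩ levelPiece T (τ / K ^ j) a) := by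
    induction j with
    | zero => exact ⟨0, by simpa [levelPiece_zero_of_volume_lt hτ, inter_eq_left.2 hS] using hSβ⟩
    | succ j ih =>
      obtain ⟨a, ha⟩ := ih
      obtain ⟨b, hb⟩ := hcon j a ha
      refine ⟨b, ?_⟩
      calc ENNReal.ofReal (ϱ ^ (j + 1) * β)
          = ENNReal.ofReal ϱ * ENNReal.ofReal (ϱ ^ j * β) := by
            rw [← ENNReal.ofReal_mul hϱ.le, pow_succ', mul_assoc]
        _ ≤ ENNReal.ofReal ϱ * volume (S ∩ levelPiece T (τ / K ^ j) a) := by gcongr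
        _ ≤ volume (S ∩ levelPiece T (τ / K ^ j) a ∩ levelPiece T (τ / K ^ (j + 1)) b) := hb.le
        _ ≤ volume (S ∩ levelPiece T (τ / K ^ (j + 1)) b) :=
            measure_mono (inter_subset_inter_left _ inter_subset_left)
  obtain ⟨j, hj⟩ := pow_unbounded_of_one_lt (τ / β) hϱK
  obtain ⟨a, ha⟩ := hdescent j
  have hle : ϱ ^ j * β ≤ τ / K ^ j := (ENNReal.ofReal_le_ofReal_iff (by positivity)).1 <|
    ha.trans ((measure_mono inter_subset_right).trans
      (volume_levelPiece_le hT hτ.ne_top (by positivity) a))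
  rw [le_div_iff₀ (by positivity)] at hle
  rw [div_lt_iff₀ hβ, mul_pow] at hj
  linarith

end Pieces

section RealPathInequality

variable {n : ℕ} {E F : Set (Pt n)} {T : Set ℝ}

lemma rpow_mul_volume_real_le (hn : n ≠ 0) {δ : ℝ} (hδ : 0 < δ) {F' : Set (Pt n)}
    (hE : MeasurableSet E) (hF : MeasurableSet F) (hF' : MeasurableSet F')
    (hE_top : volume E ≠ ∞) (hF_top : volume F ≠ ∞) (hF'_top : volume F' ≠ ∞)
    (hT : MeasurableSet T) (hFT : ∀ l ∈ F, l.1 ∈ T) {τ β β' : ℝ} (hτ : 0 < τ)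
    (hTτ : volume T ≤ ENNReal.ofReal τ) (hβ0 : 0 < β) (hβ'0 : 0 < β')
    (hβ : ∀ z ∈ E, ENNReal.ofReal β ≤ directionMeasure F z)
    (hβ' : ∀ z ∈ E, ENNReal.ofReal β' ≤ directionMeasure F' z) (hspread : DirectionsSpread δ E F) :
    δ ^ ((n + 1) / 2 : ℝ) * (volume.real E * β ^ 2 * β' ^ (n : ℝ)⁻¹) ≤
      32 * n * (volume.real F' ^ (n : ℝ)⁻¹ * volume.real F * τ) := by
  have hpath := ENNReal.toReal_mono (by finiteness) <|
    (volume_pow_le_of_le_directionMeasure hn hδ hE hF hF' hE_top hF_top hT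
      (ne_top_of_le_ne_top ENNReal.ofReal_ne_top hTτ) hFT (by simpa using hβ0) hβ hβ'
      hspread).trans (mul_le_mul_right (mul_le_mul_right (pow_le_pow_left' hTτ n) _) _)
  simp only [ENNReal.toReal_mul, ENNReal.toReal_pow, ENNReal.toReal_ofReal, hδ.le, hβ0.le, hβ'0.le,
    hτ.le, ENNReal.toReal_ofNat, ENNReal.toReal_natCast, ← measureReal_def] at hpath
  have hδn : (δ ^ ((n + 1) / 2 : ℝ)) ^ n = δ ^ (n + 1).choose 2 := by
    rw [← Real.rpow_mul_natCast hδ.le, ← Real.rpow_natCast, Nat.cast_choose_two]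
    congr 1
    push_cast
    ring
  refine (pow_le_pow_iff_left₀ (by positivity) (by positivity) hn).1 ?_
  calc (δ ^ ((n + 1) / 2 : ℝ) * (volume.real E * β ^ 2 * β' ^ (n : ℝ)⁻¹)) ^ n
      = δ ^ (n + 1).choose 2 * (β ^ (2 * n) * volume.real E ^ n * β') := by
        simp only [mul_pow, hδn, Real.rpow_inv_natCast_pow hβ'0.le hn]
        ring
    _ ≤ 2 * (16 * n) ^ n * (volume.real F' * volume.real F ^ n * τ ^ n) := hpath
    _ ≤ 2 ^ n * (16 * n) ^ n * (volume.real F' * volume.real F ^ n * τ ^ n) := by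
        gcongr
        exact le_self_pow₀ one_le_two hn
    _ = (32 * n * (volume.real F' ^ (n : ℝ)⁻¹ * volume.real F * τ)) ^ n := by
        simp only [mul_pow, Real.rpow_inv_natCast_pow measureReal_nonneg hn]
        rw [← mul_assoc (2 ^ n), ← mul_pow 2]
        norm_num

lemma rpow_le_rpow_mul_rpow_sub {a b x y : ℝ} (ha : 0 ≤ a) (hab : a ≤ b) (hx : 0 ≤ x)
    (hxy : x ≤ y) : a ^ y ≤ a ^ x * b ^ (y - x) := by
  calc a ^ y = a ^ x * a ^ (y - x) := by
        rw [← Real.rpow_add_of_nonneg ha hx (sub_nonneg.2 hxy), add_sub_cancel]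
    _ ≤ a ^ x * b ^ (y - x) := by gcongr

lemma volume_real_mul_rpow_le_of_directionsSpread (hn : n ≠ 0) {Q η : ℝ} (hη0 : 0 ≤ η)
    (hη : η ≤ (n : ℝ)⁻¹) (hQ : 2 + (n : ℝ)⁻¹ ≤ Q) (hE : MeasurableSet E) (hF : MeasurableSet F)
    (hE_top : volume E ≠ ∞) (hT : MeasurableSet T) (hFT : ∀ l ∈ F, l.1 ∈ T) {K τ μ β : ℝ}
    (hK : 0 < K) (hτ : 0 < τ) (hμ : 0 < μ) (hTτ : volume T ≤ ENNReal.ofReal τ)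
    (hFμ : volume F ≤ ENNReal.ofReal (μ * τ)) (hβ0 : 0 < β)
    (hβ : ∀ z ∈ E, ENNReal.ofReal β ≤ directionMeasure F z)
    (hspread : DirectionsSpread (τ / K) E F) :
    volume.real E * β ^ Q ≤ 32 * n * K ^ ((n + 1) / 2 : ℝ) *
      (volume.real F * volume.real F ^ η * μ ^ ((n : ℝ)⁻¹ - η) *
        τ ^ (Q - 1 - (n + 1) / 2 - η)) := by
  have hF_top : volume F ≠ ∞ := ne_top_of_le_ne_top ENNReal.ofReal_ne_top hFμ
  have hroot := rpow_mul_volume_real_le hn (div_pos hτ hK) hE hF hF hE_top hF_top hF_top hT hFT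
    hτ hTτ hβ0 hβ0 hβ hβ hspread
  rcases E.eq_empty_or_nonempty with rfl | ⟨z, hz⟩
  · simpa using by positivity
  have hβτ : β ≤ τ := (ENNReal.ofReal_le_ofReal_iff hτ.le).1 <|
    (hβ z hz).trans ((directionMeasure_le hFT z).trans hTτ)
  have hφ : volume.real F ^ (n : ℝ)⁻¹ ≤ volume.real F ^ η * (μ * τ) ^ ((n : ℝ)⁻¹ - η) :=
    rpow_le_rpow_mul_rpow_sub measureReal_nonneg
      (ENNReal.toReal_le_of_le_ofReal (by positivity) hFμ) hη0 hη
  have hβQ : β ^ Q ≤ β ^ 2 * β ^ (n : ℝ)⁻¹ * τ ^ (Q - 2 - (n : ℝ)⁻¹) := by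
    simpa only [Real.rpow_add hβ0, Real.rpow_two, sub_sub] using
      rpow_le_rpow_mul_rpow_sub hβ0.le hβτ (by positivity) hQ
  rw [Real.div_rpow hτ.le hK.le, div_mul_eq_mul_div, div_le_iff₀ (by positivity)] at hroot
  have hτpow : τ ^ (Q - 2 - (n : ℝ)⁻¹) * τ * τ ^ ((n : ℝ)⁻¹ - η) =
      τ ^ (Q - 1 - (n + 1) / 2 - η) * τ ^ ((n + 1) / 2 : ℝ) := by
    rw [← Real.rpow_add_one hτ.ne', ← Real.rpow_add hτ, ← Real.rpow_add hτ]
    congr 1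
    ring
  refine le_of_mul_le_mul_right ?_ (by positivity : 0 < τ ^ ((n + 1) / 2 : ℝ))
  calc volume.real E * β ^ Q * τ ^ ((n + 1) / 2 : ℝ)
      ≤ volume.real E * (β ^ 2 * β ^ (n : ℝ)⁻¹ * τ ^ (Q - 2 - (n : ℝ)⁻¹)) *
          τ ^ ((n + 1) / 2 : ℝ) := by gcongr
    _ = τ ^ (Q - 2 - (n : ℝ)⁻¹) *
          (τ ^ ((n + 1) / 2 : ℝ) * (volume.real E * β ^ 2 * β ^ (n : ℝ)⁻¹)) := by ring
    _ ≤ τ ^ (Q - 2 - (n : ℝ)⁻¹) * (32 * n * (volume.real F ^ (n : ℝ)⁻¹ * volume.real F * τ) *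
          K ^ ((n + 1) / 2 : ℝ)) := by gcongr
    _ ≤ τ ^ (Q - 2 - (n : ℝ)⁻¹) * (32 * n * (volume.real F ^ η *
          (μ * τ) ^ ((n : ℝ)⁻¹ - η) * volume.real F * τ) * K ^ ((n + 1) / 2 : ℝ)) := by gcongr
    _ = _ := by
        rw [Real.mul_rpow hμ.le hτ.le]
        linear_combination (32 * n * volume.real F ^ η * volume.real F * μ ^ ((n : ℝ)⁻¹ - η) *
          K ^ ((n + 1) / 2 : ℝ)) * hτpow

end RealPathInequality

/-! ### Restricted weak type bounds for blocks of lines -/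

lemma prod_apply_le_mul {α β : Type*} [MeasurableSpace α] [MeasurableSpace β] {μ : Measure α}
    {ν : Measure β} [SFinite ν] {F : Set (α × β)} (hF : MeasurableSet F) {T : Set α}
    (hFT : ∀ p ∈ F, p.1 ∈ T) {c : ℝ≥0∞} (hc : ∀ a, ν (Prod.mk a ⁻¹' F) ≤ c) :
    μ.prod ν F ≤ c * μ T := by
  rw [Measure.prod_apply hF]
  refine (lintegral_mono fun a => ?_).trans (lintegral_indicator_const_le T c)
  by_cases ha : a ∈ T
  · simpa [ha] using hc a
  · have hempty : Prod.mk a ⁻¹' F = ∅ := eq_empty_of_forall_notMem fun b hb => ha (hFT _ hb)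
    simp [hempty]

lemma mul_measure_le_of_forall_subset {α : Type*} [MeasurableSpace α] {μ : Measure α}
    [SigmaFinite μ] {S : Set α} (hS : MeasurableSet S) {k c : ℝ≥0∞}
    (h : ∀ E ⊆ S, MeasurableSet E → μ E ≠ ∞ → k * μ E ≤ c) : k * μ S ≤ c := by
  rw [← Measure.iSup_restrict_spanningSets, ENNReal.mul_iSup]
  refine iSup_le fun i => ?_
  rw [Measure.restrict_apply hS]
  exact h _ inter_subset_left (hS.inter (measurableSet_spanningSets μ i)) <|
    ne_top_of_le_ne_top (measure_spanningSets_lt_top μ i).ne (measure_mono inter_subset_right)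

/-- A measurable family of lines whose directions lie in a set `base` of measure less than
`width` and whose slices in a given direction have measure
at most `height`. -/
structure LineBlock (n : ℕ) where
  lines : Set (Pt n)
  base : Set ℝ
  width : ℝ
  height : ℝ
  measurableSet_lines : MeasurableSet lines
  measurableSet_base : MeasurableSet base
  fst_mem_base : ∀ l ∈ lines, l.1 ∈ base
  width_pos : 0 < width
  height_pos : 0 < height
  volume_base_lt : volume base < ENNReal.ofReal width
  volume_slice_le : ∀ t, volume (Prod.mk t ⁻¹' lines) ≤ ENNReal.ofReal height

namespace LineBlock

variable {n : ℕ} (B : LineBlock n)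

lemma volume_lines_inter_le {S : Set ℝ} (hS : MeasurableSet S) :
    volume (B.lines ∩ Prod.fst ⁻¹' S) ≤ ENNReal.ofReal B.height * volume S := by
  rw [Measure.volume_eq_prod]
  exact prod_apply_le_mul (B.measurableSet_lines.inter (measurable_fst hS)) (fun p hp => hp.2)
    fun t => (measure_mono fun y hy => hy.1).trans (B.volume_slice_le t)

lemma volume_lines_le : volume B.lines ≤ ENNReal.ofReal (B.height * B.width) := by
  have h := B.volume_lines_inter_le B.measurableSet_base
  rw [inter_eq_left.2 (show B.lines ⊆ Prod.fst ⁻¹' B.base from B.fst_mem_base)] at h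
  rw [ENNReal.ofReal_mul B.height_pos.le]
  exact h.trans (by gcongr; exact B.volume_base_lt.le)

lemma volume_lines_ne_top : volume B.lines ≠ ∞ :=
  ne_top_of_le_ne_top ENNReal.ofReal_ne_top B.volume_lines_le

section WeakType

variable {K : ℝ}

/-- The lines of `B` over the `a`-th piece of generation `j` of the base. -/
def pieceLines (K : ℝ) (j : ℕ) (a : ℤ) : Set (Pt n) :=
  B.lines ∩ Prod.fst ⁻¹' levelPiece B.base (B.width / K ^ j) a

/-- The points of `E` for which passing to pieces in which they see a large fraction of their
lines stops in generation `j` at the piece `a`. -/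
def stoppedPoints (E : Set (Pt n)) (β ϱ K : ℝ) (j : ℕ) (a : ℤ) : Set (Pt n) :=
  {z ∈ E | ENNReal.ofReal (ϱ ^ j * β) ≤ directionMeasure (B.pieceLines K j a) z ∧
    ∀ b, directionMeasure (B.pieceLines K j a ∩ B.pieceLines K (j + 1) b) z ≤
      ENNReal.ofReal ϱ * directionMeasure (B.pieceLines K j a) z}

lemma measurableSet_pieceLines (j : ℕ) (a : ℤ) : MeasurableSet (B.pieceLines K j a) :=
  B.measurableSet_lines.inter (measurable_fst
    (measurableSet_levelPiece B.measurableSet_base B.volume_base_lt.ne_top _ a))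

lemma measurableSet_stoppedPoints {E : Set (Pt n)} (hE : MeasurableSet E) (β ϱ : ℝ) (j : ℕ)
    (a : ℤ) : MeasurableSet (B.stoppedPoints E β ϱ K j a) := by
  have hpiece := B.measurableSet_pieceLines (K := K)
  refine hE.inter (.inter (measurableSet_le measurable_const
    (measurable_directionMeasure (hpiece j a))) ?_)
  change MeasurableSet {z | ∀ b, _}
  simp only [Set.ofPred_forall]
  exact .iInter fun b => measurableSet_le
    (measurable_directionMeasure ((hpiece j a).inter (hpiece (j + 1) b)))
    ((measurable_directionMeasure (hpiece j a)).const_mul _)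

lemma subset_iUnion_stoppedPoints {E : Set (Pt n)} {β ϱ : ℝ} (hβ0 : 0 < β)
    (hβ : ∀ z ∈ E, ENNReal.ofReal β ≤ directionMeasure B.lines z) (hϱ : 0 < ϱ) (hK : 0 < K)
    (hϱK : 1 < ϱ * K) : E ⊆ ⋃ (j : ℕ) (a : ℤ), B.stoppedPoints E β ϱ K j a := by
  intro z hz
  obtain ⟨j, a, hlow, hchild⟩ := exists_levelPiece_children_le B.measurableSet_base
    B.volume_base_lt (S := {t | lineThrough z t ∈ B.lines}) (fun t ht => B.fst_mem_base _ ht)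
    hβ0 (hβ z hz) hϱ hK hϱK
  refine mem_iUnion₂.2 ⟨j, a, hz, hlow, fun b => le_trans (measure_mono ?_) (hchild b)⟩
  exact fun t ht => ⟨ht.1, ht.2.2⟩

lemma directionsSpread_stoppedPoints (E : Set (Pt n)) (β : ℝ) (hK : 0 < K) (j : ℕ) (a : ℤ) :
    DirectionsSpread (B.width / K ^ j / K) (B.stoppedPoints E β (1 / (12 * (n + 1))) K j a)
      (B.pieceLines K j a) := by
  intro z hz u
  set ϱ : ℝ := 1 / (12 * (n + 1))
  set G := B.pieceLines K j a
  have hwidth := B.width_pos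
  obtain ⟨b, hb⟩ := exists_inter_ball_subset_levelPiece B.volume_base_lt.ne_top
    (by positivity : 0 < B.width / K ^ (j + 1)) u
  have hcover : {t | lineThrough z t ∈ G} ∩ Metric.ball u (B.width / K ^ (j + 1)) ⊆
      {t | lineThrough z t ∈ G ∩ B.pieceLines K (j + 1) (b - 1)} ∪
        {t | lineThrough z t ∈ G ∩ B.pieceLines K (j + 1) b} ∪
        {t | lineThrough z t ∈ G ∩ B.pieceLines K (j + 1) (b + 1)} := fun t ht =>
    (hb ⟨B.fst_mem_base _ ht.1.1, ht.2⟩).imp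
      (Or.imp (fun h => ⟨ht.1, ht.1.1, h⟩) fun h => ⟨ht.1, ht.1.1, h⟩) fun h => ⟨ht.1, ht.1.1, h⟩
  have hϱ : 3 * ENNReal.ofReal ϱ = (4 * ((n : ℝ≥0∞) + 1))⁻¹ := by
    rw [← ENNReal.ofReal_ofNat 3, ← ENNReal.ofReal_mul (by norm_num),
      show 3 * ϱ = (4 * ((n : ℝ) + 1))⁻¹ by simp only [ϱ]; field_simp; norm_num,
      ENNReal.ofReal_inv_of_pos (by positivity), ENNReal.ofReal_mul (by norm_num),
      ENNReal.ofReal_add (by positivity) zero_le_one]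
    simp
  rw [div_div, ← pow_succ]
  calc volume ({t | lineThrough z t ∈ G} ∩ Metric.ball u (B.width / K ^ (j + 1)))
      ≤ directionMeasure (G ∩ B.pieceLines K (j + 1) (b - 1)) z +
          directionMeasure (G ∩ B.pieceLines K (j + 1) b) z +
          directionMeasure (G ∩ B.pieceLines K (j + 1) (b + 1)) z :=
        (measure_mono hcover).trans <| (measure_union_le _ _).trans <|
          add_le_add_left (measure_union_le _ _) _
    _ ≤ ENNReal.ofReal ϱ * directionMeasure G z + ENNReal.ofReal ϱ * directionMeasure G z +
          ENNReal.ofReal ϱ * directionMeasure G z := by gcongr <;> exact hz.2.2 _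
    _ = directionMeasure G z / (4 * (n + 1)) := by rw [div_eq_mul_inv, ← hϱ]; ring

lemma tsum_volume_pieceLines_le (j : ℕ) :
    ∑' a, volume (B.pieceLines K j a) ≤ volume B.lines := by
  refine (tsum_meas_le_meas_iUnion_of_disjoint volume (B.measurableSet_pieceLines j) ?_).trans
    (measure_mono (iUnion_subset fun a => inter_subset_left))
  exact fun a b hab => Set.disjoint_left.2 fun p hp hp' =>
    Set.disjoint_left.1 (pairwise_disjoint_levelPiece _ hab) hp.2 hp'.2

lemma volume_pieceLines_le (j : ℕ) (a : ℤ) (hK : 0 < K) :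
    volume (B.pieceLines K j a) ≤ ENNReal.ofReal (B.height * (B.width / K ^ j)) := by
  have hwidth := B.width_pos
  rw [ENNReal.ofReal_mul B.height_pos.le]
  exact (B.volume_lines_inter_le (measurableSet_levelPiece B.measurableSet_base
    B.volume_base_lt.ne_top _ a)).trans <| by
      gcongr
      exact volume_levelPiece_le B.measurableSet_base B.volume_base_lt.ne_top (by positivity) a

lemma volume_stoppedPoints_mul_rpow_le (hn : n ≠ 0) {Q η ϱ β : ℝ} (hη0 : 0 ≤ η)
    (hη : η ≤ (n : ℝ)⁻¹) (hQ : 2 + (n : ℝ)⁻¹ ≤ Q) (hϱ : ϱ = 1 / (12 * (n + 1)))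
    (hβ : 0 < β) (hK : 0 < K) (hgain : 2 ≤ ϱ ^ Q * K ^ (Q - 1 - (n + 1) / 2 - η))
    {E : Set (Pt n)} (hE : MeasurableSet E) (hE_top : volume E ≠ ∞) (j : ℕ) (a : ℤ) :
    ENNReal.ofReal (β ^ Q) * volume (B.stoppedPoints E β ϱ K j a) ≤
      ENNReal.ofReal (32 * n * K ^ ((n + 1) / 2 : ℝ) * (volume.real B.lines ^ η *
        B.height ^ ((n : ℝ)⁻¹ - η) * B.width ^ (Q - 1 - (n + 1) / 2 - η)) * (1 / 2) ^ j) *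
        volume (B.pieceLines K j a) := by
  have hwidth := B.width_pos
  have hheight := B.height_pos
  have hϱ0 : 0 < ϱ := by rw [hϱ]; positivity
  have hS_top : volume (B.stoppedPoints E β ϱ K j a) ≠ ∞ :=
    ne_top_of_le_ne_top hE_top (measure_mono fun z hz => hz.1)
  have hG_top : volume (B.pieceLines K j a) ≠ ∞ :=
    ne_top_of_le_ne_top B.volume_lines_ne_top (measure_mono inter_subset_left)
  have hweak := volume_real_mul_rpow_le_of_directionsSpread hn hη0 hη hQ
    (B.measurableSet_stoppedPoints hE β ϱ j a) (B.measurableSet_pieceLines j a) hS_top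
    (measurableSet_levelPiece B.measurableSet_base B.volume_base_lt.ne_top _ a) (fun l hl => hl.2)
    hK (by positivity) hheight
    (volume_levelPiece_le B.measurableSet_base B.volume_base_lt.ne_top (by positivity) a)
    (B.volume_pieceLines_le j a hK) (by positivity : 0 < ϱ ^ j * β) (fun z hz => hz.2.1)
    (hϱ ▸ B.directionsSpread_stoppedPoints E β hK j a)
  set Q' := Q - 1 - (n + 1) / 2 - η
  have hpow_j {x : ℝ} (hx : 0 < x) (y : ℝ) : (x ^ j) ^ y = (x ^ y) ^ j :=
    (Real.rpow_pow_comm hx.le y j).symm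
  rw [← ofReal_measureReal hS_top, ← ofReal_measureReal hG_top,
    ← ENNReal.ofReal_mul (by positivity), ← ENNReal.ofReal_mul (by positivity)]
  refine ENNReal.ofReal_le_ofReal ?_
  have hφ : volume.real (B.pieceLines K j a) ^ η ≤ volume.real B.lines ^ η := by
    gcongr
    exacts [B.volume_lines_ne_top, inter_subset_left]
  set e := volume.real (B.stoppedPoints E β ϱ K j a)
  set ψ := volume.real (B.pieceLines K j a)
  rw [Real.mul_rpow (by positivity) hβ.le, Real.div_rpow hwidth.le (by positivity), hpow_j hϱ0,
    hpow_j hK] at hweak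
  calc β ^ Q * e
      ≤ (ϱ ^ Q * K ^ Q') ^ j * (1 / 2) ^ j * (β ^ Q * e) := by
        rw [← mul_pow]
        exact le_mul_of_one_le_left (by positivity) (one_le_pow₀ (by linarith))
    _ = e * ((ϱ ^ Q) ^ j * β ^ Q) * ((K ^ Q') ^ j * (1 / 2) ^ j) := by ring
    _ ≤ 32 * n * K ^ ((n + 1) / 2 : ℝ) * (ψ * ψ ^ η * B.height ^ ((n : ℝ)⁻¹ - η) *
          (B.width ^ Q' / (K ^ Q') ^ j)) * ((K ^ Q') ^ j * (1 / 2) ^ j) := by gcongr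
    _ = 32 * n * K ^ ((n + 1) / 2 : ℝ) * (ψ * ψ ^ η * B.height ^ ((n : ℝ)⁻¹ - η) *
          B.width ^ Q') * (1 / 2) ^ j := by
        field_simp
    _ ≤ 32 * n * K ^ ((n + 1) / 2 : ℝ) * (ψ * volume.real B.lines ^ η *
          B.height ^ ((n : ℝ)⁻¹ - η) * B.width ^ Q') * (1 / 2) ^ j := by gcongr
    _ = _ := by ring

lemma rpow_mul_volume_le_of_le_directionMeasure (hn : n ≠ 0) {Q η ϱ β : ℝ} (hη0 : 0 ≤ η)
    (hη : η ≤ (n : ℝ)⁻¹) (hQ : 2 + (n : ℝ)⁻¹ ≤ Q) (hϱ : ϱ = 1 / (12 * (n + 1)))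
    (hβ0 : 0 < β) (hK : 0 < K) (hϱK : 1 < ϱ * K)
    (hgain : 2 ≤ ϱ ^ Q * K ^ (Q - 1 - (n + 1) / 2 - η)) {E : Set (Pt n)}
    (hE : MeasurableSet E) (hE_top : volume E ≠ ∞)
    (hβ : ∀ z ∈ E, ENNReal.ofReal β ≤ directionMeasure B.lines z) :
    ENNReal.ofReal (β ^ Q) * volume E ≤
      ENNReal.ofReal (64 * n * K ^ ((n + 1) / 2 : ℝ) * (volume.real B.lines ^ η *
        B.height ^ ((n : ℝ)⁻¹ - η) * B.width ^ (Q - 1 - (n + 1) / 2 - η)) *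
        volume.real B.lines) := by
  have hwidth := B.width_pos
  have hheight := B.height_pos
  have hϱ0 : 0 < ϱ := by rw [hϱ]; positivity
  set D := 32 * n * K ^ ((n + 1) / 2 : ℝ) * (volume.real B.lines ^ η *
    B.height ^ ((n : ℝ)⁻¹ - η) * B.width ^ (Q - 1 - (n + 1) / 2 - η)) with hD
  have : 0 ≤ D := by positivity
  calc ENNReal.ofReal (β ^ Q) * volume E
      ≤ ENNReal.ofReal (β ^ Q) * ∑' (j : ℕ) (a : ℤ), volume (B.stoppedPoints E β ϱ K j a) := by
        gcongr
        refine (measure_mono (B.subset_iUnion_stoppedPoints hβ0 hβ hϱ0 hK hϱK)).trans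
          ((measure_iUnion_le _).trans (ENNReal.tsum_le_tsum fun j => measure_iUnion_le _))
    _ = ∑' (j : ℕ) (a : ℤ),
          ENNReal.ofReal (β ^ Q) * volume (B.stoppedPoints E β ϱ K j a) := by
        simp only [ENNReal.tsum_mul_left]
    _ ≤ ∑' (j : ℕ) (a : ℤ), ENNReal.ofReal (D * (1 / 2) ^ j) * volume (B.pieceLines K j a) :=
        ENNReal.tsum_le_tsum fun j => ENNReal.tsum_le_tsum fun a =>
          B.volume_stoppedPoints_mul_rpow_le hn hη0 hη hQ hϱ hβ0 hK hgain hE hE_top j a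
    _ ≤ ∑' j : ℕ, ENNReal.ofReal (D * (1 / 2) ^ j) * volume B.lines := by
        simp only [ENNReal.tsum_mul_left]
        gcongr with j
        exact B.tsum_volume_pieceLines_le j
    _ = ENNReal.ofReal (64 * n * K ^ ((n + 1) / 2 : ℝ) * (volume.real B.lines ^ η *
          B.height ^ ((n : ℝ)⁻¹ - η) * B.width ^ (Q - 1 - (n + 1) / 2 - η)) *
          volume.real B.lines) := by
        rw [ENNReal.tsum_mul_right, ← ENNReal.ofReal_tsum_of_nonneg (fun j => by positivity)
          (summable_geometric_two.mul_left D), tsum_mul_left, tsum_geometric_two,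
          ← ofReal_measureReal B.volume_lines_ne_top, ← ENNReal.ofReal_mul (by positivity), hD]
        ring_nf

end WeakType

/-- The restricted weak type estimate. The lines are cut into pieces over short sets of directions
so that each point retains, at some generation, a spread out fraction of its lines; since `Q` is
above the critical exponent, the generations sum to a geometric series. -/
theorem exists_rpow_mul_volume_le (hn : 2 ≤ n) {Q η : ℝ} (hη0 : 0 ≤ η) (hη : η ≤ (n : ℝ)⁻¹)
    (hQ : (n + 3) / 2 + η < Q) : ∃ C > 0, ∀ (B : LineBlock n) {β : ℝ}, 0 < β →
      ENNReal.ofReal (β ^ Q) * volume {z | ENNReal.ofReal β ≤ directionMeasure B.lines z} ≤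
        ENNReal.ofReal (C * (volume.real B.lines ^ η * B.height ^ ((n : ℝ)⁻¹ - η) *
          B.width ^ (Q - 1 - (n + 1) / 2 - η)) * volume.real B.lines) := by
  have hn' : (2 : ℝ) ≤ n := by exact_mod_cast hn
  have hQ2 : 2 + (n : ℝ)⁻¹ ≤ Q := by
    have : (n : ℝ)⁻¹ ≤ (n - 1) / 2 := by
      rw [inv_le_iff_one_le_mul₀ (by positivity)]
      nlinarith
    linarith
  set ϱ : ℝ := 1 / (12 * (n + 1)) with hϱ
  have hϱ0 : 0 < ϱ := by positivity
  have hlim_mul : Tendsto (fun K : ℝ => ϱ * K) atTop atTop := tendsto_id.const_mul_atTop hϱ0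
  have hlim_rpow : Tendsto (fun K : ℝ => ϱ ^ Q * K ^ (Q - 1 - (n + 1) / 2 - η)) atTop atTop :=
    (tendsto_rpow_atTop (by linarith)).const_mul_atTop (by positivity)
  obtain ⟨K, hK, hϱK, hgain⟩ := ((eventually_gt_atTop 0).and
    ((hlim_mul.eventually_gt_atTop 1).and (hlim_rpow.eventually_ge_atTop 2))).exists
  refine ⟨64 * n * K ^ ((n + 1) / 2 : ℝ), by positivity, fun B β hβ => ?_⟩
  exact mul_measure_le_of_forall_subset
    (measurableSet_le measurable_const (measurable_directionMeasure B.measurableSet_lines))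
    fun E hES hE hE_top => B.rpow_mul_volume_le_of_le_directionMeasure (by omega) hη0 hη hQ2 hϱ hβ
      hK hϱK hgain hE hE_top hES

end LineBlock

/-! ### Strong bounds for normalized densities -/

section Interpolation

variable {α : Type*} [MeasurableSpace α] {μ : Measure α}

lemma setLIntegral_Ioc_zero_one_rpow {a : ℝ} (ha : 0 < a) :
    ∫⁻ t in Ioc (0 : ℝ) 1, ENNReal.ofReal (t ^ (a - 1)) = ENNReal.ofReal a⁻¹ := by
  have hint : IntervalIntegrable (fun t : ℝ => t ^ (a - 1)) volume 0 1 :=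
    intervalIntegral.intervalIntegrable_rpow' (by linarith)
  rw [← ofReal_integral_eq_lintegral_ofReal
    ((intervalIntegrable_iff_integrableOn_Ioc_of_le zero_le_one).1 hint)
    ((ae_restrict_mem measurableSet_Ioc).mono fun t ht => Real.rpow_nonneg ht.1.le _),
    ← intervalIntegral.integral_of_le zero_le_one, integral_rpow (Or.inl (by linarith))]
  simp [Real.zero_rpow ha.ne']

lemma lintegral_rpow_le_of_forall_rpow_mul_measure_le {g : α → ℝ≥0∞} (hg : Measurable g)
    (hg_one : ∀ z, g z ≤ 1) {Q₀ Q : ℝ} (hQ : 0 < Q) (hQ₀ : Q₀ < Q) {c : ℝ≥0∞}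
    (hc : ∀ l > 0, ENNReal.ofReal (l ^ Q₀) * μ {z | ENNReal.ofReal l ≤ g z} ≤ c) :
    ∫⁻ z, g z ^ Q ∂μ ≤ ENNReal.ofReal (Q / (Q - Q₀)) * c := by
  have hg_top (z : α) : g z ≠ ∞ := ne_top_of_le_ne_top one_ne_top (hg_one z)
  have hlevel (t : ℝ) (ht : t ∈ Ioi 0) : μ {z | t ≤ (g z).toReal} * ENNReal.ofReal (t ^ (Q - 1)) ≤
      (Ioc 0 1).indicator (fun t => c * ENNReal.ofReal (t ^ (Q - Q₀ - 1))) t := by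
    have ht0 : 0 < t := ht
    have hset : {z | t ≤ (g z).toReal} = {z | ENNReal.ofReal t ≤ g z} := by
      ext z
      exact (ENNReal.ofReal_le_iff_le_toReal (hg_top z)).symm
    by_cases ht1 : t ≤ 1
    · rw [indicator_of_mem (show t ∈ Ioc (0 : ℝ) 1 from ⟨ht0, ht1⟩), hset,
        show Q - 1 = Q₀ + (Q - Q₀ - 1) by ring, Real.rpow_add ht0,
        ENNReal.ofReal_mul (by positivity), ← mul_assoc, mul_comm (μ _)]
      gcongr
      exact hc t ht0
    · have hempty : {z | t ≤ (g z).toReal} = ∅ := eq_empty_of_forall_notMem fun z hz =>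
        ht1 (hz.trans (by simpa using ENNReal.toReal_mono one_ne_top (hg_one z)))
      simp [hempty]
  calc ∫⁻ z, g z ^ Q ∂μ
      = ∫⁻ z, ENNReal.ofReal ((g z).toReal ^ Q) ∂μ := by
        refine lintegral_congr fun z => ?_
        rw [ENNReal.toReal_rpow, ENNReal.ofReal_toReal (by finiteness [hg_top z])]
    _ = ENNReal.ofReal Q *
          ∫⁻ t in Ioi 0, μ {z | t ≤ (g z).toReal} * ENNReal.ofReal (t ^ (Q - 1)) :=
        lintegral_rpow_eq_lintegral_meas_le_mul μ (ae_of_all _ fun _ => ENNReal.toReal_nonneg)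
          hg.ennreal_toReal.aemeasurable hQ
    _ ≤ ENNReal.ofReal Q * ∫⁻ t in Ioi 0, (Ioc (0 : ℝ) 1).indicator
          (fun t => c * ENNReal.ofReal (t ^ (Q - Q₀ - 1))) t :=
        mul_le_mul_right (setLIntegral_mono' measurableSet_Ioi hlevel) _
    _ ≤ ENNReal.ofReal Q * (c * ENNReal.ofReal (Q - Q₀)⁻¹) := by
        gcongr
        refine (setLIntegral_le_lintegral _ _).trans_eq ?_
        rw [lintegral_indicator measurableSet_Ioc, lintegral_const_mul _ (by fun_prop),
          setLIntegral_Ioc_zero_one_rpow (sub_pos.2 hQ₀)]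
    _ = ENNReal.ofReal (Q / (Q - Q₀)) * c := by
        rw [div_eq_mul_inv, ENNReal.ofReal_mul hQ.le]
        ring

lemma lintegral_mul_mul_rpow_le {f₁ f₂ f₃ : α → ℝ≥0∞} (hf₁ : AEMeasurable f₁ μ)
    (hf₂ : AEMeasurable f₂ μ) (hf₃ : AEMeasurable f₃ μ) {x y z : ℝ} (hx : 0 ≤ x) (hy : 0 ≤ y)
    (hz : 0 ≤ z) (hxyz : x + y + z = 1) :
    ∫⁻ a, f₁ a ^ x * f₂ a ^ y * f₃ a ^ z ∂μ ≤
      (∫⁻ a, f₁ a ∂μ) ^ x * (∫⁻ a, f₂ a ∂μ) ^ y * (∫⁻ a, f₃ a ∂μ) ^ z := by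
  simpa [Fin.prod_univ_three] using
    ENNReal.lintegral_prod_norm_pow_le (μ := μ) Finset.univ (f := ![f₁, f₂, f₃]) (p := ![x, y, z])
      (by simp [Fin.forall_fin_succ, hf₁, hf₂, hf₃]) (by simpa [Fin.sum_univ_three] using hxyz)
      (by simp [Fin.forall_fin_succ, hx, hy, hz])

lemma lintegral_mul_rpow_le_interpolate {f g : α → ℝ≥0∞} (hf : Measurable f) (hg : Measurable g)
    (hf_one : ∀ a, f a ≤ 1) (hg_one : ∀ a, g a ≤ 1) {P Q A x y ε : ℝ} (hQ : 0 ≤ Q) (hA : 0 ≤ A)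
    (hx : 0 ≤ x) (hy : 0 ≤ y) (hε : 0 ≤ ε) (hsum : x + y + ε = 1) (hfx : Q * x + A * ε ≤ 1)
    (hgy : Q * y + A * ε ≤ P - 1) :
    ∫⁻ a, f a * g a ^ (P - 1) ∂μ ≤ (∫⁻ a, f a ^ Q ∂μ) ^ x * (∫⁻ a, g a ^ Q ∂μ) ^ y *
      (∫⁻ a, (f a * g a) ^ A ∂μ) ^ ε := by
  refine (lintegral_mono fun a => ?_).trans (lintegral_mul_mul_rpow_le (by fun_prop) (by fun_prop)
    (by fun_prop) hx hy hε hsum)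
  calc f a * g a ^ (P - 1)
      ≤ f a ^ (Q * x + A * ε) * g a ^ (Q * y + A * ε) := by
        gcongr ?_ * ?_
        · simpa using ENNReal.rpow_le_rpow_of_exponent_ge (hf_one a) hfx
        · exact ENNReal.rpow_le_rpow_of_exponent_ge (hg_one a) hgy
    _ = (f a ^ Q) ^ x * (g a ^ Q) ^ y * ((f a * g a) ^ A) ^ ε := by
        rw [ENNReal.mul_rpow_of_nonneg _ _ hA, ENNReal.mul_rpow_of_nonneg _ _ hε,
          ENNReal.rpow_add_of_nonneg _ _ (by positivity) (by positivity),
          ENNReal.rpow_add_of_nonneg _ _ (by positivity) (by positivity)]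
        simp only [ENNReal.rpow_mul]
        ring

end Interpolation

namespace LineBlock

variable {n : ℕ} (B : LineBlock n)

/-- The fraction of the directions of the block that are realized by its lines through `z`. -/
def density (z : Pt n) : ℝ≥0∞ := directionMeasure B.lines z / ENNReal.ofReal B.width

/-- The normalizing volume: `scale * fill` bounds the integrals of powers of the density. -/
def scale : ℝ := B.width ^ (-((n : ℝ) + 1) / 2) * B.height ^ (((n : ℝ) + 1) / n)

/-- The proportion of the measure available to the block that is occupied by its lines. -/
def fill : ℝ := volume.real B.lines / (B.width * B.height)

lemma measurable_density : Measurable B.density :=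
  (measurable_directionMeasure B.measurableSet_lines).div_const _

lemma ofReal_width_ne_zero : ENNReal.ofReal B.width ≠ 0 := by simpa using B.width_pos

lemma density_le_one (z : Pt n) : B.density z ≤ 1 := by
  rw [density, ENNReal.div_le_iff B.ofReal_width_ne_zero ENNReal.ofReal_ne_top, one_mul]
  exact (directionMeasure_le B.fst_mem_base z).trans B.volume_base_lt.le

lemma ofReal_le_density_iff {l : ℝ} (hl : 0 ≤ l) {z : Pt n} :
    ENNReal.ofReal l ≤ B.density z ↔
      ENNReal.ofReal (l * B.width) ≤ directionMeasure B.lines z := by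
  rw [density, ENNReal.le_div_iff_mul_le (Or.inl B.ofReal_width_ne_zero)
    (Or.inl ENNReal.ofReal_ne_top), ENNReal.ofReal_mul hl]

lemma scale_pos : 0 < B.scale :=
  mul_pos (Real.rpow_pos_of_pos B.width_pos _) (Real.rpow_pos_of_pos B.height_pos _)

lemma fill_nonneg : 0 ≤ B.fill :=
  div_nonneg measureReal_nonneg (mul_pos B.width_pos B.height_pos).le

lemma volume_real_lines_le : volume.real B.lines ≤ B.height * B.width :=
  ENNReal.toReal_le_of_le_ofReal (mul_pos B.height_pos B.width_pos).le B.volume_lines_le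

lemma fill_le_one : B.fill ≤ 1 := by
  rw [fill, mul_comm]
  exact div_le_one_of_le₀ B.volume_real_lines_le (mul_pos B.height_pos B.width_pos).le

lemma fill_mul : B.fill * (B.width * B.height) = volume.real B.lines :=
  div_mul_cancel₀ _ (mul_pos B.width_pos B.height_pos).ne'

lemma volume_real_lines_normalize (hn : n ≠ 0) (Q η : ℝ) (hη : 0 ≤ η) :
    volume.real B.lines ^ η * B.height ^ ((n : ℝ)⁻¹ - η) * B.width ^ (Q - 1 - (n + 1) / 2 - η) *
      volume.real B.lines = B.scale * B.fill ^ (1 + η) * B.width ^ Q := by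
  have hwidth := B.width_pos
  have hheight := B.height_pos
  have hfill := B.fill_nonneg
  have hw : B.width ^ η * B.width * B.width ^ (Q - 1 - ((n : ℝ) + 1) / 2 - η) =
      B.width ^ (-((n : ℝ) + 1) / 2) * B.width ^ Q := by
    rw [← Real.rpow_add_one hwidth.ne', ← Real.rpow_add hwidth, ← Real.rpow_add hwidth]
    ring_nf
  have hh : B.height ^ η * B.height * B.height ^ ((n : ℝ)⁻¹ - η) =
      B.height ^ (((n : ℝ) + 1) / n) := by
    rw [← Real.rpow_add_one hheight.ne', ← Real.rpow_add hheight]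
    congr 1
    field_simp
    ring
  rw [← B.fill_mul, Real.mul_rpow hfill (by positivity), Real.mul_rpow hwidth.le hheight.le,
    add_comm 1 η, Real.rpow_add_of_nonneg hfill hη zero_le_one, Real.rpow_one, scale, ← hh]
  linear_combination B.fill ^ η * B.fill * (B.height ^ η * B.height * B.height ^ ((n : ℝ)⁻¹ - η)) *
    hw

lemma exists_lintegral_density_rpow_le (hn : 2 ≤ n) {Q η : ℝ} (hη0 : 0 ≤ η)
    (hη : η ≤ (n : ℝ)⁻¹) (hQ : (n + 3) / 2 + η < Q) : ∃ C > 0, ∀ B : LineBlock n,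
      ∫⁻ z, B.density z ^ Q ≤ ENNReal.ofReal (C * (B.scale * B.fill ^ (1 + η))) := by
  obtain ⟨Q₀, hQ₀, hQ₀Q⟩ := exists_between hQ
  obtain ⟨C, hC, hweak⟩ := exists_rpow_mul_volume_le hn hη0 hη hQ₀
  have hQ_pos : 0 < Q := lt_trans (by positivity) hQ
  refine ⟨Q / (Q - Q₀) * C, mul_pos (div_pos hQ_pos (sub_pos.2 hQ₀Q)) hC, fun B => ?_⟩
  have hwidth := B.width_pos
  rw [mul_assoc, ENNReal.ofReal_mul (div_pos hQ_pos (sub_pos.2 hQ₀Q)).le]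
  refine lintegral_rpow_le_of_forall_rpow_mul_measure_le B.measurable_density B.density_le_one
    hQ_pos hQ₀Q fun l hl => ?_
  have h := hweak B (mul_pos hl hwidth)
  simp_rw [← B.ofReal_le_density_iff hl.le] at h
  have hwQ : ENNReal.ofReal (B.width ^ Q₀) ≠ 0 := by
    simpa using Real.rpow_pos_of_pos hwidth Q₀
  rw [mul_assoc, B.volume_real_lines_normalize (by omega) Q₀ η hη0, ← mul_assoc,
    ENNReal.ofReal_mul' (by positivity), Real.mul_rpow hl.le hwidth.le,
    ENNReal.ofReal_mul (by positivity), mul_right_comm] at h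
  exact (ENNReal.mul_le_mul_iff_left hwQ ENNReal.ofReal_ne_top).1 h

end LineBlock

/-! ### Interaction of two blocks -/

lemma directionsSpread_of_le_directionMeasure {n : ℕ} {E F : Set (Pt n)} {β : ℝ}
    (hβ : ∀ z ∈ E, ENNReal.ofReal β ≤ directionMeasure F z) :
    DirectionsSpread (β / (8 * (n + 1))) E F := by
  intro z hz u
  have hfour : 4 * ((n : ℝ≥0∞) + 1) = ENNReal.ofReal (4 * (n + 1)) := by
    rw [ENNReal.ofReal_mul (by norm_num), ENNReal.ofReal_add (by positivity) zero_le_one]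
    simp
  calc volume ({t | lineThrough z t ∈ F} ∩ Metric.ball u (β / (8 * (n + 1))))
      ≤ ENNReal.ofReal (2 * (β / (8 * (n + 1)))) :=
        (measure_mono inter_subset_right).trans_eq (Real.volume_ball _ _)
    _ = ENNReal.ofReal β / (4 * (n + 1)) := by
        rw [hfour, ← ENNReal.ofReal_div_of_pos (by positivity)]
        congr 1
        field_simp
        ring
    _ ≤ directionMeasure F z / (4 * (n + 1)) := by gcongr; exact hβ z hz

namespace LineBlock

variable {n : ℕ} (B B' : LineBlock n)

lemma rpow_mul_volume_real_le_of_le_density_mul (hn : n ≠ 0) {l : ℝ} (hl : 0 < l)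
    {E : Set (Pt n)} (hE : MeasurableSet E) (hE_top : volume E ≠ ∞)
    (hEl : ∀ z ∈ E, ENNReal.ofReal l ≤ B.density z * B'.density z) :
    l ^ ((n + 1) / 2 + 2 + (n : ℝ)⁻¹) * volume.real E ≤
      32 * n * (8 * (n + 1)) ^ ((n + 1) / 2 : ℝ) *
        (B.height ^ (n : ℝ)⁻¹ * B'.height * B'.width ^ (-((n + 1) / 2) : ℝ)) := by
  have hwidth := B.width_pos
  have hheight := B.height_pos
  have hwidth' := B'.width_pos
  have hheight' := B'.height_pos
  have hβ' (z) (hz : z ∈ E) : ENNReal.ofReal (l * B.width) ≤ directionMeasure B.lines z :=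
    (B.ofReal_le_density_iff hl.le).1 <|
      (hEl z hz).trans (mul_le_of_le_one_right' (B'.density_le_one z))
  have hβ (z) (hz : z ∈ E) : ENNReal.ofReal (l * B'.width) ≤ directionMeasure B'.lines z :=
    (B'.ofReal_le_density_iff hl.le).1 <|
      (hEl z hz).trans (mul_le_of_le_one_left' (B.density_le_one z))
  have hroot := rpow_mul_volume_real_le hn (by positivity) hE B'.measurableSet_lines
    B.measurableSet_lines hE_top B'.volume_lines_ne_top B.volume_lines_ne_top B'.measurableSet_base
    B'.fst_mem_base hwidth' B'.volume_base_lt.le (mul_pos hl hwidth') (mul_pos hl hwidth) hβ hβ'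
    (directionsSpread_of_le_directionMeasure hβ)
  rw [Real.div_rpow (by positivity) (by positivity), div_mul_eq_mul_div,
    div_le_iff₀ (by positivity)] at hroot
  refine le_of_mul_le_mul_right ?_ (by positivity : 0 < B'.width ^ ((n + 1) / 2 : ℝ) *
    B'.width ^ 2 * B.width ^ (n : ℝ)⁻¹)
  calc l ^ ((n + 1) / 2 + 2 + (n : ℝ)⁻¹) * volume.real E * (B'.width ^ ((n + 1) / 2 : ℝ) *
        B'.width ^ 2 * B.width ^ (n : ℝ)⁻¹)
      = (l * B'.width) ^ ((n + 1) / 2 : ℝ) * (volume.real E * (l * B'.width) ^ 2 *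
          (l * B.width) ^ (n : ℝ)⁻¹) := by
        rw [Real.rpow_add hl, Real.rpow_add hl, Real.rpow_two, Real.mul_rpow hl.le hwidth'.le,
          Real.mul_rpow hl.le hwidth.le]
        ring
    _ ≤ 32 * n * (volume.real B.lines ^ (n : ℝ)⁻¹ * volume.real B'.lines * B'.width) *
          (8 * (n + 1)) ^ ((n + 1) / 2 : ℝ) := hroot
    _ ≤ 32 * n * ((B.height * B.width) ^ (n : ℝ)⁻¹ * (B'.height * B'.width) * B'.width) *
          (8 * (n + 1)) ^ ((n + 1) / 2 : ℝ) := by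
        gcongr
        exacts [B.volume_real_lines_le, B'.volume_real_lines_le]
    _ = _ := by
        rw [Real.mul_rpow hheight.le hwidth.le, Real.rpow_neg hwidth'.le]
        field_simp

lemma scale_rpow_mul_scale_rpow (hn : n ≠ 0) :
    B.scale ^ ((n : ℝ) + 1)⁻¹ * B'.scale ^ (n / ((n : ℝ) + 1)) *
      (B.width / B'.width) ^ (1 / 2 : ℝ) =
        B.height ^ (n : ℝ)⁻¹ * B'.height * B'.width ^ (-((n + 1) / 2) : ℝ) := by
  have hwidth := B.width_pos
  have hheight := B.height_pos
  have hwidth' := B'.width_pos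
  have hheight' := B'.height_pos
  simp only [scale, Real.rpow_def_of_pos hwidth, Real.rpow_def_of_pos hheight,
    Real.rpow_def_of_pos hwidth', Real.rpow_def_of_pos hheight',
    Real.rpow_def_of_pos (div_pos hwidth hwidth'), Real.log_div hwidth.ne' hwidth'.ne',
    ← Real.exp_add, ← Real.exp_mul]
  rw [← Real.exp_log hheight', ← Real.exp_add, ← Real.exp_add, Real.log_exp]
  congr 1
  field_simp
  ring

lemma exists_lintegral_density_mul_rpow_le (hn : n ≠ 0) : ∃ C > 0, ∀ B B' : LineBlock n,
    ∫⁻ z, (B.density z * B'.density z) ^ ((n : ℝ) + 4) ≤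
      ENNReal.ofReal (C * (B.scale ^ ((n : ℝ) + 1)⁻¹ * B'.scale ^ (n / ((n : ℝ) + 1)) *
        (B.width / B'.width) ^ (1 / 2 : ℝ))) := by
  have hn1 : (1 : ℝ) ≤ n := by exact_mod_cast Nat.one_le_iff_ne_zero.2 hn
  have hQ₀ : ((n + 1) / 2 + 2 + (n : ℝ)⁻¹) < n + 4 := by
    linarith [inv_le_one_of_one_le₀ hn1]
  have hratio : 0 < ((n : ℝ) + 4) / (n + 4 - ((n + 1) / 2 + 2 + (n : ℝ)⁻¹)) :=
    div_pos (by positivity) (sub_pos.2 hQ₀)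
  refine ⟨((n : ℝ) + 4) / (n + 4 - ((n + 1) / 2 + 2 + (n : ℝ)⁻¹)) *
    (32 * n * (8 * (n + 1)) ^ ((n + 1) / 2 : ℝ)), by positivity, fun B B' => ?_⟩
  rw [B.scale_rpow_mul_scale_rpow B' hn, mul_assoc, ENNReal.ofReal_mul hratio.le]
  have hmeas : Measurable fun z => B.density z * B'.density z :=
    B.measurable_density.mul B'.measurable_density
  refine lintegral_rpow_le_of_forall_rpow_mul_measure_le hmeas
    (fun z => mul_le_one' (B.density_le_one z) (B'.density_le_one z)) (by positivity) hQ₀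
    fun l hl => mul_measure_le_of_forall_subset (measurableSet_le measurable_const hmeas)
      fun E hES hE hE_top => ?_
  rw [← ofReal_measureReal hE_top, ← ENNReal.ofReal_mul (by positivity)]
  exact ENNReal.ofReal_le_ofReal
    (B.rpow_mul_volume_real_le_of_le_density_mul B' hn hl hE hE_top hES)

/-- The distance between the shapes of two blocks, which governs their almost orthogonality. -/
def shapeDist : ℝ :=
  |Real.log B.width - Real.log B'.width| + |Real.log B.scale - Real.log B'.scale|

lemma exists_weight_shift {x y ε e e' : ℝ} (hε : 0 ≤ ε) (he : 0 ≤ e) (he' : 0 ≤ e')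
    (hee : e + e' = 1) (hxy : x + y = 1) :
    ∃ x' y', |x' - x| ≤ 2 * ε ∧ |y' - y| ≤ 2 * ε ∧ x' + y' + ε = 1 ∧
      B.scale ^ x' * B'.scale ^ y' * (B.scale ^ e * B'.scale ^ e' *
        Real.exp (-(1 / 2) * |Real.log B.width - Real.log B'.width|)) ^ ε ≤
      B.scale ^ x * B'.scale ^ y * Real.exp (-(ε / 2) * B.shapeDist B') := by
  have hscale := B.scale_pos
  have hscale' := B'.scale_pos
  obtain ⟨σ, hσ, hσ_mul⟩ : ∃ σ : ℝ, |σ| ≤ 1 ∧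
      σ * (Real.log B.scale - Real.log B'.scale) = -|Real.log B.scale - Real.log B'.scale| := by
    rcases abs_choice (Real.log B.scale - Real.log B'.scale) with h | h
    · exact ⟨-1, by simp, by rw [h]; ring⟩
    · exact ⟨1, by simp, by rw [h]; ring⟩
  obtain ⟨hσ_low, hσ_up⟩ := abs_le.1 hσ
  refine ⟨x + ε * (σ - e), y - ε * (σ + e'), ?_, ?_, by linear_combination hxy - ε * hee, ?_⟩
  · rw [abs_le]
    constructor <;> nlinarith
  · rw [abs_le]
    constructor <;> nlinarith
  · simp only [Real.rpow_def_of_pos hscale, Real.rpow_def_of_pos hscale', ← Real.exp_add,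
      ← Real.exp_mul, shapeDist]
    rw [Real.exp_le_exp]
    have hgain : 0 ≤ ε * |Real.log B.scale - Real.log B'.scale| := by positivity
    linear_combination (1 / 2) * hgain + ε * hσ_mul

lemma scale_fill_rpow_le {C η x x' : ℝ} (hC : 0 < C) (hx : 0 ≤ x) (hxx' : x ≤ (1 + η) * x') :
    (C * (B.scale * B.fill ^ (1 + η))) ^ x' ≤ C ^ x' * B.scale ^ x' * B.fill ^ x := by
  have hscale := B.scale_pos
  have hfill := B.fill_nonneg
  rw [Real.mul_rpow hC.le (by positivity), Real.mul_rpow hscale.le (by positivity),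
    ← Real.rpow_mul hfill, mul_assoc]
  have hle := Real.rpow_le_rpow_of_exponent_ge' hfill B.fill_le_one hx hxx'
  exact mul_le_mul_of_nonneg_left (mul_le_mul_of_nonneg_left hle (by positivity)) (by positivity)

lemma rpow_scale_fill_mul_rpow_le {η C p p' x y ε T : ℝ} (hC : 0 < C) (hT : 0 ≤ T) (hp : 0 ≤ p)
    (hp' : 0 ≤ p') (hpx : p ≤ (1 + η) * x) (hpy : p' ≤ (1 + η) * y)
    (hsum : x + y + ε = 1)
    (hgain : B.scale ^ x * B'.scale ^ y * T ^ ε ≤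
      B.scale ^ p * B'.scale ^ p' * Real.exp (-(ε / 2) * B.shapeDist B')) :
    (C * (B.scale * B.fill ^ (1 + η))) ^ x * (C * (B'.scale * B'.fill ^ (1 + η))) ^ y *
        (C * T) ^ ε ≤
      C * ((B.scale * B.fill) ^ p * (B'.scale * B'.fill) ^ p' *
        Real.exp (-(ε / 2) * B.shapeDist B')) := by
  have hscale := B.scale_pos
  have hscale' := B'.scale_pos
  have hfill := B.fill_nonneg
  have hfill' := B'.fill_nonneg
  calc (C * (B.scale * B.fill ^ (1 + η))) ^ x * (C * (B'.scale * B'.fill ^ (1 + η))) ^ y *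
        (C * T) ^ ε
      ≤ (C ^ x * B.scale ^ x * B.fill ^ p) *
          (C ^ y * B'.scale ^ y * B'.fill ^ p') * (C * T) ^ ε := by
        gcongr
        exacts [B.scale_fill_rpow_le hC hp hpx, B'.scale_fill_rpow_le hC hp' hpy]
    _ = C * (B.scale ^ x * B'.scale ^ y * T ^ ε) * (B.fill ^ p * B'.fill ^ p') := by
        have hCsum : C ^ x * C ^ y * C ^ ε = C := by
          rw [← Real.rpow_add hC, ← Real.rpow_add hC, hsum, Real.rpow_one]
        rw [Real.mul_rpow hC.le hT]
        linear_combination (B.scale ^ x * B'.scale ^ y * T ^ ε * B.fill ^ p *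
          B'.fill ^ p') * hCsum
    _ ≤ C * (B.scale ^ p * B'.scale ^ p' *
          Real.exp (-(ε / 2) * B.shapeDist B')) * (B.fill ^ p * B'.fill ^ p') := by
        gcongr
    _ = _ := by
        rw [Real.mul_rpow hscale.le hfill, Real.mul_rpow hscale'.le hfill']
        ring

lemma lintegral_density_mul_rpow_le_of_strong_bounds {P Q η A C ε e e' : ℝ} (hP : 1 < P)
    (hQ : 0 ≤ Q) (hη : 0 ≤ η) (hA : 0 ≤ A) (hC : 0 < C) (hε : 0 ≤ ε)
    (hlow : (1 + η) * (2 * ε) ≤ η * P⁻¹) (hlow' : (1 + η) * (2 * ε) ≤ η * (1 - P⁻¹))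
    (hup : (2 * Q + A) * ε ≤ 1 - Q * P⁻¹) (hup' : (2 * Q + A) * ε ≤ P - 1 - Q * (1 - P⁻¹))
    (he : 0 ≤ e) (he' : 0 ≤ e') (hee : e + e' = 1)
    (hB : ∫⁻ z, B.density z ^ Q ≤ ENNReal.ofReal (C * (B.scale * B.fill ^ (1 + η))))
    (hB' : ∫⁻ z, B'.density z ^ Q ≤ ENNReal.ofReal (C * (B'.scale * B'.fill ^ (1 + η))))
    (hBB' : ∫⁻ z, (B.density z * B'.density z) ^ A ≤ ENNReal.ofReal (C * (B.scale ^ e *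
      B'.scale ^ e' * Real.exp (-(1 / 2) * |Real.log B.width - Real.log B'.width|)))) :
    ∫⁻ z, B.density z * B'.density z ^ (P - 1) ≤
      ENNReal.ofReal (C * ((B.scale * B.fill) ^ P⁻¹ * (B'.scale * B'.fill) ^ (1 - P⁻¹) *
        Real.exp (-(ε / 2) * B.shapeDist B'))) := by
  have hscale := B.scale_pos
  have hscale' := B'.scale_pos
  have hfill := B.fill_nonneg
  have hfill' := B'.fill_nonneg
  have hP0 : 0 ≤ P⁻¹ := by positivity
  have hP1 : 0 ≤ 1 - P⁻¹ := sub_nonneg.2 (inv_le_one_of_one_le₀ hP.le)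
  obtain ⟨x, y, hx, hy, hsum, hgain⟩ :=
    B.exists_weight_shift B' hε he he' hee (add_sub_cancel P⁻¹ 1)
  obtain ⟨hx_low, hx_up⟩ := abs_le.1 hx
  obtain ⟨hy_low, hy_up⟩ := abs_le.1 hy
  have hPx : P⁻¹ ≤ (1 + η) * x := by linear_combination (1 + η) * hx_low + hlow
  have hPy : 1 - P⁻¹ ≤ (1 + η) * y := by linear_combination (1 + η) * hy_low + hlow'
  have hx0 : 0 ≤ x := nonneg_of_mul_nonneg_right (hP0.trans hPx) (by positivity)
  have hy0 : 0 ≤ y := nonneg_of_mul_nonneg_right (hP1.trans hPy) (by positivity)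
  refine (lintegral_mul_rpow_le_interpolate B.measurable_density B'.measurable_density
    B.density_le_one B'.density_le_one hQ hA hx0 hy0 hε hsum
    (by linear_combination Q * hx_up + hup) (by linear_combination Q * hy_up + hup')).trans ?_
  set T := B.scale ^ e * B'.scale ^ e' *
    Real.exp (-(1 / 2) * |Real.log B.width - Real.log B'.width|)
  calc (∫⁻ z, B.density z ^ Q) ^ x * (∫⁻ z, B'.density z ^ Q) ^ y *
        (∫⁻ z, (B.density z * B'.density z) ^ A) ^ ε
      ≤ ENNReal.ofReal (C * (B.scale * B.fill ^ (1 + η))) ^ x *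
          ENNReal.ofReal (C * (B'.scale * B'.fill ^ (1 + η))) ^ y * ENNReal.ofReal (C * T) ^ ε := by
        gcongr
    _ = ENNReal.ofReal ((C * (B.scale * B.fill ^ (1 + η))) ^ x *
          (C * (B'.scale * B'.fill ^ (1 + η))) ^ y * (C * T) ^ ε) := by
        rw [ENNReal.ofReal_rpow_of_nonneg (by positivity) hx0,
          ENNReal.ofReal_rpow_of_nonneg (by positivity) hy0,
          ENNReal.ofReal_rpow_of_nonneg (by positivity) hε, ← ENNReal.ofReal_mul (by positivity),
          ← ENNReal.ofReal_mul (by positivity)]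
    _ ≤ _ := ENNReal.ofReal_le_ofReal <|
        B.rpow_scale_fill_mul_rpow_le B' hC (by positivity) hP0 hP1 hPx hPy hsum hgain

lemma div_rpow_half_eq_exp {a b : ℝ} (ha : 0 < a) (hab : a ≤ b) :
    (a / b) ^ (1 / 2 : ℝ) = Real.exp (-(1 / 2) * |Real.log a - Real.log b|) := by
  have hb := ha.trans_le hab
  rw [Real.rpow_def_of_pos (by positivity), Real.log_div ha.ne' hb.ne',
    abs_of_nonpos (sub_nonpos.2 (Real.log_le_log ha hab))]
  ring_nf

lemma exists_lintegral_density_mul_rpow_le_exp (hn : n ≠ 0) : ∃ C > 0, ∀ B B' : LineBlock n,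
    ∃ e e' : ℝ, 0 ≤ e ∧ 0 ≤ e' ∧ e + e' = 1 ∧
      ∫⁻ z, (B.density z * B'.density z) ^ ((n : ℝ) + 4) ≤ ENNReal.ofReal (C * (B.scale ^ e *
        B'.scale ^ e' * Real.exp (-(1 / 2) * |Real.log B.width - Real.log B'.width|))) := by
  obtain ⟨C, hC, h⟩ := exists_lintegral_density_mul_rpow_le hn
  have hsum : ((n : ℝ) + 1)⁻¹ + n / (n + 1) = 1 := by field_simp; ring
  refine ⟨C, hC, fun B B' => ?_⟩
  rcases le_total B.width B'.width with hle | hle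
  · refine ⟨((n : ℝ) + 1)⁻¹, n / (n + 1), by positivity, by positivity, hsum, ?_⟩
    rw [← div_rpow_half_eq_exp B.width_pos hle]
    exact h B B'
  · refine ⟨n / (n + 1), ((n : ℝ) + 1)⁻¹, by positivity, by positivity, by rwa [add_comm], ?_⟩
    rw [abs_sub_comm, ← div_rpow_half_eq_exp B'.width_pos hle, mul_comm (B.scale ^ _)]
    simpa only [mul_comm] using h B' B

lemma eventually_nhdsGT_zero_mul_le {a : ℝ} (ha : 0 < a) (b : ℝ) :
    ∀ᶠ ε in nhdsWithin (0 : ℝ) (Ioi 0), b * ε ≤ a := by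
  have hlim : Tendsto (fun ε : ℝ => b * ε) (nhds 0) (nhds 0) :=
    Continuous.tendsto' (by fun_prop) _ _ (mul_zero b)
  exact (hlim.mono_left nhdsWithin_le_nhds).eventually_le_const ha

/-- Almost orthogonality: Hölder's inequality with the strong bounds alone would give the estimate
without the exponential; the bound for the product of the densities is mixed in with weight `ε`. -/
theorem exists_lintegral_density_mul_rpow_le_shapeDist (hn : 2 ≤ n) {P : ℝ}
    (hP : (n + 3) / 2 < P) : ∃ ε > 0, ∃ C > 0, ∀ B B' : LineBlock n,
      ∫⁻ z, B.density z * B'.density z ^ (P - 1) ≤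
        ENNReal.ofReal (C * ((B.scale * B.fill) ^ P⁻¹ * (B'.scale * B'.fill) ^ (1 - P⁻¹) *
          Real.exp (-ε * B.shapeDist B'))) := by
  have hn2 : (2 : ℝ) ≤ n := by exact_mod_cast hn
  have hP1 : 1 < P := by linarith
  have hP0 : 0 < P := by linarith
  obtain ⟨η, hη0, hη⟩ : ∃ η > 0, η < min (n : ℝ)⁻¹ (P - (n + 3) / 2) :=
    exists_between (lt_min (by positivity) (sub_pos.2 hP))
  obtain ⟨hηn, hηP⟩ := lt_min_iff.1 hη
  obtain ⟨Q, hQ, hQP⟩ := exists_between (lt_sub_iff_add_lt'.1 hηP)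
  have hQ0 : 0 < Q := lt_trans (by positivity) hQ
  obtain ⟨C₁, hC₁, hstrong⟩ := exists_lintegral_density_rpow_le hn hη0.le hηn.le hQ
  obtain ⟨C₂, _, hprod⟩ := exists_lintegral_density_mul_rpow_le_exp (n := n) (by omega)
  have hPinv : 0 < P⁻¹ := inv_pos.2 hP0
  have hPinv' : 0 < 1 - P⁻¹ := sub_pos.2 (inv_lt_one_of_one_lt₀ hP1)
  have hQinv : 0 < 1 - Q * P⁻¹ := by rwa [sub_pos, ← div_eq_mul_inv, div_lt_one hP0]
  have hQinv' : 0 < P - 1 - Q * (1 - P⁻¹) := by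
    rw [show P - 1 - Q * (1 - P⁻¹) = (1 - P⁻¹) * (P - Q) by field_simp]
    exact mul_pos hPinv' (sub_pos.2 hQP)
  obtain ⟨ε, hε, hlow, hlow', hup, hup'⟩ := (eventually_mem_nhdsWithin.and <|
    (eventually_nhdsGT_zero_mul_le (mul_pos hη0 hPinv) ((1 + η) * 2)).and <|
    (eventually_nhdsGT_zero_mul_le (mul_pos hη0 hPinv') ((1 + η) * 2)).and <|
    (eventually_nhdsGT_zero_mul_le hQinv (2 * Q + (n + 4))).and
    (eventually_nhdsGT_zero_mul_le hQinv' (2 * Q + (n + 4)))).exists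
  refine ⟨ε / 2, half_pos hε, max C₁ C₂, lt_max_of_lt_left hC₁, fun B B' => ?_⟩
  have hbound (B : LineBlock n) : ∫⁻ z, B.density z ^ Q ≤
      ENNReal.ofReal (max C₁ C₂ * (B.scale * B.fill ^ (1 + η))) := by
    have hscale := B.scale_pos
    have hfill := B.fill_nonneg
    exact (hstrong B).trans (by gcongr; exact le_max_left _ _)
  obtain ⟨e, e', he, he', hee, hBB'⟩ := hprod B B'
  have hscale := B.scale_pos
  have hscale' := B'.scale_pos
  exact B.lintegral_density_mul_rpow_le_of_strong_bounds B' hP1 hQ0.le hη0.le (by positivity)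
    (lt_max_of_lt_left hC₁) (le_of_lt hε) (by rwa [← mul_assoc]) (by rwa [← mul_assoc]) hup hup'
    he he' hee (hbound B) (hbound B') (hBB'.trans (by gcongr; exact le_max_right _ _))

end LineBlock

/-! ### A Schur test for powers of sums -/

section Schur

lemma mul_rpow_sub_one (a : ℝ≥0∞) {P : ℝ} (hP : 1 ≤ P) : a * a ^ (P - 1) = a ^ P := by
  nth_rw 1 [← ENNReal.rpow_one a]
  rw [← ENNReal.rpow_add_of_nonneg _ _ zero_le_one (sub_nonneg.2 hP), add_sub_cancel]

lemma mul_rpow_sub_one_le_add (a b : ℝ≥0∞) {P : ℝ} (hP : 1 ≤ P) :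
    a * b ^ (P - 1) ≤ a ^ P + b ^ P := by
  rcases le_total a b with hab | hab
  · calc a * b ^ (P - 1) ≤ b * b ^ (P - 1) := by gcongr
      _ = b ^ P := mul_rpow_sub_one b hP
      _ ≤ a ^ P + b ^ P := le_add_self
  · calc a * b ^ (P - 1) ≤ a * a ^ (P - 1) := by gcongr
      _ = a ^ P := mul_rpow_sub_one a hP
      _ ≤ a ^ P + b ^ P := le_self_add

variable {ι : Type*} {I : Finset ι} {P : ℝ}

lemma rpow_sum_le_weighted (hP : 2 ≤ P) {R : ι → ℝ≥0∞} (hR : ∀ i, R i ≠ 0)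
    (hR_top : ∀ i, R i ≠ ∞) (X : ι → ℝ≥0∞) :
    (∑ i ∈ I, X i) ^ (P - 1) ≤
      (∑ i ∈ I, R i) ^ (P - 2) * ∑ i ∈ I, R i ^ (2 - P) * X i ^ (P - 1) := by
  have hP1 : 0 < P - 1 := by linarith
  have hterm (i : ι) : R i * ((R i)⁻¹ * X i) ^ (P - 1) = R i ^ (2 - P) * X i ^ (P - 1) := by
    rw [ENNReal.mul_rpow_of_nonneg _ _ hP1.le, ← mul_assoc, ENNReal.inv_rpow, ← ENNReal.rpow_neg]
    nth_rw 1 [← ENNReal.rpow_one (R i)]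
    rw [← ENNReal.rpow_add _ _ (hR i) (hR_top i)]
    ring_nf
  have h := ENNReal.rpow_le_rpow (ENNReal.inner_le_weight_mul_Lp_of_nonneg I
    (by linarith : 1 ≤ P - 1) R fun i => (R i)⁻¹ * X i) hP1.le
  simp_rw [ENNReal.mul_inv_cancel_left (hR _) (hR_top _), hterm] at h
  rwa [ENNReal.mul_rpow_of_nonneg _ _ hP1.le, ← ENNReal.rpow_mul, ← ENNReal.rpow_mul,
    inv_mul_cancel₀ hP1.ne', ENNReal.rpow_one,
    show (1 - (P - 1)⁻¹) * (P - 1) = P - 2 by field_simp; ring] at h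

lemma rpow_sum_le_sum_sum (hP : 2 ≤ P) {R : ι → ι → ℝ≥0∞} (hR : ∀ i j, R i j ≠ 0)
    (hR_top : ∀ i j, R i j ≠ ∞) {S : ℝ≥0∞} (hS : ∀ i, ∑ j ∈ I, R i j ≤ S) (X : ι → ℝ≥0∞) :
    (∑ i ∈ I, X i) ^ P ≤
      S ^ (P - 2) * ∑ i ∈ I, ∑ j ∈ I, R i j ^ (2 - P) * (X i * X j ^ (P - 1)) := by
  calc (∑ i ∈ I, X i) ^ P
      = ∑ i ∈ I, X i * (∑ j ∈ I, X j) ^ (P - 1) := by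
        rw [← Finset.sum_mul, mul_rpow_sub_one _ (by linarith)]
    _ ≤ ∑ i ∈ I, X i * (S ^ (P - 2) * ∑ j ∈ I, R i j ^ (2 - P) * X j ^ (P - 1)) := by
        gcongr with i _
        refine (rpow_sum_le_weighted hP (hR i) (hR_top i) X).trans ?_
        gcongr
        exact hS i
    _ = S ^ (P - 2) * ∑ i ∈ I, ∑ j ∈ I, R i j ^ (2 - P) * (X i * X j ^ (P - 1)) := by
        simp only [Finset.mul_sum]
        exact Finset.sum_congr rfl fun i _ => Finset.sum_congr rfl fun j _ => by ring

lemma sum_sum_mul_add_le {R : ι → ι → ℝ≥0∞} (hR : ∀ i j, R i j = R j i) {S : ℝ≥0∞}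
    (hS : ∀ i, ∑ j ∈ I, R i j ≤ S) (x : ι → ℝ≥0∞) :
    ∑ i ∈ I, ∑ j ∈ I, R i j * (x i + x j) ≤ 2 * S * ∑ i ∈ I, x i := by
  have hrow : ∑ i ∈ I, ∑ j ∈ I, R i j * x i ≤ S * ∑ i ∈ I, x i := by
    simp_rw [← Finset.sum_mul, Finset.mul_sum]
    gcongr with i _
    exact hS i
  have hcol : ∑ i ∈ I, ∑ j ∈ I, R i j * x j = ∑ i ∈ I, ∑ j ∈ I, R i j * x i := by
    rw [Finset.sum_comm]
    simp_rw [hR]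
  simp_rw [mul_add, Finset.sum_add_distrib]
  rw [hcol, two_mul, add_mul]
  exact add_le_add hrow hrow

lemma lintegral_rpow_sum_le {α : Type*} [MeasurableSpace α] {μ : Measure α} (hP : 2 ≤ P)
    {R : ι → ι → ℝ≥0∞} (hR : ∀ i j, R i j ≠ 0) (hR_top : ∀ i j, R i j ≠ ∞)
    (hR_symm : ∀ i j, R i j = R j i) {S : ℝ≥0∞} (hS : ∀ i, ∑ j ∈ I, R i j ≤ S)
    {X : ι → α → ℝ≥0∞} (hX : ∀ i, Measurable (X i)) {x : ι → ℝ≥0∞} {C : ℝ≥0∞}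
    (h : ∀ i j, ∫⁻ z, X i z * X j z ^ (P - 1) ∂μ ≤
      R i j ^ (P - 1) * (C * (x i * x j ^ (P - 1)))) :
    ∫⁻ z, (∑ i ∈ I, X i z) ^ P ∂μ ≤ C * S ^ (P - 2) * (2 * S) * ∑ i ∈ I, x i ^ P := by
  have hmeas (i j : ι) : Measurable fun z => X i z * X j z ^ (P - 1) :=
    (hX i).mul ((hX j).pow_const _)
  calc ∫⁻ z, (∑ i ∈ I, X i z) ^ P ∂μ
      ≤ ∫⁻ z, S ^ (P - 2) *
          ∑ i ∈ I, ∑ j ∈ I, R i j ^ (2 - P) * (X i z * X j z ^ (P - 1)) ∂μ :=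
        lintegral_mono fun z => rpow_sum_le_sum_sum hP hR hR_top hS fun i => X i z
    _ = S ^ (P - 2) *
          ∑ i ∈ I, ∑ j ∈ I, R i j ^ (2 - P) * ∫⁻ z, X i z * X j z ^ (P - 1) ∂μ := by
        rw [lintegral_const_mul _ (by fun_prop), lintegral_finsetSum _ fun i _ => by fun_prop]
        simp_rw [lintegral_finsetSum I fun j _ => (hmeas _ j).const_mul (R _ j ^ (2 - P)),
          lintegral_const_mul _ (hmeas _ _)]
    _ ≤ S ^ (P - 2) * ∑ i ∈ I, ∑ j ∈ I, C * (R i j * (x i ^ P + x j ^ P)) := by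
        refine mul_le_mul_right (Finset.sum_le_sum fun i _ => Finset.sum_le_sum fun j _ => ?_) _
        calc R i j ^ (2 - P) * ∫⁻ z, X i z * X j z ^ (P - 1) ∂μ
            ≤ R i j ^ (2 - P) * (R i j ^ (P - 1) * (C * (x i * x j ^ (P - 1)))) := by
              gcongr
              exact h i j
          _ = C * (R i j * (x i * x j ^ (P - 1))) := by
              rw [← mul_assoc, ← ENNReal.rpow_add _ _ (hR i j) (hR_top i j),
                show 2 - P + (P - 1) = 1 by ring, ENNReal.rpow_one]
              ring
          _ ≤ C * (R i j * (x i ^ P + x j ^ P)) := by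
              gcongr
              exact mul_rpow_sub_one_le_add _ _ (by linarith)
    _ ≤ S ^ (P - 2) * (C * (2 * S * ∑ i ∈ I, x i ^ P)) := by
        simp_rw [← Finset.mul_sum]
        gcongr
        exact sum_sum_mul_add_le hR_symm hS fun i => x i ^ P
    _ = C * S ^ (P - 2) * (2 * S) * ∑ i ∈ I, x i ^ P := by ring

end Schur

section Separated

lemma tsum_exp_neg_mul_abs_int_ne_top {a : ℝ} (ha : 0 < a) :
    ∑' k : ℤ, ENNReal.ofReal (Real.exp (-a * |(k : ℝ)|)) ≠ ∞ := by
  have hnat : Summable fun k : ℕ => Real.exp (-a * k) := by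
    simpa only [mul_comm] using Real.summable_exp_nat_mul_iff.2 (neg_lt_zero.2 ha)
  have hint : Summable fun k : ℤ => Real.exp (-a * |(k : ℝ)|) :=
    summable_int_iff_summable_nat_and_neg.2 ⟨by simpa using hnat, by simpa using hnat⟩
  rw [← ENNReal.ofReal_tsum_of_nonneg (fun _ => (Real.exp_pos _).le) hint]
  exact ENNReal.ofReal_ne_top

lemma mul_abs_floor_div_le {δ : ℝ} (hδ : 0 < δ) (x : ℝ) : δ * |(⌊x / δ⌋ : ℝ)| ≤ |x| + δ := by
  have hle := (le_div_iff₀ hδ).1 (Int.floor_le (x / δ))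
  have hlt := (div_lt_iff₀ hδ).1 (Int.lt_floor_add_one (x / δ))
  rw [← abs_of_pos hδ, ← abs_mul, abs_of_pos hδ, abs_le]
  constructor
  · linarith [neg_abs_le x]
  · linarith [le_abs_self x]

lemma exists_tsum_exp_neg_mul_le {a ρ : ℝ} (ha : 0 < a) (hρ : 0 < ρ) :
    ∃ S ≠ ∞, ∀ {ι : Type*} {u v : ι → ℝ},
      (Pairwise fun i j => ρ ≤ |u i - u j| + |v i - v j|) →
      ∀ i, ∑' j, ENNReal.ofReal (Real.exp (-a * (|u i - u j| + |v i - v j|))) ≤ S := by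
  set δ := ρ / 2 with hδ_def
  have hδ : 0 < δ := half_pos hρ
  set e : ℤ → ℝ≥0∞ := fun k => ENNReal.ofReal (Real.exp (-(a * δ) * |(k : ℝ)|))
  have he : ∑' k, e k ≠ ∞ := tsum_exp_neg_mul_abs_int_ne_top (mul_pos ha hδ)
  refine ⟨ENNReal.ofReal (Real.exp (a * ρ)) * ((∑' k, e k) * ∑' k, e k), by finiteness,
    fun {ι u v} hsep i => ?_⟩
  set cell : ι → ℤ × ℤ := fun j => (⌊(u i - u j) / δ⌋, ⌊(v i - v j) / δ⌋)
  have hclose {x y z : ℝ} (h : ⌊(x - y) / δ⌋ = ⌊(x - z) / δ⌋) : |y - z| < δ := by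
    have := Int.abs_sub_lt_one_of_floor_eq_floor h
    rwa [← sub_div, abs_div, abs_of_pos hδ, div_lt_one hδ, _root_.sub_sub_sub_cancel_left,
      abs_sub_comm] at this
  have hcell : Function.Injective cell := by
    intro j k hjk
    by_contra hne
    obtain ⟨hu, hv⟩ := Prod.ext_iff.1 hjk
    linarith [hsep hne, hclose hu, hclose hv]
  calc ∑' j, ENNReal.ofReal (Real.exp (-a * (|u i - u j| + |v i - v j|)))
      ≤ ∑' j, ENNReal.ofReal (Real.exp (a * ρ)) * (e (cell j).1 * e (cell j).2) := by
        refine ENNReal.tsum_le_tsum fun j => ?_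
        rw [← ENNReal.ofReal_mul (Real.exp_pos _).le, ← ENNReal.ofReal_mul (Real.exp_pos _).le,
          ← Real.exp_add, ← Real.exp_add]
        gcongr
        linear_combination a * mul_abs_floor_div_le hδ (u i - u j) +
          a * mul_abs_floor_div_le hδ (v i - v j) + 2 * a * hδ_def
    _ ≤ ∑' c : ℤ × ℤ, ENNReal.ofReal (Real.exp (a * ρ)) * (e c.1 * e c.2) :=
        ENNReal.tsum_comp_le_tsum_of_injective hcell
          fun c => ENNReal.ofReal (Real.exp (a * ρ)) * (e c.1 * e c.2)
    _ = ENNReal.ofReal (Real.exp (a * ρ)) * ((∑' k, e k) * ∑' k, e k) := by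
        rw [ENNReal.tsum_prod']
        simp only [ENNReal.tsum_mul_left, ENNReal.tsum_mul_right]

end Separated

/-! ### Families of blocks of separated shapes -/

lemma le_rpow_of_le_mul_rpow_inv {p P : ℝ} (hp : p.HolderConjugate P) {S A : ℝ≥0∞} (hS : S ≠ ∞)
    (h : S ≤ A * S ^ P⁻¹) : S ≤ A ^ p := by
  rcases eq_or_ne S 0 with rfl | hS0
  · exact zero_le
  have hne : S ^ P⁻¹ ≠ 0 := by simp [hS0, hS]
  have hne_top : S ^ P⁻¹ ≠ ∞ := ENNReal.rpow_ne_top_of_ne_zero hS0 hS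
  have hroot : S ^ p⁻¹ ≤ A := by
    rwa [← ENNReal.mul_le_mul_iff_left hne hne_top, ← ENNReal.rpow_add _ _ hS0 hS,
      hp.inv_add_inv_eq_one, ENNReal.rpow_one]
  calc S = (S ^ p⁻¹) ^ p := (ENNReal.rpow_inv_rpow hp.ne_zero S).symm
    _ ≤ A ^ p := ENNReal.rpow_le_rpow hroot hp.nonneg

lemma ofReal_mul_rpow_mul_exp {P ε d C a b : ℝ} (hP : 1 < P) (hC : 0 ≤ C) (ha : 0 ≤ a)
    (hb : 0 ≤ b) :
    ENNReal.ofReal (C * (a ^ P⁻¹ * b ^ (1 - P⁻¹) * Real.exp (-ε * d))) =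
      ENNReal.ofReal (Real.exp (-(ε / (P - 1)) * d)) ^ (P - 1) *
        (ENNReal.ofReal C * (ENNReal.ofReal a ^ P⁻¹ * (ENNReal.ofReal b ^ P⁻¹) ^ (P - 1))) := by
  have hP1 : 0 < P - 1 := sub_pos.2 hP
  have hPinv : 0 ≤ P⁻¹ := by positivity
  have hPinv' : P⁻¹ * (P - 1) = 1 - P⁻¹ := by field_simp
  have hPinv'_nonneg : 0 ≤ 1 - P⁻¹ := hPinv' ▸ by positivity
  rw [← ENNReal.rpow_mul, hPinv', ENNReal.ofReal_rpow_of_nonneg ha hPinv,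
    ENNReal.ofReal_rpow_of_nonneg hb hPinv'_nonneg, ENNReal.ofReal_rpow_of_pos (Real.exp_pos _),
    ← Real.exp_mul, ENNReal.ofReal_mul hC, ENNReal.ofReal_mul (by positivity),
    ENNReal.ofReal_mul (by positivity),
    show -(ε / (P - 1)) * d * (P - 1) = -ε * d by field_simp]
  ring

namespace LineBlock

variable {n : ℕ}

lemma exists_lintegral_rpow_sum_density_le (hn : 2 ≤ n) {P : ℝ} (hP : (n + 3) / 2 < P) :
    ∃ C ≠ ∞, ∀ {ι : Type*} {B : ι → LineBlock n},
      (Pairwise fun i j => Real.log 2 ≤ (B i).shapeDist (B j)) →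
      ∀ (D : ι → ℝ≥0∞) (I : Finset ι), ∫⁻ z, (∑ i ∈ I, D i * (B i).density z) ^ P ≤
        C * ∑ i ∈ I, D i ^ P * ENNReal.ofReal ((B i).scale * (B i).fill) := by
  have hn2 : (2 : ℝ) ≤ n := by exact_mod_cast hn
  have hP2 : 2 < P := by linarith
  have hP0 : 0 < P := by linarith
  obtain ⟨ε, hε, C, hC, horth⟩ := exists_lintegral_density_mul_rpow_le_shapeDist hn hP
  obtain ⟨S, hS, hsum⟩ := exists_tsum_exp_neg_mul_le (div_pos hε (by linarith : 0 < P - 1))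
    (Real.log_pos one_lt_two)
  refine ⟨ENNReal.ofReal C * S ^ (P - 2) * (2 * S), by finiteness, fun {ι B} hsep D I => ?_⟩
  set w : ι → ℝ := fun i => (B i).scale * (B i).fill
  have hw (i : ι) : 0 ≤ w i := mul_nonneg (B i).scale_pos.le (B i).fill_nonneg
  have hdens (i : ι) : Measurable (B i).density := (B i).measurable_density
  set x : ι → ℝ≥0∞ := fun i => D i * ENNReal.ofReal (w i) ^ P⁻¹ with hx_def
  have hx (i : ι) : x i ^ P = D i ^ P * ENNReal.ofReal (w i) := by
    rw [hx_def, ENNReal.mul_rpow_of_nonneg _ _ hP0.le, ENNReal.rpow_inv_rpow hP0.ne']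
  have hpair (i j : ι) :
      ∫⁻ z, D i * (B i).density z * (D j * (B j).density z) ^ (P - 1) ≤
        ENNReal.ofReal (Real.exp (-(ε / (P - 1)) * (B i).shapeDist (B j))) ^ (P - 1) *
          (ENNReal.ofReal C * (x i * x j ^ (P - 1))) := by
    calc ∫⁻ z, D i * (B i).density z * (D j * (B j).density z) ^ (P - 1)
        = D i * D j ^ (P - 1) * ∫⁻ z, (B i).density z * (B j).density z ^ (P - 1) := by
          rw [← lintegral_const_mul _ (by fun_prop)]
          refine lintegral_congr fun z => ?_
          rw [ENNReal.mul_rpow_of_nonneg _ _ (by linarith)]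
          ring
      _ ≤ D i * D j ^ (P - 1) * ENNReal.ofReal (C * (w i ^ P⁻¹ * w j ^ (1 - P⁻¹) *
            Real.exp (-ε * (B i).shapeDist (B j)))) := by
          gcongr
          exact horth (B i) (B j)
      _ = _ := by
          rw [ofReal_mul_rpow_mul_exp (by linarith) hC.le (hw i) (hw j), hx_def,
            ENNReal.mul_rpow_of_nonneg _ _ (by linarith)]
          ring
  change _ ≤ _ * ∑ i ∈ I, D i ^ P * ENNReal.ofReal (w i)
  simp only [← hx]
  exact lintegral_rpow_sum_le hP2.le (fun i j => by simpa using Real.exp_pos _)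
    (fun i j => ENNReal.ofReal_ne_top) (fun i j => by simp only [abs_sub_comm])
    (fun i => (ENNReal.sum_le_tsum I).trans (hsum hsep i)) (fun i => (hdens i).const_mul _) hpair

/-- The weight of a line of a block in the dual estimate with exponent `P`. -/
def lineWeight (B : LineBlock n) (P : ℝ) : ℝ :=
  B.width ^ (P - (n + 3) / 2) * B.height ^ (n : ℝ)⁻¹

lemma width_rpow_mul_scale_mul_fill (hn : n ≠ 0) (B : LineBlock n) (P : ℝ) :
    B.width ^ P * (B.scale * B.fill) = B.lineWeight P * volume.real B.lines := by
  have hwidth := B.width_pos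
  have hw : B.width ^ P * B.width ^ (-((n : ℝ) + 1) / 2) =
      B.width ^ (P - (n + 3) / 2) * B.width := by
    rw [← Real.rpow_add hwidth, ← Real.rpow_add_one hwidth.ne']
    ring_nf
  have hh : B.height ^ (((n : ℝ) + 1) / n) = B.height ^ (n : ℝ)⁻¹ * B.height := by
    rw [← Real.rpow_add_one B.height_pos.ne']
    congr 1
    field_simp
    ring
  rw [lineWeight, ← B.fill_mul, scale, hh]
  linear_combination B.height ^ (n : ℝ)⁻¹ * B.height * B.fill * hw

lemma ofReal_width_rpow_mul (hn : n ≠ 0) (B : LineBlock n) {P : ℝ} (hP : 0 ≤ P) :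
    ENNReal.ofReal B.width ^ P * ENNReal.ofReal (B.scale * B.fill) =
      ENNReal.ofReal (B.lineWeight P) * volume B.lines := by
  have hweight : 0 ≤ B.lineWeight P := mul_nonneg (Real.rpow_nonneg B.width_pos.le _)
    (Real.rpow_nonneg B.height_pos.le _)
  rw [ENNReal.ofReal_rpow_of_nonneg B.width_pos.le hP,
    ← ENNReal.ofReal_mul (Real.rpow_nonneg B.width_pos.le P),
    B.width_rpow_mul_scale_mul_fill hn, ENNReal.ofReal_mul hweight,
    ofReal_measureReal B.volume_lines_ne_top]

lemma directionMeasure_lines_eq (B : LineBlock n) (z : Pt n) :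
    directionMeasure B.lines z = ENNReal.ofReal B.width * B.density z :=
  (ENNReal.mul_div_cancel B.ofReal_width_ne_zero ENNReal.ofReal_ne_top).symm

lemma exists_tsum_mul_setLIntegral_lineIntegral_le (hn : 2 ≤ n) {p P : ℝ}
    (hP : (n + 3) / 2 < P) (hp : p.HolderConjugate P) :
    ∃ C ≠ ∞, ∀ {ι : Type*} {B : ι → LineBlock n},
      (Pairwise fun i j => Real.log 2 ≤ (B i).shapeDist (B j)) →
      ∀ (c : ι → ℝ≥0∞) {h : Pt n → ℝ≥0∞}, Measurable h →
      ∑' i, c i * ∫⁻ l in (B i).lines, lineIntegral h l ≤ (∫⁻ z, h z ^ p) ^ (1 / p) *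
        (C * ∑' i, c i ^ P * (ENNReal.ofReal ((B i).lineWeight P) * volume (B i).lines)) ^
          (1 / P) := by
  obtain ⟨C, hC, hfamily⟩ := exists_lintegral_rpow_sum_density_le hn hP
  refine ⟨C, hC, fun {ι B} hsep c {h} hh => ?_⟩
  have hP0 : 0 < P := hp.symm.pos
  have hdens (i : ι) : Measurable (B i).density := (B i).measurable_density
  set D : ι → ℝ≥0∞ := fun i => c i * ENNReal.ofReal (B i).width
  rw [ENNReal.tsum_eq_iSup_sum]
  refine iSup_le fun I => ?_
  calc ∑ i ∈ I, c i * ∫⁻ l in (B i).lines, lineIntegral h l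
      = ∑ i ∈ I, ∫⁻ z, h z * (D i * (B i).density z) := by
        refine Finset.sum_congr rfl fun i _ => ?_
        rw [setLIntegral_lineIntegral hh (B i).measurableSet_lines]
        simp_rw [(B i).directionMeasure_lines_eq]
        rw [← lintegral_const_mul _ (by fun_prop)]
        exact lintegral_congr fun z => by ring
    _ = ∫⁻ z, (h * fun z => ∑ i ∈ I, D i * (B i).density z) z := by
        rw [← lintegral_finsetSum _ fun i _ => by fun_prop]
        simp [Finset.mul_sum]
    _ ≤ (∫⁻ z, h z ^ p) ^ (1 / p) * (∫⁻ z, (∑ i ∈ I, D i * (B i).density z) ^ P) ^ (1 / P) :=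
        ENNReal.lintegral_mul_le_Lp_mul_Lq _ hp hh.aemeasurable (by fun_prop)
    _ ≤ (∫⁻ z, h z ^ p) ^ (1 / p) *
          (C * ∑' i, c i ^ P * (ENNReal.ofReal ((B i).lineWeight P) * volume (B i).lines)) ^
            (1 / P) := by
        gcongr
        refine (hfamily hsep D I).trans ?_
        simp only [D, ENNReal.mul_rpow_of_nonneg _ _ hP0.le, mul_assoc,
          (B _).ofReal_width_rpow_mul (by omega : n ≠ 0) hP0.le]
        gcongr
        exact ENNReal.sum_le_tsum I

theorem exists_sum_rpow_le_of_blocks (hn : 2 ≤ n) {p P : ℝ} (hP : (n + 3) / 2 < P)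
    (hp : p.HolderConjugate P) {K : ℝ≥0∞} (hK : K ≠ ∞) :
    ∃ C ≠ ∞, ∀ {κ ι : Type*} [Fintype κ] {B : κ × ι → LineBlock n},
      (Pairwise fun i j => Real.log 2 ≤ (B i).shapeDist (B j)) →
      ∀ {c : κ × ι → ℝ≥0∞} {N : κ → ℝ≥0∞} {h : Pt n → ℝ≥0∞}, Measurable h → (∀ m, N m ≠ ∞) →
      (∀ m, N m ≤ ∑' k, c (m, k) * ∫⁻ l in (B (m, k)).lines, lineIntegral h l) →
      (∀ m, ∑' k, c (m, k) ^ P * (ENNReal.ofReal ((B (m, k)).lineWeight P) *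
        volume (B (m, k)).lines) ≤ K) →
      ∑ m, N m ^ p ≤ (C * (∫⁻ z, h z ^ p) ^ (1 / p)) ^ p := by
  obtain ⟨C, hC, hdual⟩ := exists_tsum_mul_setLIntegral_lineIntegral_le hn hP hp
  have hP0 : 0 < P := hp.symm.pos
  refine ⟨(C * K) ^ P⁻¹, ENNReal.rpow_ne_top_of_nonneg (by positivity) (by finiteness),
    fun {κ ι _ B} hsep {c N h} hh hN hlower hupper => ?_⟩
  set x : κ → ℝ≥0∞ := fun m => N m ^ (p - 1)
  have hx (m : κ) : x m * N m = N m ^ p := by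
    rw [mul_comm, mul_rpow_sub_one _ hp.lt.le]
  have hxP (m : κ) : x m ^ P = N m ^ p := by
    rw [← ENNReal.rpow_mul, hp.sub_one_mul_conj]
  refine le_rpow_of_le_mul_rpow_inv hp
    (ENNReal.sum_ne_top.2 fun m _ => ENNReal.rpow_ne_top_of_nonneg hp.nonneg (hN m)) ?_
  calc ∑ m, N m ^ p
      ≤ ∑ m, x m * ∑' k, c (m, k) * ∫⁻ l in (B (m, k)).lines, lineIntegral h l := by
        simp_rw [← hx]
        gcongr with m
        exact hlower m
    _ = ∑' i : κ × ι, x i.1 * c i * ∫⁻ l in (B i).lines, lineIntegral h l := by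
        simp_rw [ENNReal.tsum_prod', mul_assoc, ENNReal.tsum_mul_left, tsum_fintype]
    _ ≤ (∫⁻ z, h z ^ p) ^ (1 / p) * (C * ∑' i : κ × ι, (x i.1 * c i) ^ P *
          (ENNReal.ofReal ((B i).lineWeight P) * volume (B i).lines)) ^ (1 / P) :=
        hdual hsep _ hh
    _ ≤ (∫⁻ z, h z ^ p) ^ (1 / p) * (C * ((∑ m, N m ^ p) * K)) ^ (1 / P) := by
        gcongr
        simp_rw [ENNReal.tsum_prod', ENNReal.mul_rpow_of_nonneg _ _ hP0.le, mul_assoc,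
          ENNReal.tsum_mul_left, tsum_fintype, hxP, Finset.sum_mul]
        gcongr with m
        exact hupper m
    _ = (C * K) ^ P⁻¹ * (∫⁻ z, h z ^ p) ^ (1 / p) * (∑ m, N m ^ p) ^ P⁻¹ := by
        rw [one_div P, mul_left_comm,
          ENNReal.mul_rpow_of_nonneg _ _ (by positivity : 0 ≤ P⁻¹)]
        ring_nf

end LineBlock

/-! ### Dyadic level sets -/

lemma two_rpow_add (x y : ℝ) : (2 : ℝ≥0∞) ^ (x + y) = 2 ^ x * 2 ^ y :=
  ENNReal.rpow_add _ _ two_ne_zero ofNat_ne_top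

lemma two_rpow_ne_zero (x : ℝ) : (2 : ℝ≥0∞) ^ x ≠ 0 := by simp

lemma two_rpow_ne_top (x : ℝ) : (2 : ℝ≥0∞) ^ x ≠ ∞ := by simp

lemma ofReal_two_rpow (x : ℝ) : ENNReal.ofReal (2 ^ x) = 2 ^ x := by
  rw [← ENNReal.ofReal_rpow_of_pos two_pos, ENNReal.ofReal_ofNat]

/-- The dyadic interval `[2^k, 2^(k+1))`. -/
def dyadicInterval (k : ℤ) : Set ℝ≥0∞ := Ico (2 ^ k) (2 ^ (k + 1))

lemma mem_dyadicInterval {k : ℤ} {v : ℝ≥0∞} :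
    v ∈ dyadicInterval k ↔ 2 ^ (k : ℝ) ≤ v ∧ v < 2 ^ (k + 1 : ℝ) := by
  rw [dyadicInterval, mem_Ico, ← ENNReal.rpow_intCast, ← ENNReal.rpow_intCast, Int.cast_add,
    Int.cast_one]

lemma exists_mem_dyadicInterval {v : ℝ≥0∞} (h0 : v ≠ 0) (htop : v ≠ ∞) :
    ∃ k, v ∈ dyadicInterval k :=
  ENNReal.exists_mem_Ico_zpow h0 htop one_lt_two ofNat_ne_top

lemma two_rpow_mul_le_of_mem_dyadicInterval {k : ℤ} {v : ℝ≥0∞} (hv : v ∈ dyadicInterval k)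
    {r : ℝ} (hr : 0 ≤ r) : 2 ^ (r * k) ≤ v ^ r := by
  rw [mul_comm, ENNReal.rpow_mul]
  exact ENNReal.rpow_le_rpow (mem_dyadicInterval.1 hv).1 hr

lemma rpow_le_of_mem_dyadicInterval {k : ℤ} {v : ℝ≥0∞} (hv : v ∈ dyadicInterval k)
    {r : ℝ} (hr : 0 ≤ r) : v ^ r ≤ 2 ^ (r * (k + 1)) := by
  rw [mul_comm, ENNReal.rpow_mul]
  exact ENNReal.rpow_le_rpow (mem_dyadicInterval.1 hv).2.le hr

section dyadicLevel

variable {α : Type*} {ψ : α → ℝ≥0∞}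

/-- The level set `{2^k ≤ ψ < 2^(k+1)}` entering the Lorentz norms. -/
def dyadicLevel (ψ : α → ℝ≥0∞) (k : ℤ) : Set α := ψ ⁻¹' dyadicInterval k

lemma pairwise_disjoint_dyadicLevel (ψ : α → ℝ≥0∞) :
    Pairwise (Function.onFun Disjoint (dyadicLevel ψ)) := fun _ _ hkl =>
  Disjoint.preimage ψ <|
    (ENNReal.monotone_zpow one_le_two).pairwise_disjoint_on_Ico_succ hkl

lemma iUnion_dyadicLevel (ψ : α → ℝ≥0∞) : ⋃ k, dyadicLevel ψ k = ψ ⁻¹' Ioo 0 ∞ := by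
  rw [ENNReal.Ioo_zero_top_eq_iUnion_Ico_zpow one_lt_two ofNat_ne_top, preimage_iUnion]
  rfl

variable [MeasurableSpace α] {μ : Measure α}

lemma measurableSet_dyadicLevel (hψ : Measurable ψ) (k : ℤ) :
    MeasurableSet (dyadicLevel ψ k) := hψ measurableSet_Ico

lemma tsum_setLIntegral_dyadicLevel_rpow (hψ : Measurable ψ) {r : ℝ} (hr : 0 < r)
    (hfin : ∫⁻ z, ψ z ^ r ∂μ ≠ ∞) :
    ∑' k, ∫⁻ z in dyadicLevel ψ k, ψ z ^ r ∂μ = ∫⁻ z, ψ z ^ r ∂μ := by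
  rw [← lintegral_iUnion (measurableSet_dyadicLevel hψ) (pairwise_disjoint_dyadicLevel ψ),
    iUnion_dyadicLevel, ← lintegral_indicator (hψ measurableSet_Ioo)]
  refine lintegral_congr_ae ?_
  filter_upwards [ae_lt_top (hψ.pow_const r) hfin] with z hz
  rcases eq_or_ne (ψ z) 0 with h0 | h0
  · simp [h0, hr]
  · have hlt : ψ z < ∞ := (ENNReal.rpow_lt_top_iff_of_pos hr).1 hz
    simp [indicator, h0, hlt, pos_iff_ne_zero]

lemma two_rpow_mul_measure_dyadicLevel_le (hψ : Measurable ψ) {r : ℝ} (hr : 0 ≤ r) (k : ℤ) :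
    2 ^ (r * k) * μ (dyadicLevel ψ k) ≤ ∫⁻ z in dyadicLevel ψ k, ψ z ^ r ∂μ := by
  rw [← setLIntegral_const]
  exact setLIntegral_mono' (measurableSet_dyadicLevel hψ k) fun _ hz =>
    two_rpow_mul_le_of_mem_dyadicInterval hz hr

lemma setLIntegral_dyadicLevel_rpow_le (hψ : Measurable ψ) {r : ℝ} (hr : 1 ≤ r) (k : ℤ) :
    ∫⁻ z in dyadicLevel ψ k, ψ z ^ r ∂μ ≤
      2 ^ ((r - 1) * (k + 1)) * ∫⁻ z in dyadicLevel ψ k, ψ z ∂μ := by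
  rw [← lintegral_const_mul _ hψ]
  refine setLIntegral_mono' (measurableSet_dyadicLevel hψ k) fun z hz => ?_
  rw [← mul_rpow_sub_one _ hr, mul_comm]
  exact mul_le_mul_left (rpow_le_of_mem_dyadicInterval hz (sub_nonneg.2 hr)) _

end dyadicLevel

/-! ### Selecting one index for each dyadic size -/

lemma tsum_rpow_rpow_inv_le {ι : Type*} {p s : ℝ} (hp : 0 < p) (hs : p ≤ s) {a : ι → ℝ≥0∞}
    {A : ℝ≥0∞} (h : ∑' i, a i ^ p ≤ A ^ p) : (∑' i, a i ^ s) ^ (1 / s) ≤ A := by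
  have ha (i : ι) : a i ≤ A :=
    (ENNReal.rpow_le_rpow_iff hp).1 ((ENNReal.le_tsum i).trans h)
  have hsplit (c : ℝ≥0∞) : c ^ s = c ^ p * c ^ (s - p) := by
    rw [← ENNReal.rpow_add_of_nonneg _ _ hp.le (sub_nonneg.2 hs), add_sub_cancel]
  rw [one_div, ENNReal.rpow_inv_le_iff (hp.trans_le hs)]
  calc ∑' i, a i ^ s ≤ ∑' i, a i ^ p * A ^ (s - p) := by
        refine ENNReal.tsum_le_tsum fun i => ?_
        rw [hsplit]
        exact mul_le_mul_right (ENNReal.rpow_le_rpow (ha i) (sub_nonneg.2 hs)) _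
    _ ≤ A ^ p * A ^ (s - p) := by
        rw [ENNReal.tsum_mul_right]
        exact mul_le_mul_left h _
    _ = A ^ s := (hsplit A).symm

lemma exists_sum_two_rpow_le_of_forall_le {α : ℝ} (hα : 0 < α) :
    ∃ C ≠ ∞, ∀ (S : Finset ℤ) (l₀ : ℤ), (∀ l ∈ S, l ≤ l₀) →
      ∑ l ∈ S, (2 : ℝ≥0∞) ^ (α * l) ≤ C * 2 ^ (α * l₀) := by
  set e : ℤ → ℝ≥0∞ := fun k => ENNReal.ofReal (Real.exp (-(α * Real.log 2) * |(k : ℝ)|))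
  refine ⟨∑' k, e k, tsum_exp_neg_mul_abs_int_ne_top (mul_pos hα (Real.log_pos one_lt_two)),
    fun S l₀ hS => ?_⟩
  calc ∑ l ∈ S, (2 : ℝ≥0∞) ^ (α * l) ≤ ∑ l ∈ S, e (l - l₀) * 2 ^ (α * l₀) := by
        refine Finset.sum_le_sum fun l hl => le_of_eq ?_
        have hle : ((l - l₀ : ℤ) : ℝ) ≤ 0 := by exact_mod_cast sub_nonpos.2 (hS l hl)
        rw [show e (l - l₀) = ENNReal.ofReal (2 ^ (α * (l - l₀))) by
          simp only [e, abs_of_nonpos hle, Real.rpow_def_of_pos two_pos]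
          push_cast
          ring_nf, ofReal_two_rpow, ← two_rpow_add]
        ring_nf
    _ ≤ (∑' l, e (l - l₀)) * 2 ^ (α * l₀) := by
        rw [← Finset.sum_mul]
        exact mul_le_mul_left (ENNReal.sum_le_tsum S) _
    _ = (∑' k, e k) * 2 ^ (α * l₀) := by exact congrArg (· * _) ((Equiv.subRight l₀).tsum_eq e)

lemma exists_sum_two_rpow_mul_rpow_le_selection {α β : ℝ} (hα : 0 < α) (hβ : 0 < β) :
    ∃ C ≠ ∞, ∀ (v : ℤ → ℝ≥0∞), (∀ l, v l ≠ ∞) → ∀ L : Finset ℤ,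
      ∃ (J : Finset ℤ) (σ : ℤ → ℤ), (∀ j ∈ J, v (σ j) ∈ dyadicInterval j) ∧
        ∑ l ∈ L, 2 ^ (α * l) * v l ^ β ≤ C * ∑ j ∈ J, 2 ^ (α * σ j + β * j) := by
  obtain ⟨C, hC, hgeom⟩ := exists_sum_two_rpow_le_of_forall_le hα
  refine ⟨C * 2 ^ β, by finiteness, fun v hv L => ?_⟩
  set L' := L.filter fun l => v l ≠ 0
  have hsize (l : ℤ) (hl : l ∈ L') : ∃ j, v l ∈ dyadicInterval j :=
    exists_mem_dyadicInterval (Finset.mem_filter.1 hl).2 (hv l)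
  choose! size hsize using hsize
  have hmax (j : ℤ) (hj : j ∈ L'.image size) :
      ∃ l ∈ L', size l = j ∧ ∀ k ∈ L', size k = j → k ≤ l := by
    obtain ⟨l, hl, hlj⟩ := Finset.mem_image.1 hj
    obtain ⟨m, hm, hmax⟩ := Finset.exists_max_image (L'.filter (size · = j)) id
      ⟨l, Finset.mem_filter.2 ⟨hl, hlj⟩⟩
    obtain ⟨hm, hmj⟩ := Finset.mem_filter.1 hm
    exact ⟨m, hm, hmj, fun k hk hkj => hmax k (Finset.mem_filter.2 ⟨hk, hkj⟩)⟩
  choose! σ hσL hσ hσmax using hmax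
  refine ⟨L'.image size, σ, fun j hj => ?_, ?_⟩
  · simpa only [hσ j hj] using hsize (σ j) (hσL j hj)
  calc ∑ l ∈ L, 2 ^ (α * l) * v l ^ β = ∑ l ∈ L', 2 ^ (α * l) * v l ^ β := by
        refine (Finset.sum_filter_of_ne (p := fun l => v l ≠ 0) fun l _ hne h0 => hne ?_).symm
        rw [h0, ENNReal.zero_rpow_of_pos hβ, mul_zero]
    _ = ∑ j ∈ L'.image size, ∑ l ∈ L' with size l = j, 2 ^ (α * l) * v l ^ β :=
        (Finset.sum_fiberwise_of_maps_to (fun _ => Finset.mem_image_of_mem size) _).symm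
    _ ≤ ∑ j ∈ L'.image size, C * 2 ^ (α * σ j) * 2 ^ (β * (j + 1)) := by
        refine Finset.sum_le_sum fun j hj => ?_
        calc ∑ l ∈ L' with size l = j, 2 ^ (α * l) * v l ^ β
            ≤ ∑ l ∈ L' with size l = j, 2 ^ (α * l) * 2 ^ (β * (j + 1)) := by
              refine Finset.sum_le_sum fun l hl => mul_le_mul_right ?_ _
              obtain ⟨hl, hlj⟩ := Finset.mem_filter.1 hl
              exact rpow_le_of_mem_dyadicInterval (hlj ▸ hsize l hl) hβ.le
          _ ≤ C * 2 ^ (α * σ j) * 2 ^ (β * (j + 1)) := by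
              rw [← Finset.sum_mul]
              refine mul_le_mul_left (hgeom _ _ fun l hl => ?_) _
              obtain ⟨hl, hlj⟩ := Finset.mem_filter.1 hl
              exact hσmax j hj l hl hlj
    _ = C * 2 ^ β * ∑ j ∈ L'.image size, 2 ^ (α * σ j + β * j) := by
        rw [Finset.mul_sum]
        refine Finset.sum_congr rfl fun j _ => ?_
        rw [two_rpow_add, mul_add, mul_one, two_rpow_add]
        ring

section Exhaustion

variable {Ω : Type*} [MeasurableSpace Ω]

lemma tsum_mul_measure_rpow_le_of_forall_ne_top (ν : Measure Ω) [SigmaFinite ν] {ι : Type*}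
    {A : ι → Set Ω} (hA : ∀ l, MeasurableSet (A l)) {w : ι → ℝ≥0∞} (hw : ∀ l, w l ≠ ∞) {β : ℝ}
    {D : ℝ≥0∞}
    (h : ∀ A' : ι → Set Ω, (∀ l, MeasurableSet (A' l)) → (∀ l, A' l ⊆ A l) →
      (∀ l, ν (A' l) ≠ ∞) → ∀ L : Finset ι, ∑ l ∈ L, w l * ν (A' l) ^ β ≤ D) :
    ∑' l, w l * ν (A l) ^ β ≤ D := by
  rw [ENNReal.tsum_eq_iSup_sum]
  refine iSup_le fun L => ?_
  have hlim (l : ι) : Tendsto (fun k => w l * ν (A l ∩ spanningSets ν k) ^ β) atTop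
      (nhds (w l * ν (A l) ^ β)) := by
    have hmeas := tendsto_measure_iUnion_atTop (μ := ν) (s := fun k => A l ∩ spanningSets ν k)
      fun i j hij => inter_subset_inter_right _ (monotone_spanningSets ν hij)
    rw [← inter_iUnion, iUnion_spanningSets, inter_univ] at hmeas
    exact ENNReal.Tendsto.const_mul (hmeas.ennrpow_const β) (Or.inr (hw l))
  refine le_of_tendsto' (tendsto_finsetSum L fun l _ => hlim l) fun k => h _
    (fun l => (hA l).inter (measurableSet_spanningSets ν k)) (fun _ => inter_subset_left)
    (fun _ => ne_top_of_le_ne_top (measure_spanningSets_lt_top ν k).ne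
      (measure_mono inter_subset_right)) L

/-- On each dyadic size of `ν (A l)` only the largest `l` matters, since the weights `2 ^ (a * l)`
grow geometrically; hence it suffices to control families with one set of each size. -/
lemma exists_tsum_two_rpow_mul_measure_le {p s a b : ℝ} (hp : 0 < p) (hs : p ≤ s) (ha : 0 < a)
    (hb : 0 < b) : ∃ C ≠ ∞, ∀ (ν : Measure Ω) [SigmaFinite ν] {A : ℤ → Set Ω},
      (∀ l, MeasurableSet (A l)) → ∀ {D : ℝ≥0∞},
      (∀ (J : Finset ℤ) (σ : ℤ → ℤ) (A' : ℤ → Set Ω), (∀ j, MeasurableSet (A' j)) →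
        (∀ j, A' j ⊆ A (σ j)) → (∀ j ∈ J, ν (A' j) ∈ dyadicInterval j) →
        ∑ j ∈ J, ((2 : ℝ≥0∞) ^ (a * σ j + b * j)) ^ p ≤ D ^ p) →
      (∑' l : ℤ, (2 ^ (a * l) * ν (A l) ^ b) ^ s) ^ (1 / s) ≤ C * D := by
  obtain ⟨C, hC, hsel⟩ := exists_sum_two_rpow_mul_rpow_le_selection (mul_pos ha hp) (mul_pos hb hp)
  refine ⟨C ^ p⁻¹, by finiteness, fun ν _ {A} hA {D} hD => tsum_rpow_rpow_inv_le hp hs ?_⟩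
  simp_rw [ENNReal.mul_rpow_of_nonneg _ _ hp.le, ENNReal.rpow_inv_rpow hp.ne',
    ← ENNReal.rpow_mul, mul_right_comm a _ p]
  refine tsum_mul_measure_rpow_le_of_forall_ne_top ν hA (fun _ => two_rpow_ne_top _)
    fun A' hA' hsub hfin L => ?_
  obtain ⟨J, σ, hJ, hle⟩ := hsel (fun l => ν (A' l)) hfin L
  refine hle.trans (mul_le_mul_right ?_ _)
  calc ∑ j ∈ J, (2 : ℝ≥0∞) ^ (a * p * σ j + b * p * j)
      = ∑ j ∈ J, ((2 : ℝ≥0∞) ^ (a * σ j + b * j)) ^ p := by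
        refine Finset.sum_congr rfl fun j _ => ?_
        rw [← ENNReal.rpow_mul]
        ring_nf
    _ ≤ D ^ p := hD J σ (fun j => A' (σ j)) (fun _ => hA' _) (fun _ => hsub _) hJ

end Exhaustion

/-! ### Blocks of dyadic shape -/

namespace LineBlock

variable {n : ℕ}

/-- A set of lines as a `LineBlock` whose width and height are the powers `2^a` and `2^b`. -/
@[simps]
def ofDyadic {F : Set (Pt n)} (hF : MeasurableSet F) {T : Set ℝ} (hT : MeasurableSet T) {a b : ℝ}
    (hFT : F ⊆ T ×ˢ univ) (hvol : volume T < 2 ^ a)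
    (hslice : ∀ t ∈ T, volume (Prod.mk t ⁻¹' F) ≤ 2 ^ b) : LineBlock n where
  lines := F
  base := T
  width := 2 ^ a
  height := 2 ^ b
  measurableSet_lines := hF
  measurableSet_base := hT
  fst_mem_base _ hl := (hFT hl).1
  width_pos := by positivity
  height_pos := by positivity
  volume_base_lt := by rwa [ofReal_two_rpow]
  volume_slice_le t := by
    rw [ofReal_two_rpow]
    by_cases ht : t ∈ T
    · exact hslice t ht
    · have hempty : Prod.mk t ⁻¹' F = ∅ := eq_empty_of_forall_notMem fun _ hy => ht (hFT hy).1
      simp [hempty]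

lemma log_scale (B : LineBlock n) :
    Real.log B.scale =
      -((n : ℝ) + 1) / 2 * Real.log B.width + ((n : ℝ) + 1) / n * Real.log B.height := by
  rw [scale, Real.log_mul (Real.rpow_pos_of_pos B.width_pos _).ne'
    (Real.rpow_pos_of_pos B.height_pos _).ne', Real.log_rpow B.width_pos,
    Real.log_rpow B.height_pos]

lemma abs_log_height_sub_le_shapeDist (hn : n ≠ 0) {B B' : LineBlock n}
    (h : B.width = B'.width) :
    |Real.log B.height - Real.log B'.height| ≤ B.shapeDist B' := by
  have hn1 : 1 ≤ ((n : ℝ) + 1) / n := by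
    have : (0 : ℝ) < n := by positivity
    rw [one_le_div this]
    linarith
  rw [shapeDist, log_scale, log_scale, h, sub_self, abs_zero, zero_add, add_sub_add_left_eq_sub,
    ← mul_sub, abs_mul, abs_of_nonneg (zero_le_one.trans hn1)]
  exact le_mul_of_one_le_left (abs_nonneg _) hn1

lemma log_two_le_shapeDist (hn : n ≠ 0) {B B' : LineBlock n} {a a' : ℤ} {b b' : ℝ}
    (ha : B.width = 2 ^ (a : ℝ)) (ha' : B'.width = 2 ^ (a' : ℝ)) (hb : B.height = 2 ^ b)
    (hb' : B'.height = 2 ^ b') (h : a = a' → 1 ≤ |b - b'|) :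
    Real.log 2 ≤ B.shapeDist B' := by
  have hlog (x y : ℝ) (hxy : 1 ≤ |x - y|) :
      Real.log 2 ≤ |Real.log (2 ^ x) - Real.log (2 ^ y)| := by
    have hlog2 : 0 < Real.log 2 := Real.log_pos one_lt_two
    rw [Real.log_rpow two_pos, Real.log_rpow two_pos, ← sub_mul, abs_mul, abs_of_pos hlog2]
    exact le_mul_of_one_le_left hlog2.le hxy
  rcases eq_or_ne a a' with rfl | hne
  · refine le_trans ?_ (abs_log_height_sub_le_shapeDist hn (ha.trans ha'.symm))
    rw [hb, hb']
    exact hlog b b' (h rfl)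
  · have hone : (1 : ℝ) ≤ |(a : ℝ) - a'| := by
      exact_mod_cast Int.one_le_abs (sub_ne_zero.2 hne)
    rw [shapeDist, ha, ha']
    exact (hlog _ _ hone).trans (le_add_of_nonneg_right (abs_nonneg _))

lemma ofReal_lineWeight {B : LineBlock n} {a b : ℝ} (ha : B.width = 2 ^ a) (hb : B.height = 2 ^ b)
    (P : ℝ) : ENNReal.ofReal (B.lineWeight P) = 2 ^ (a * (P - (n + 3) / 2) + b / n) := by
  rw [lineWeight, ha, hb, ← Real.rpow_mul two_pos.le, ← Real.rpow_mul two_pos.le,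
    ← Real.rpow_add two_pos, ofReal_two_rpow, div_eq_mul_inv b]

end LineBlock

section Strips

variable {α Y : Type*} [MeasurableSpace α] [MeasurableSpace Y] {μ : Measure α} {ν : Measure Y}

lemma two_rpow_le_setLIntegral {ψ : α → ℝ≥0∞} {T : Set α} {l m : ℤ} (hT : MeasurableSet T)
    (hTl : T ⊆ dyadicLevel ψ l) (hTm : μ T ∈ dyadicInterval m) :
    2 ^ (l + m : ℝ) ≤ ∫⁻ t in T, ψ t ∂μ := by
  calc (2 : ℝ≥0∞) ^ (l + m : ℝ) = 2 ^ (l : ℝ) * 2 ^ (m : ℝ) := two_rpow_add _ _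
    _ ≤ 2 ^ (l : ℝ) * μ T := mul_le_mul_right (mem_dyadicInterval.1 hTm).1 _
    _ = ∫⁻ _ in T, 2 ^ (l : ℝ) ∂μ := (setLIntegral_const _ _).symm
    _ ≤ ∫⁻ t in T, ψ t ∂μ :=
        setLIntegral_mono' hT fun _ ht => (mem_dyadicInterval.1 (hTl ht)).1

lemma setLIntegral_le_two_rpow {ψ : α → ℝ≥0∞} {T : Set α} {l m : ℤ} (hT : MeasurableSet T)
    (hTl : T ⊆ dyadicLevel ψ l) (hTm : μ T ∈ dyadicInterval m) :
    ∫⁻ t in T, ψ t ∂μ ≤ 2 ^ (l + m + 2 : ℝ) := by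
  calc ∫⁻ t in T, ψ t ∂μ ≤ ∫⁻ _ in T, 2 ^ (l + 1 : ℝ) ∂μ :=
        setLIntegral_mono' hT fun _ ht => (mem_dyadicInterval.1 (hTl ht)).2.le
    _ = 2 ^ (l + 1 : ℝ) * μ T := setLIntegral_const _ _
    _ ≤ 2 ^ (l + 1 : ℝ) * 2 ^ (m + 1 : ℝ) :=
        mul_le_mul_right (mem_dyadicInterval.1 hTm).2.le _
    _ = 2 ^ (l + m + 2 : ℝ) := by
        rw [← two_rpow_add]
        ring_nf

/-- The inner integral `∫ g(t,y)^r dy` of the mixed norm. -/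
def sliceIntegral (ν : Measure Y) (r : ℝ) (g : α × Y → ℝ≥0∞) (t : α) : ℝ≥0∞ :=
  ∫⁻ y, g (t, y) ^ r ∂ν

variable {g : α × Y → ℝ≥0∞} {r : ℝ} {T : Set α}

lemma measurable_sliceIntegral [SFinite ν] (hg : Measurable g) :
    Measurable (sliceIntegral ν r g) := (hg.pow_const r).lintegral_prod_right'

lemma measure_slice_dyadicLevel_le (hg : Measurable g) (hr : 0 ≤ r) {l : ℤ} {t : α}
    (ht : t ∈ dyadicLevel (sliceIntegral ν r g) l) (k : ℤ) :
    ν (Prod.mk t ⁻¹' dyadicLevel g k) ≤ 2 ^ (l + 1 - r * k) := by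
  have hgt : Measurable fun y => g (t, y) := hg.comp measurable_prodMk_left
  rw [← ENNReal.mul_le_mul_iff_right (two_rpow_ne_zero (r * k)) (two_rpow_ne_top _),
    ← two_rpow_add, add_sub_cancel]
  calc 2 ^ (r * k) * ν (Prod.mk t ⁻¹' dyadicLevel g k)
      ≤ ∫⁻ y in dyadicLevel (fun y => g (t, y)) k, g (t, y) ^ r ∂ν :=
        two_rpow_mul_measure_dyadicLevel_le hgt hr k
    _ ≤ sliceIntegral ν r g t := setLIntegral_le_lintegral _ _
    _ ≤ 2 ^ (l + 1 : ℝ) := (mem_dyadicInterval.1 ht).2.le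

lemma tsum_setLIntegral_dyadicLevel_inter [SFinite μ] [SFinite ν] (hg : Measurable g) (hr : 0 < r)
    (hfin : ∫⁻ t in T, sliceIntegral ν r g t ∂μ ≠ ∞) :
    ∑' k, ∫⁻ z in dyadicLevel g k ∩ T ×ˢ univ, g z ^ r ∂μ.prod ν =
      ∫⁻ t in T, sliceIntegral ν r g t ∂μ := by
  have hstrip : ∫⁻ z in T ×ˢ univ, g z ^ r ∂μ.prod ν = ∫⁻ t in T, sliceIntegral ν r g t ∂μ := by
    simpa only [Measure.restrict_univ, sliceIntegral] using
      setLIntegral_prod (t := univ) _ (hg.pow_const r).aemeasurable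
  simp_rw [← Measure.restrict_restrict (measurableSet_dyadicLevel hg _)]
  rw [← hstrip, tsum_setLIntegral_dyadicLevel_rpow hg hr (hstrip ▸ hfin)]

section

variable [SFinite μ] [SFinite ν] {l m : ℤ} (hg : Measurable g) (hT : MeasurableSet T)
  (hTl : T ⊆ dyadicLevel (sliceIntegral ν r g) l) (hTm : μ T ∈ dyadicInterval m)

include hg hT hTl hTm

lemma two_rpow_le_tsum_mul_setLIntegral_dyadicLevel (hr : 1 ≤ r) :
    (2 : ℝ≥0∞) ^ (l + m : ℝ) ≤ ∑' k : ℤ, 2 ^ ((r - 1) * (k + 1)) *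
      ∫⁻ z in dyadicLevel g k ∩ T ×ˢ univ, g z ∂μ.prod ν := by
  have hfin := ne_top_of_le_ne_top (two_rpow_ne_top _) (setLIntegral_le_two_rpow hT hTl hTm)
  refine (two_rpow_le_setLIntegral hT hTl hTm).trans ?_
  rw [← tsum_setLIntegral_dyadicLevel_inter hg (by linarith) hfin]
  refine ENNReal.tsum_le_tsum fun k => ?_
  rw [← Measure.restrict_restrict (measurableSet_dyadicLevel hg k)]
  exact setLIntegral_dyadicLevel_rpow_le hg hr k

lemma tsum_two_rpow_mul_measure_dyadicLevel_le (hr : 0 < r) :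
    ∑' k : ℤ, 2 ^ (r * k) * μ.prod ν (dyadicLevel g k ∩ T ×ˢ univ) ≤
      2 ^ (l + m + 2 : ℝ) := by
  have hle := setLIntegral_le_two_rpow hT hTl hTm
  refine le_trans ?_ hle
  rw [← tsum_setLIntegral_dyadicLevel_inter hg hr
    (ne_top_of_le_ne_top (two_rpow_ne_top _) hle)]
  refine ENNReal.tsum_le_tsum fun k => ?_
  rw [← Measure.restrict_restrict (measurableSet_dyadicLevel hg k),
    ← Measure.restrict_apply (measurableSet_dyadicLevel hg k)]
  exact two_rpow_mul_measure_dyadicLevel_le hg hr.le k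

end

section

variable [SFinite μ] [SFinite ν] {E : Set (α × Y)} (hE : MeasurableSet E)

include hE

lemma prod_apply_inter_prod_univ (T : Set α) :
    μ.prod ν (E ∩ T ×ˢ univ) = ∫⁻ t in T, ν (Prod.mk t ⁻¹' E) ∂μ := by
  rw [← Measure.restrict_apply hE, ← Measure.prod_restrict, Measure.restrict_univ,
    Measure.prod_apply hE]

lemma tsum_prod_apply_inter_dyadicLevel (hfin : μ.prod ν E ≠ ∞) :
    ∑' k, μ.prod ν (E ∩ dyadicLevel (fun t => ν (Prod.mk t ⁻¹' E)) k ×ˢ univ) = μ.prod ν E := by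
  rw [Measure.prod_apply hE] at hfin ⊢
  simp_rw [prod_apply_inter_prod_univ hE]
  simpa only [ENNReal.rpow_one] using tsum_setLIntegral_dyadicLevel_rpow
    (measurable_measure_prodMk_left hE) one_pos (by simpa only [ENNReal.rpow_one] using hfin)

lemma measure_dyadicLevel_slice_lt {m : ℤ} (hEm : μ.prod ν E ∈ dyadicInterval m) (k : ℤ) :
    μ (dyadicLevel (fun t => ν (Prod.mk t ⁻¹' E)) k) < 2 ^ ((m + 1 - k : ℤ) : ℝ) := by
  rw [← ENNReal.mul_lt_mul_iff_right (two_rpow_ne_zero k) (two_rpow_ne_top k), ← two_rpow_add]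
  calc 2 ^ (k : ℝ) * μ (dyadicLevel (fun t => ν (Prod.mk t ⁻¹' E)) k)
      ≤ ∫⁻ t in dyadicLevel (fun t => ν (Prod.mk t ⁻¹' E)) k, ν (Prod.mk t ⁻¹' E) ∂μ := by
        simpa only [one_mul, ENNReal.rpow_one] using two_rpow_mul_measure_dyadicLevel_le (μ := μ)
          (measurable_measure_prodMk_left hE) zero_le_one k
    _ ≤ μ.prod ν E := by
        rw [← prod_apply_inter_prod_univ hE]
        exact measure_mono inter_subset_left
    _ < 2 ^ (k + (m + 1 - k : ℤ) : ℝ) := by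
        push_cast
        rw [add_sub_cancel]
        exact (mem_dyadicInterval.1 hEm).2

end

end Strips

/-! ### Lorentz bounds for the integrals over lines -/

section LorentzBounds

variable {n : ℕ} {p P q r s : ℝ}

section Mixed

lemma mul_rpow_lineWeight_eq_of_mixed {l m : ℤ} (hn : n ≠ 0) (hr : 0 < r)
    (hPq : P * (1 / q) = (n + 1) / 2) (hPr : P * (1 - 1 / r) = (n + 1) / n) (k : ℤ) :
    ((2 : ℝ≥0∞) ^ (-l * (1 - 1 / r) - m * (1 - 1 / q) + (r - 1) * (k + 1))) ^ P *
        2 ^ ((m + 1 : ℝ) * (P - (n + 3) / 2) + (l + 1 - r * k) / n) =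
      2 ^ (P * r - (n + 3) / 2 + 1 / n - (l + m)) * 2 ^ (r * k) := by
  have hPr' : P * (r - 1) = r + r / n := by
    have : (n : ℝ) ≠ 0 := by exact_mod_cast hn
    calc P * (r - 1) = P * (1 - 1 / r) * r := by field_simp
      _ = r + r / n := by
        rw [hPr]
        field_simp
  rw [← ENNReal.rpow_mul, ← two_rpow_add, ← two_rpow_add]
  congr 1
  have hdiv : (n + 1) / n = 1 + 1 / (n : ℝ) := by
    rw [add_div, div_self (by exact_mod_cast hn)]
  rw [hdiv] at hPr
  linear_combination m * hPq - l * hPr + k * hPr'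

section levelBlock

variable {g : Pt n → ℝ≥0∞} {T : Set ℝ} {l m : ℤ} (hg : Measurable g) (hr : 1 < r)
  (hT : MeasurableSet T) (hTl : T ⊆ dyadicLevel (sliceIntegral volume r g) l)
  (hTm : volume T ∈ dyadicInterval m)

/-- The part over `T` of the `k`-th level set of `g`, as a block: `T` has measure about `2^m` and
the `r`-th powers of `g` have integral about `2^l` over each slice, so the slices of this part have
measure at most `2^(l+1-rk)`. -/
def levelBlock (k : ℤ) : LineBlock n :=
  .ofDyadic (a := (m + 1 : ℤ)) (b := l + 1 - r * k)
    ((measurableSet_dyadicLevel hg k).inter (hT.prod .univ)) hT inter_subset_right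
    (by exact mod_cast (mem_dyadicInterval.1 hTm).2)
    fun _ ht => (measure_mono (preimage_mono inter_subset_left)).trans
      (measure_slice_dyadicLevel_le hg (by linarith) (hTl ht) k)

lemma log_two_le_shapeDist_levelBlock (hn : n ≠ 0) {T' : Set ℝ} {l' m' k k' : ℤ}
    (hT' : MeasurableSet T') (hTl' : T' ⊆ dyadicLevel (sliceIntegral volume r g) l')
    (hTm' : volume T' ∈ dyadicInterval m') (h : m = m' → l = l' ∧ k ≠ k') :
    Real.log 2 ≤ (levelBlock hg hr hT hTl hTm k).shapeDist
      (levelBlock hg hr hT' hTl' hTm' k') := by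
  refine LineBlock.log_two_le_shapeDist hn rfl rfl rfl rfl fun hm => ?_
  obtain ⟨rfl, hk⟩ := h (add_right_cancel hm)
  have hk1 : (1 : ℝ) ≤ |(k' : ℝ) - k| := by
    exact_mod_cast Int.one_le_abs (sub_ne_zero.2 hk.symm)
  rw [_root_.sub_sub_sub_cancel_left, ← mul_sub, abs_mul, abs_of_pos (by linarith)]
  exact one_le_mul_of_one_le_of_one_le hr.le hk1

lemma two_rpow_le_tsum_mul_setLIntegral_levelBlock :
    (2 : ℝ≥0∞) ^ (1 / r * l + 1 / q * m) ≤
      ∑' k : ℤ, 2 ^ (-l * (1 - 1 / r) - m * (1 - 1 / q) + (r - 1) * (k + 1)) *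
        ∫⁻ z in (levelBlock hg hr hT hTl hTm k).lines, g z := by
  calc (2 : ℝ≥0∞) ^ (1 / r * l + 1 / q * m)
      = 2 ^ (-l * (1 - 1 / r) - m * (1 - 1 / q)) * 2 ^ (l + m : ℝ) := by
        rw [← two_rpow_add]
        ring_nf
    _ ≤ 2 ^ (-l * (1 - 1 / r) - m * (1 - 1 / q)) * ∑' k : ℤ, 2 ^ ((r - 1) * (k + 1)) *
          ∫⁻ z in (levelBlock hg hr hT hTl hTm k).lines, g z :=
        mul_le_mul_right (two_rpow_le_tsum_mul_setLIntegral_dyadicLevel (ν := volume) hg hT hTl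
          hTm hr.le) _
    _ = ∑' k : ℤ, 2 ^ (-l * (1 - 1 / r) - m * (1 - 1 / q) + (r - 1) * (k + 1)) *
          ∫⁻ z in (levelBlock hg hr hT hTl hTm k).lines, g z := by
        rw [← ENNReal.tsum_mul_left]
        simp only [two_rpow_add, mul_assoc]

lemma tsum_mul_lineWeight_mul_volume_levelBlock_le (hn : n ≠ 0)
    (hPq : P * (1 / q) = (n + 1) / 2) (hPr : P * (1 - 1 / r) = (n + 1) / n) :
    ∑' k : ℤ, ((2 : ℝ≥0∞) ^ (-l * (1 - 1 / r) - m * (1 - 1 / q) + (r - 1) * (k + 1))) ^ P *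
        (ENNReal.ofReal ((levelBlock hg hr hT hTl hTm k).lineWeight P) *
          volume (levelBlock hg hr hT hTl hTm k).lines) ≤
      2 ^ (P * r - (n + 3) / 2 + 1 / n + 2) := by
  have hr0 : 0 < r := by linarith
  simp only [LineBlock.ofReal_lineWeight (B := levelBlock hg hr hT hTl hTm _) rfl rfl, ← mul_assoc]
  calc ∑' k : ℤ, _ * volume (levelBlock hg hr hT hTl hTm k).lines
      = 2 ^ (P * r - (n + 3) / 2 + 1 / n - (l + m)) *
          ∑' k : ℤ, 2 ^ (r * k) * volume (levelBlock hg hr hT hTl hTm k).lines := by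
        simp only [← ENNReal.tsum_mul_left, ← mul_assoc]
        refine tsum_congr fun k => congrArg (· * _) ?_
        exact mod_cast mul_rpow_lineWeight_eq_of_mixed hn hr0 hPq hPr k
    _ ≤ 2 ^ (P * r - (n + 3) / 2 + 1 / n - (l + m)) * 2 ^ (l + m + 2 : ℝ) :=
        mul_le_mul_right (tsum_two_rpow_mul_measure_dyadicLevel_le (ν := volume) hg hT hTl
          hTm hr0) _
    _ = 2 ^ (P * r - (n + 3) / 2 + 1 / n + 2) := by
        rw [← two_rpow_add]
        ring_nf

end levelBlock

lemma exists_sum_rpow_le_of_sliceIntegral_levels (hn : 2 ≤ n) (hP : (n + 3) / 2 < P)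
    (hp : p.HolderConjugate P) (hr : 1 < r) (hPq : P * (1 / q) = (n + 1) / 2)
    (hPr : P * (1 - 1 / r) = (n + 1) / n) :
    ∃ C ≠ ∞, ∀ {h : Pt n → ℝ≥0∞}, Measurable h → ∀ (J : Finset ℤ) (σ : ℤ → ℤ) (T : ℤ → Set ℝ),
      (∀ m, MeasurableSet (T m)) →
      (∀ m, T m ⊆ dyadicLevel (sliceIntegral volume r (lineIntegral h)) (σ m)) →
      (∀ m ∈ J, volume (T m) ∈ dyadicInterval m) →
      ∑ m ∈ J, ((2 : ℝ≥0∞) ^ (1 / r * σ m + 1 / q * m)) ^ p ≤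
        (C * (∫⁻ z, h z ^ p) ^ (1 / p)) ^ p := by
  obtain ⟨C, hC, hblocks⟩ := LineBlock.exists_sum_rpow_le_of_blocks hn hP hp
    (two_rpow_ne_top (P * r - (n + 3) / 2 + 1 / n + 2))
  refine ⟨C, hC, fun {h} hh J σ T hT hTσ hTJ => ?_⟩
  have hg : Measurable (lineIntegral h) := measurable_lineIntegral hh
  have hsep : Pairwise fun i j : J × ℤ => Real.log 2 ≤
      (levelBlock hg hr (hT i.1) (hTσ i.1) (hTJ i.1 i.1.2) i.2).shapeDist
        (levelBlock hg hr (hT j.1) (hTσ j.1) (hTJ j.1 j.1.2) j.2) := by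
    rintro ⟨m, k⟩ ⟨m', k'⟩ hne
    refine log_two_le_shapeDist_levelBlock hg hr _ _ _ (by omega) _ _ _ fun hm => ?_
    obtain rfl : m = m' := Subtype.ext hm
    exact ⟨rfl, fun hk => hne (congrArg (m, ·) hk)⟩
  rw [← Finset.sum_coe_sort]
  exact hblocks hsep hh (fun _ => two_rpow_ne_top _)
    (c := fun i => 2 ^ (-σ i.1 * (1 - 1 / r) - i.1 * (1 - 1 / q) + (r - 1) * (i.2 + 1)))
    (fun m => two_rpow_le_tsum_mul_setLIntegral_levelBlock hg hr (hT m) (hTσ m) (hTJ m m.2))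
    fun m => tsum_mul_lineWeight_mul_volume_levelBlock_le hg hr (hT m) (hTσ m) (hTJ m m.2)
      (by omega) hPq hPr

end Mixed

section Diagonal

section sliceBlock

variable {g : Pt n → ℝ≥0∞} {E : Set (Pt n)} {l m : ℤ} (hE : MeasurableSet E)
  (hEm : volume E ∈ dyadicInterval m)

/-- The part of `E` whose slices have measure about `2^k`, as a block: if `E` has measure about
`2^m`, then these slices are over a set of measure at most `2^(m+1-k)`. -/
def sliceBlock (k : ℤ) : LineBlock n :=
  have hslice := measurable_measure_prodMk_left hE
  .ofDyadic (a := (m + 1 - k : ℤ)) (b := k + 1)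
    (hE.inter ((measurableSet_dyadicLevel hslice k).prod .univ))
    (measurableSet_dyadicLevel hslice k) inter_subset_right
    (measure_dyadicLevel_slice_lt (μ := volume) (ν := volume) hE hEm k)
    fun _ ht => (measure_mono (preimage_mono inter_subset_left)).trans
      (mem_dyadicInterval.1 ht).2.le

lemma tsum_volume_sliceBlock :
    ∑' k, volume (sliceBlock hE hEm k).lines = volume E :=
  tsum_prod_apply_inter_dyadicLevel (μ := volume) (ν := volume) hE
    ((mem_dyadicInterval.1 hEm).2.trans_le le_top).ne

lemma log_two_le_shapeDist_sliceBlock (hn : n ≠ 0) {E' : Set (Pt n)} {m' k k' : ℤ}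
    (hE' : MeasurableSet E') (hEm' : volume E' ∈ dyadicInterval m') (h : m = m' → k ≠ k') :
    Real.log 2 ≤ (sliceBlock hE hEm k).shapeDist (sliceBlock hE' hEm' k') := by
  refine LineBlock.log_two_le_shapeDist hn rfl rfl rfl rfl fun hmk => ?_
  have hk : k - k' ≠ 0 := by omega
  rw [add_sub_add_right_eq_sub]
  exact_mod_cast Int.one_le_abs hk

lemma two_rpow_le_tsum_mul_setLIntegral_sliceBlock (hEl : E ⊆ dyadicLevel g l) :
    (2 : ℝ≥0∞) ^ (1 * l + 1 / q * m) ≤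
      ∑' k : ℤ, 2 ^ (-m * (1 - 1 / q)) * ∫⁻ z in (sliceBlock hE hEm k).lines, g z := by
  rw [ENNReal.tsum_mul_left]
  calc (2 : ℝ≥0∞) ^ (1 * l + 1 / q * m)
      = 2 ^ (-m * (1 - 1 / q)) * (2 ^ (l : ℝ) * 2 ^ (m : ℝ)) := by
        rw [← two_rpow_add, ← two_rpow_add]
        ring_nf
    _ ≤ 2 ^ (-m * (1 - 1 / q)) *
          ∑' k : ℤ, 2 ^ (l : ℝ) * volume (sliceBlock hE hEm k).lines := by
        rw [ENNReal.tsum_mul_left, tsum_volume_sliceBlock hE hEm]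
        exact mul_le_mul_right (mul_le_mul_right (mem_dyadicInterval.1 hEm).1 _) _
    _ ≤ 2 ^ (-m * (1 - 1 / q)) * ∑' k : ℤ, ∫⁻ z in (sliceBlock hE hEm k).lines, g z := by
        refine mul_le_mul_right (ENNReal.tsum_le_tsum fun k => ?_) _
        rw [← setLIntegral_const]
        exact setLIntegral_mono' (sliceBlock hE hEm k).measurableSet_lines fun z hz =>
          (mem_dyadicInterval.1 (hEl hz.1)).1

lemma tsum_mul_lineWeight_mul_volume_sliceBlock_le (hP : P = (n + 3) / 2 + 1 / n)
    (hPq : P * (1 / q) = (n + 1) / 2) :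
    ∑' k : ℤ, ((2 : ℝ≥0∞) ^ (-m * (1 - 1 / q))) ^ P *
        (ENNReal.ofReal ((sliceBlock hE hEm k).lineWeight P) *
          volume (sliceBlock hE hEm k).lines) ≤
      2 ^ (2 / n + 1 : ℝ) := by
  have hweight (k : ℤ) : ENNReal.ofReal ((sliceBlock hE hEm k).lineWeight P) =
      2 ^ ((m + 2) / n : ℝ) := by
    rw [LineBlock.ofReal_lineWeight (B := sliceBlock hE hEm k) rfl rfl, hP]
    push_cast
    ring_nf
  simp only [hweight, ENNReal.tsum_mul_left, tsum_volume_sliceBlock hE hEm]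
  calc ((2 : ℝ≥0∞) ^ (-m * (1 - 1 / q))) ^ P * (2 ^ ((m + 2) / n : ℝ) * volume E)
      ≤ (2 ^ (-m * (1 - 1 / q))) ^ P * (2 ^ ((m + 2) / n : ℝ) * 2 ^ (m + 1 : ℝ)) :=
        mul_le_mul_right (mul_le_mul_right (mem_dyadicInterval.1 hEm).2.le _) _
    _ = 2 ^ (2 / n + 1 : ℝ) := by
        rw [← ENNReal.rpow_mul, ← two_rpow_add, ← two_rpow_add]
        congr 1
        linear_combination m * hPq - m * hP

end sliceBlock

lemma exists_sum_rpow_le_of_dyadicLevel (hn : 2 ≤ n) (hP : P = (n + 3) / 2 + 1 / n)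
    (hp : p.HolderConjugate P) (hPq : P * (1 / q) = (n + 1) / 2) :
    ∃ C ≠ ∞, ∀ {h : Pt n → ℝ≥0∞}, Measurable h →
      ∀ (J : Finset ℤ) (σ : ℤ → ℤ) (E : ℤ → Set (Pt n)), (∀ m, MeasurableSet (E m)) →
      (∀ m, E m ⊆ dyadicLevel (lineIntegral h) (σ m)) →
      (∀ m ∈ J, volume (E m) ∈ dyadicInterval m) →
      ∑ m ∈ J, ((2 : ℝ≥0∞) ^ (1 * σ m + 1 / q * m)) ^ p ≤
        (C * (∫⁻ z, h z ^ p) ^ (1 / p)) ^ p := by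
  have hPgt : (n + 3) / 2 < P := by
    rw [hP]
    exact lt_add_of_pos_right _ (by positivity)
  obtain ⟨C, hC, hblocks⟩ := LineBlock.exists_sum_rpow_le_of_blocks hn hPgt hp
    (two_rpow_ne_top (2 / n + 1))
  refine ⟨C, hC, fun {h} hh J σ E hE hEσ hEJ => ?_⟩
  have hsep : Pairwise fun i j : J × ℤ => Real.log 2 ≤
      (sliceBlock (hE i.1) (hEJ i.1 i.1.2) i.2).shapeDist
        (sliceBlock (hE j.1) (hEJ j.1 j.1.2) j.2) := fun i j hne =>
    log_two_le_shapeDist_sliceBlock _ _ (by omega) _ _ fun hm hk =>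
      hne (Prod.ext (Subtype.ext hm) hk)
  rw [← Finset.sum_coe_sort]
  exact hblocks hsep hh (fun _ => two_rpow_ne_top _) (c := fun i => 2 ^ (-i.1 * (1 - 1 / q)))
    (fun m => two_rpow_le_tsum_mul_setLIntegral_sliceBlock (hE m) (hEJ m m.2) (hEσ m))
    fun m => tsum_mul_lineWeight_mul_volume_sliceBlock_le (hE m) (hEJ m m.2) hP hPq

end Diagonal

end LorentzBounds

section MixedLorentzNorm

variable {Y : Type*} [MeasurableSpace Y] {ν : Measure Y} [SFinite ν] {g : ℝ × Y → ℝ≥0∞}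
  {q r s : ℝ}

lemma mixedNormG_indicator_dyadicLevel_le (hg : Measurable g) (hq : 0 < q) (hr : 0 < r) (l : ℤ) :
    mixedNormG ν q r (indicator (Prod.fst ⁻¹' dyadicLevel (sliceIntegral ν r g) l) g) ≤
      2 ^ (1 / r) *
        (2 ^ (1 / r * l) * volume (dyadicLevel (sliceIntegral ν r g) l) ^ (1 / q)) := by
  set T := dyadicLevel (sliceIntegral ν r g) l
  have hT : MeasurableSet T := measurableSet_dyadicLevel (measurable_sliceIntegral hg) l
  have hslice (t : ℝ) : (∫⁻ y, indicator (Prod.fst ⁻¹' T) g (t, y) ^ r ∂ν) ^ (q / r) ≤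
      T.indicator (fun _ => (2 ^ (l + 1 : ℝ)) ^ (q / r)) t := by
    by_cases ht : t ∈ T
    · have hind (y : Y) : indicator (Prod.fst ⁻¹' T) g (t, y) = g (t, y) := by
        simp [indicator, ht]
      simp only [hind, indicator_of_mem ht]
      exact ENNReal.rpow_le_rpow (mem_dyadicInterval.1 ht).2.le (by positivity)
    · simp [indicator, ht, hr, hq]
  calc mixedNormG ν q r (indicator (Prod.fst ⁻¹' T) g)
      ≤ (∫⁻ t, T.indicator (fun _ => (2 ^ (l + 1 : ℝ)) ^ (q / r)) t) ^ (1 / q) :=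
        ENNReal.rpow_le_rpow (lintegral_mono hslice) (by positivity)
    _ = 2 ^ (1 / r) * (2 ^ (1 / r * l) * volume T ^ (1 / q)) := by
        rw [lintegral_indicator hT, setLIntegral_const,
          ENNReal.mul_rpow_of_nonneg _ _ (by positivity), ← ENNReal.rpow_mul, ← ENNReal.rpow_mul,
          ← mul_assoc (2 ^ (1 / r)), ← two_rpow_add]
        congr 2
        field_simp
        ring

lemma mixedLorentzG_le_tsum (hg : Measurable g) (hq : 0 < q) (hr : 0 < r) (hs : 0 < s) :
    mixedLorentzG ν q s r g ≤ 2 ^ (1 / r) * (∑' l : ℤ, (2 ^ (1 / r * l) *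
      volume (dyadicLevel (sliceIntegral ν r g) l) ^ (1 / q)) ^ s) ^ (1 / s) := by
  calc mixedLorentzG ν q s r g
      ≤ (∑' l : ℤ, (2 ^ (1 / r) * (2 ^ (1 / r * l) *
          volume (dyadicLevel (sliceIntegral ν r g) l) ^ (1 / q))) ^ s) ^ (1 / s) :=
        ENNReal.rpow_le_rpow (ENNReal.tsum_le_tsum fun l => ENNReal.rpow_le_rpow
          (mixedNormG_indicator_dyadicLevel_le hg hq hr l) hs.le) (by positivity)
    _ = _ := by
        simp_rw [ENNReal.mul_rpow_of_nonneg (2 ^ (1 / r)) _ hs.le]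
        rw [ENNReal.tsum_mul_left, ENNReal.mul_rpow_of_nonneg _ _ (by positivity),
          ← ENNReal.rpow_mul, mul_one_div_cancel hs.ne', ENNReal.rpow_one]

end MixedLorentzNorm

section LorentzBounds

variable {n : ℕ} {p P q r s : ℝ}

theorem exists_mixedLorentzG_lineIntegral_le (hn : 2 ≤ n) (hP : (n + 3) / 2 < P)
    (hp : p.HolderConjugate P) (hq : 0 < q) (hr : 1 < r) (hPq : P * (1 / q) = (n + 1) / 2)
    (hPr : P * (1 - 1 / r) = (n + 1) / n) (hs : p ≤ s) :
    ∃ C ≠ ∞, ∀ {h : Pt n → ℝ≥0∞}, Measurable h →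
      mixedLorentzG volume q s r (lineIntegral h) ≤ C * (∫⁻ z, h z ^ p) ^ (1 / p) := by
  have hr0 : 0 < r := by linarith
  obtain ⟨C, hC, hlevels⟩ := exists_sum_rpow_le_of_sliceIntegral_levels hn hP hp hr hPq hPr
  obtain ⟨K, hK, hselect⟩ := exists_tsum_two_rpow_mul_measure_le (Ω := ℝ) hp.pos hs
    (one_div_pos.2 hr0) (one_div_pos.2 hq)
  refine ⟨2 ^ (1 / r) * (K * C), by finiteness, fun {h} hh => ?_⟩
  have hg : Measurable (lineIntegral h) := measurable_lineIntegral hh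
  rw [mul_assoc, mul_assoc]
  exact (mixedLorentzG_le_tsum hg hq hr0 (hp.pos.trans_le hs)).trans <| mul_le_mul_right
    (hselect volume (fun l => measurableSet_dyadicLevel (measurable_sliceIntegral hg) l)
      (hlevels hh)) _

theorem exists_lorentzNorm_lineIntegral_le (hn : 2 ≤ n) (hP : P = (n + 3) / 2 + 1 / n)
    (hp : p.HolderConjugate P) (hq : 0 < q) (hPq : P * (1 / q) = (n + 1) / 2) (hs : p ≤ s) :
    ∃ C ≠ ∞, ∀ {h : Pt n → ℝ≥0∞}, Measurable h →
      lorentzNorm volume q s (lineIntegral h) ≤ C * (∫⁻ z, h z ^ p) ^ (1 / p) := by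
  obtain ⟨C, hC, hlevels⟩ := exists_sum_rpow_le_of_dyadicLevel hn hP hp hPq
  obtain ⟨K, hK, hselect⟩ := exists_tsum_two_rpow_mul_measure_le (Ω := Pt n) hp.pos hs one_pos
    (one_div_pos.2 hq)
  refine ⟨K * C, by finiteness, fun {h} hh => ?_⟩
  rw [mul_assoc]
  have hnorm := hselect volume
    (fun l => measurableSet_dyadicLevel (measurable_lineIntegral hh) l) (hlevels hh)
  simp_rw [one_mul, ENNReal.rpow_intCast] at hnorm
  exact hnorm

end LorentzBounds

/-! ### The exponents of the family -/

section Exponents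

variable {n : ℕ} {θ : ℝ}

lemma holderConjugate_pExp (hθ : θ ∈ Ioo (0 : ℝ) 1) :
    (pExp (n + 1) θ).HolderConjugate ((n + 3) / (2 * θ)) := by
  have hP : 1 < (n + 3) / (2 * θ) := by
    rw [one_lt_div (by linarith [hθ.1])]
    linarith [hθ.2, n.cast_nonneg (α := ℝ)]
  refine Real.HolderConjugate.symm ?_
  rw [Real.holderConjugate_iff, pExp, inv_inv]
  refine ⟨hP, ?_⟩
  push_cast
  field_simp
  ring

lemma mul_one_div_qExp (hθ : θ ≠ 0) :
    (n + 3) / (2 * θ) * (1 / qExp (n + 1) θ) = (n + 1) / 2 := by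
  rw [qExp, one_div, inv_inv]
  push_cast
  field_simp
  ring

lemma one_div_rExp (hn : n ≠ 0) :
    1 / rExp (n + 1) θ = 1 - 2 * θ * (n + 1) / (n * (n + 3)) := by
  have hn' : (n : ℝ) ≠ 0 := by exact_mod_cast hn
  have hden : ((n + 1 : ℕ) : ℝ) ^ 2 + (n + 1 : ℕ) - 2 = n * (n + 3) := by
    push_cast
    ring
  rw [rExp, one_div, inv_inv, hden]
  push_cast
  field_simp
  ring

lemma mul_one_sub_one_div_rExp (hn : n ≠ 0) (hθ : θ ≠ 0) :
    (n + 3) / (2 * θ) * (1 - 1 / rExp (n + 1) θ) = (n + 1) / n := by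
  have hn' : (n : ℝ) ≠ 0 := by exact_mod_cast hn
  rw [one_div_rExp hn]
  field_simp
  ring

lemma one_lt_rExp (hn : 2 ≤ n) (hθ : θ ∈ Ioo (0 : ℝ) 1) : 1 < rExp (n + 1) θ := by
  have hn2 : (2 : ℝ) ≤ n := by exact_mod_cast hn
  obtain ⟨hθ0, hθ1⟩ := hθ
  have hpos : 0 < 2 * θ * (n + 1) / (n * (n + 3)) := by positivity
  have hlt : 2 * θ * (n + 1) / (n * (n + 3)) < 1 := by
    rw [div_lt_one (by positivity)]
    nlinarith
  rw [← one_div_one_div (rExp (n + 1) θ), one_div_rExp (by omega)]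
  exact (one_lt_div (by linarith)).2 (by linarith)

lemma div_two_mul_theta0 (hn : n ≠ 0) :
    (n + 3) / (2 * theta0 (n + 1)) = (n + 3) / 2 + 1 / n := by
  have hn' : (n : ℝ) ≠ 0 := by exact_mod_cast hn
  have hnum : ((n + 1 : ℕ) : ℝ) ^ 2 + (n + 1 : ℕ) - 2 = n * (n + 3) := by
    push_cast
    ring
  rw [theta0, hnum]
  push_cast
  field_simp
  ring

end Exponents

section Family

variable {d : ℕ} {θ s : ℝ}

lemma qExp_pos (hd : d ≠ 0) (hθ : 0 < θ) : 0 < qExp d θ := by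
  unfold qExp; positivity

lemma srcNorm_of_nonneg {f : Pt (d - 1) → ℝ} (hf : 0 ≤ f) :
    srcNorm d θ f = (∫⁻ z, ENNReal.ofReal (f z) ^ pExp d θ) ^ (1 / pExp d θ) := by
  simp only [srcNorm, LpN, abs_of_nonneg (hf _)]

lemma Xray_eq_lineIntegral {n : ℕ} (f : Pt n → ℝ) :
    Xray n f = lineIntegral fun z => ENNReal.ofReal (f z) := rfl

theorem exists_mixedLorentzG_Xray_le (hd : 3 ≤ d) (hθ : θ ∈ Ioo (0 : ℝ) 1) (hs : pExp d θ ≤ s) :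
    ∃ C ≠ ∞, ∀ f : Pt (d - 1) → ℝ, Measurable f → 0 ≤ f →
      mixedLorentzG volume (qExp d θ) s (rExp d θ) (Xray (d - 1) f) ≤ C * srcNorm d θ f := by
  obtain ⟨n, rfl⟩ : ∃ n, d = n + 1 := ⟨d - 1, by omega⟩
  have hθ0 := hθ.1
  have hP : (n + 3) / 2 < (n + 3) / (2 * θ) := by
    gcongr
    linarith [hθ.2]
  obtain ⟨C, hC, hbound⟩ := exists_mixedLorentzG_lineIntegral_le (by omega) hP
    (holderConjugate_pExp hθ) (qExp_pos (by omega) hθ0) (one_lt_rExp (by omega) hθ)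
    (mul_one_div_qExp hθ0.ne') (mul_one_sub_one_div_rExp (by omega) hθ0.ne') hs
  refine ⟨C, hC, fun f hf hf0 => ?_⟩
  rw [srcNorm_of_nonneg hf0, Xray_eq_lineIntegral]
  exact hbound hf.ennreal_ofReal

theorem exists_lorentzNorm_Xray_le (hd : 3 ≤ d) (hθ : θ ∈ Ioo (0 : ℝ) 1) (hθ₀ : θ = theta0 d)
    (hs : pExp d θ ≤ s) :
    ∃ C ≠ ∞, ∀ f : Pt (d - 1) → ℝ, Measurable f → 0 ≤ f →
      lorentzNorm volume (qExp d θ) s (Xray (d - 1) f) ≤ C * srcNorm d θ f := by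
  obtain ⟨n, rfl⟩ : ∃ n, d = n + 1 := ⟨d - 1, by omega⟩
  have hP : (n + 3) / (2 * θ) = (n + 3) / 2 + 1 / n := by
    rw [hθ₀, div_two_mul_theta0 (by omega)]
  obtain ⟨C, hC, hbound⟩ := exists_lorentzNorm_lineIntegral_le (by omega) hP
    (holderConjugate_pExp hθ) (qExp_pos (by omega) hθ.1) (mul_one_div_qExp hθ.1.ne') hs
  refine ⟨C, hC, fun f hf hf0 => ?_⟩
  rw [srcNorm_of_nonneg hf0, Xray_eq_lineIntegral]
  exact hbound hf.ennreal_ofReal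

end Family

end RestrictedXray

open RestrictedXray in
theorem lorentz_target_bound_general (d : ℕ) (hd : 3 ≤ d) (θ : ℝ) (hθ : θ ∈ Set.Ioo (0 : ℝ) 1)
    (s : ℝ) (hs : pExp d θ ≤ s) :
    ∃ C : ℝ, 0 < C ∧ ∀ f : Pt (d - 1) → ℝ, Measurable f → 0 ≤ f →
      mixedLorentzG volume (qExp d θ) s (rExp d θ) (Xray (d - 1) f) ≤
          ENNReal.ofReal C * srcNorm d θ f ∧
        (θ = theta0 d → lorentzNorm volume (qExp d θ) s (Xray (d - 1) f) ≤
          ENNReal.ofReal C * srcNorm d θ f) := by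
  obtain ⟨C, hC, hmixed⟩ := exists_mixedLorentzG_Xray_le hd hθ hs
  obtain ⟨C', hC', hdiag⟩ : ∃ C' ≠ ∞, ∀ f : Pt (d - 1) → ℝ, Measurable f → 0 ≤ f →
      θ = theta0 d → lorentzNorm volume (qExp d θ) s (Xray (d - 1) f) ≤ C' * srcNorm d θ f := by
    by_cases hθ₀ : θ = theta0 d
    · obtain ⟨C', hC', hdiag⟩ := exists_lorentzNorm_Xray_le hd hθ hθ₀ hs
      exact ⟨C', hC', fun f hf hf0 _ => hdiag f hf hf0⟩
    · exact ⟨0, zero_ne_top, fun _ _ _ h => absurd h hθ₀⟩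
  have hle : max C C' ≤ ENNReal.ofReal ((max C C').toReal + 1) := by
    rw [ENNReal.le_ofReal_iff_toReal_le (by finiteness) (by positivity)]
    linarith
  refine ⟨(max C C').toReal + 1, by positivity, fun f hf hf0 => ⟨?_, fun hθ₀ => ?_⟩⟩
  · exact (hmixed f hf hf0).trans (mul_le_mul_left ((le_max_left _ _).trans hle) _)
  · exact (hdiag f hf hf0 hθ₀).trans (mul_le_mul_left ((le_max_right _ _).trans hle) _)

/-- Lorentz space improvement in the target:
`X : L^{p_θ} → L^{q_θ,s}_t L^{r_θ}_y` for `p_θ < s < q_θ` (ordinary Lorentz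
space when `θ = θ₀`). -/
theorem lorentz_target_bound (d : ℕ) (hd : 3 ≤ d) (θ : ℝ)
    (hθ : θ ∈ Set.Ioo (0:ℝ) 1) (s : ℝ) (hs1 : pExp d θ < s) (hs2 : s < qExp d θ) :
    ∃ C : ℝ, 0 < C ∧
      ∀ f : Pt (d-1) → ℝ, Measurable f → 0 ≤ f →
        (θ ≠ theta0 d →
          mixedLorentzG volume (qExp d θ) s (rExp d θ) (Xray (d-1) f) ≤
            ENNReal.ofReal C * srcNorm d θ f) ∧
        (θ = theta0 d →
          lorentzNorm volume (qExp d θ) s (Xray (d-1) f) ≤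
            ENNReal.ofReal C * srcNorm d θ f) := by
  obtain ⟨C, hC, hbound⟩ := lorentz_target_bound_general d hd θ hθ s hs1.le
  exact ⟨C, hC, fun f hf hf0 => (hbound f hf hf0).imp_left fun h _ => h⟩

end
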